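/- arXiv:1807.06465 — 2 statements merged into one kernel-verified Lean document; each statement's English description precedes it below -/
import Mathlib

section
/- Let d ≥ 3 be a fixed integer. There exists 𝔟₀ > 0 such that for every 𝔟 ≥ 𝔟₀ there exist constants C, c, N > 0 with the following property: for all n ≥ N and all primes p with gcd(p,d) = 1 and p ≤ c·n^{1/4}, defining ℰ_𝔟 = {(n_0,…,n_{p−1}) ∈ ℤ_{≥0}^p : n_0+⋯+n_{p−1} = n and Σ_{j=0}^{p−1} (n_j/n − 1/p)² ≤ 𝔟·(ln n)/n}, one has | Σ_{(n_0,…,n_{p−1}) ∈ ℰ_𝔟} (n!·∏_{j=0}^{p−1}(d·n_j)!)/((∏_{j=0}^{p−1} n_j!)·(nd)!) · #{(a¹,…,aⁿ) ∈ (Z_{d,p})^n : Σ_{k=1}^n Φ(aᵏ) = (dn_0, dn_1, …, dn_{p−1})} − 1 | ≤ C·p²·(ln n)^{3/2}/√n. -/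
set_option linter.unusedSectionVars false
set_option linter.unusedSimpArgs false
set_option linter.unusedVariables false
open Finset

/-- The counting map `Φ` : the `j`-th coordinate of `Φ(a)` is `#{r : a r = j}`. -/
def Phi {d p : ℕ} (a : Fin d → ZMod p) (j : ZMod p) : ℕ :=
  (Finset.univ.filter (fun r : Fin d => a r = j)).card

namespace DL

lemma addChar_sum {A ι : Type*} [AddCommMonoid A] (ψ : AddChar A ℂ) (s : Finset ι) (f : ι → A) :
    ψ (∑ i ∈ s, f i) = ∏ i ∈ s, ψ (f i) := by
  classical
  induction s using Finset.induction_on with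
  | empty => simp
  | insert a s ha ih => rw [sum_insert ha, prod_insert ha, AddChar.map_add_eq_mul, ih]

/-- Number of occurrences of the letter `j` in the word `w`. -/
def cnt {ι κ : Type*} [Fintype ι] [DecidableEq κ] (w : ι → κ) (j : κ) : ℕ :=
  (Finset.univ.filter (fun i => w i = j)).card

section words
variable {ι κ : Type*} [Fintype ι] [DecidableEq ι] [Fintype κ] [DecidableEq κ]

lemma sum_cnt (w : ι → κ) : ∑ j, cnt w j = Fintype.card ι := by
  unfold cnt
  rw [← Finset.card_univ (α := ι)]
  exact (Finset.card_eq_sum_card_fiberwise (f := w) (t := univ) (by simp)).symm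

lemma cnt_le (w : ι → κ) (j : κ) : cnt w j ≤ Fintype.card ι := by
  unfold cnt; exact Finset.card_le_univ _

lemma prod_word {R : Type*} [CommMonoid R] (w : ι → κ) (f : κ → R) :
    ∏ i, f (w i) = ∏ j, f j ^ cnt w j := by
  unfold cnt
  rw [← Finset.prod_fiberwise_of_maps_to (s := univ) (t := univ) (g := w) (by simp)]
  refine Finset.prod_congr rfl fun j _ => ?_
  rw [Finset.prod_congr rfl (g := fun _ => f j)]
  · simp
  · intro x hx
    simp at hx
    rw [hx]

lemma sum_word {R : Type*} [CommSemiring R] (w : ι → κ) (f : κ → R) :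
    ∑ i, f (w i) = ∑ j, (cnt w j : R) * f j := by
  unfold cnt
  rw [← Finset.sum_fiberwise_of_maps_to (s := univ) (t := univ) (g := w) (by simp)]
  refine Finset.sum_congr rfl fun j _ => ?_
  rw [Finset.sum_congr rfl (g := fun _ => f j)]
  · simp
  · intro x hx
    simp at hx
    rw [hx]

lemma cnt_comp_perm (w : ι → κ) (σ : Equiv.Perm ι) : cnt (w ∘ σ) = cnt w := by
  funext j
  unfold cnt
  refine Finset.card_bij (fun i _ => σ i) ?_ ?_ ?_
  · intro a ha; simpa using ha
  · intro a _ b _ h; simpa using h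
  · intro b hb
    refine ⟨σ.symm b, ?_, by simp⟩
    simpa using hb

lemma exists_perm (w0 w : ι → κ) (h : cnt w = cnt w0) : ∃ σ : Equiv.Perm ι, w0 ∘ σ = w := by
  have hc : ∀ j, Fintype.card {i // w i = j} = Fintype.card {i // w0 i = j} := by
    intro j
    have := congrFun h j
    unfold cnt at this
    rw [Fintype.card_subtype, Fintype.card_subtype]
    exact this
  let e : ∀ j, {i // w i = j} ≃ {i // w0 i = j} := fun j => Fintype.equivOfCardEq (hc j)
  refine ⟨(Equiv.sigmaFiberEquiv w).symm.trans
    ((Equiv.sigmaCongrRight e).trans (Equiv.sigmaFiberEquiv w0)), ?_⟩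
  funext i
  simp only [Function.comp, Equiv.trans_apply, Equiv.sigmaFiberEquiv, Equiv.coe_fn_symm_mk,
    Equiv.sigmaCongrRight_apply, Sigma.map, Equiv.coe_fn_mk]
  exact (e (w i) ⟨i, rfl⟩).2

lemma perm_fiber (w0 w : ι → κ) (h : cnt w = cnt w0) :
    (univ.filter (fun σ : Equiv.Perm ι => w0 ∘ σ = w)).card = ∏ j, (cnt w0 j).factorial := by
  obtain ⟨σ1, h1⟩ := exists_perm w0 w h
  have := DomMulAct.stabilizer_card w0
  have h2 : ∏ j, (cnt w0 j).factorial
      = (univ.filter (fun σ : Equiv.Perm ι => w0 ∘ σ = w0)).card := by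
    rw [← Fintype.card_subtype, this]
    refine Finset.prod_congr rfl fun j _ => ?_
    rw [Fintype.card_subtype]; rfl
  rw [h2]
  refine Finset.card_bij (fun σ _ => σ * σ1⁻¹) ?_ ?_ ?_
  · intro σ hσ
    simp only [mem_filter, mem_univ, true_and] at hσ ⊢
    funext i
    have := congrFun (hσ.trans h1.symm) (σ1⁻¹ i)
    simpa using this
  · intro a _ b _ hab
    simpa using hab
  · intro b hb
    refine ⟨b * σ1, ?_, by simp⟩
    simp only [mem_filter, mem_univ, true_and] at hb ⊢
    rw [← h1]
    funext i
    have := congrFun hb (σ1 i)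
    simpa using this

lemma perm_sum (w0 : ι → κ) (g : (ι → κ) → ℂ) :
    ∑ σ : Equiv.Perm ι, g (w0 ∘ σ) =
      (∏ j, ((cnt w0 j).factorial : ℂ)) * ∑ w ∈ univ.filter (fun w => cnt w = cnt w0), g w := by
  rw [← Finset.sum_fiberwise_of_maps_to (s := univ)
    (t := univ.filter (fun w => cnt w = cnt w0)) (g := fun σ : Equiv.Perm ι => w0 ∘ σ)
    (by intro σ _; simp [cnt_comp_perm])]
  rw [Finset.mul_sum]
  refine Finset.sum_congr rfl fun w hw => ?_
  simp only [mem_filter, mem_univ, true_and] at hw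
  rw [Finset.sum_congr rfl (g := fun _ => g w)]
  · rw [Finset.sum_const, perm_fiber w0 w hw]
    simp
  · intro σ hσ
    simp at hσ
    rw [hσ]

lemma exists_word (ν : κ → ℕ) (h : ∑ j, ν j = Fintype.card ι) : ∃ w : ι → κ, cnt w = ν := by
  have hc : Fintype.card ι = Fintype.card (Σ j, Fin (ν j)) := by simp [h]
  let e := Fintype.equivOfCardEq hc
  refine ⟨fun i => (e i).1, ?_⟩
  funext j
  unfold cnt
  have : (univ.filter (fun i => (e i).1 = j)).card
      = (univ.filter (fun x : (Σ j, Fin (ν j)) => x.1 = j)).card := by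
    refine Finset.card_bij (fun i _ => e i) ?_ ?_ ?_
    · intro a ha; simpa using ha
    · intro a _ b _ h; simpa using h
    · intro b hb
      exact ⟨e.symm b, by simpa using hb, by simp⟩
  rw [this]
  have h3 : (univ.filter (fun x : (Σ j, Fin (ν j)) => x.1 = j))
      = (univ : Finset (Fin (ν j))).image (fun k => (⟨j, k⟩ : Σ j, Fin (ν j))) := by
    ext ⟨a, b⟩
    simp only [mem_filter, mem_univ, true_and, mem_image]
    constructor
    · rintro rfl; exact ⟨b, rfl⟩
    · rintro ⟨k, hk⟩; exact (congrArg Sigma.fst hk).symm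
  rw [h3, Finset.card_image_of_injective]
  · simp
  · intro a b hab
    simpa using hab

/-- Number of words of a given type. -/
lemma card_type (ν : κ → ℕ) (h : ∑ j, ν j = Fintype.card ι) :
    ((univ.filter (fun w : ι → κ => cnt w = ν)).card : ℂ) * ∏ j, ((ν j).factorial : ℂ)
      = (Fintype.card ι).factorial := by
  obtain ⟨w0, rfl⟩ := exists_word (ι := ι) ν h
  have := perm_sum w0 (fun _ => 1)
  simp only [sum_const, card_univ, Fintype.card_perm, nsmul_eq_mul, mul_one] at this
  rw [this, mul_comm]

/-- Extraction of coefficients by averaging over a finite torus. -/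
lemma coeff_extract (Q : ℕ) [NeZero Q] (hQ : Fintype.card ι < Q) (c : κ → ℕ)
    (hc : ∀ j, c j < Q) (a : ι → κ → ℂ) :
    (Q : ℂ) ^ Fintype.card κ * ∑ w ∈ univ.filter (fun w : ι → κ => cnt w = c), ∏ i, a i (w i)
      = ∑ θ : κ → ZMod Q, ZMod.stdAddChar (-∑ j, (c j : ZMod Q) * θ j) *
          ∏ i, ∑ j, a i j * ZMod.stdAddChar (θ j) := by
  have h1 : ∀ θ : κ → ZMod Q, ZMod.stdAddChar (-∑ j, (c j : ZMod Q) * θ j) *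
          ∏ i, ∑ j, a i j * ZMod.stdAddChar (θ j)
      = ∑ w : ι → κ, (∏ i, a i (w i)) *
          ∏ j, ZMod.stdAddChar (θ j * ((cnt w j : ZMod Q) - (c j : ZMod Q))) := by
    intro θ
    rw [Finset.prod_univ_sum, Fintype.piFinset_univ, Finset.mul_sum]
    refine Finset.sum_congr rfl fun w _ => ?_
    rw [Finset.prod_mul_distrib, mul_left_comm]
    congr 1
    rw [← addChar_sum, ← addChar_sum, ← AddChar.map_add_eq_mul,
      sum_word w θ]
    congr 1
    rw [← Finset.sum_neg_distrib, ← Finset.sum_add_distrib]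
    exact Finset.sum_congr rfl fun j _ => by ring
  rw [Finset.sum_congr rfl fun θ _ => h1 θ, Finset.sum_comm, Finset.sum_filter, Finset.mul_sum]
  refine Finset.sum_congr rfl fun w _ => ?_
  rw [← Finset.mul_sum]
  have h2 : ∑ θ : κ → ZMod Q, ∏ j, ZMod.stdAddChar (θ j * ((cnt w j : ZMod Q) - (c j : ZMod Q)))
      = ∏ j, ∑ t : ZMod Q, (ZMod.stdAddChar (t * ((cnt w j : ZMod Q) - (c j : ZMod Q))) : ℂ) := by
    rw [Finset.prod_univ_sum, Fintype.piFinset_univ]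
  rw [h2]
  have h3 : ∀ j, ∑ t : ZMod Q, (ZMod.stdAddChar (t * ((cnt w j : ZMod Q) - (c j : ZMod Q))) : ℂ)
      = if cnt w j = c j then (Q : ℂ) else 0 := by
    intro j
    rw [AddChar.sum_mulShift _ (ZMod.isPrimitive_stdAddChar Q)]
    have : ((cnt w j : ZMod Q) - (c j : ZMod Q) = 0) ↔ cnt w j = c j := by
      rw [sub_eq_zero, ZMod.natCast_eq_natCast_iff]
      constructor
      · intro h
        exact Nat.ModEq.eq_of_lt_of_lt h (lt_of_le_of_lt (cnt_le w j) hQ) (hc j)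
      · intro h; rw [h]
    simp [this]
  simp_rw [h3]
  by_cases hw : cnt w = c
  · subst hw
    simp [mul_comm]
  · rw [if_neg hw]
    obtain ⟨j, hj⟩ := Function.ne_iff.mp hw
    rw [Finset.prod_eq_zero (mem_univ j) (by simp [hj])]
    simp
end words
end DL


namespace DL

/-- The character average `E_σ ω^{⟨τ, A_σ v⟩}`. -/
noncomputable def EE (n d p : ℕ) [NeZero p] (τ v : Fin n → ZMod p) : ℂ :=
  ((n * d).factorial : ℂ)⁻¹ * ∑ σ : Equiv.Perm (Fin n × Fin d),
    ZMod.stdAddChar (∑ x, τ x.1 * v (σ x).1)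

lemma fact_upper (c : ℕ) (hc : 1 ≤ c) :
    (c.factorial : ℝ) ≤ Real.exp 1 * c * (c / Real.exp 1) ^ c := by
  induction c, hc using Nat.le_induction with
  | base => simp
  | succ c hc ih =>
    have hc0 : (0 : ℝ) < c := by exact_mod_cast hc
    have he := Real.exp_pos 1
    have key : Real.exp 1 * (c : ℝ) ^ (c + 1) ≤ ((c : ℝ) + 1) ^ (c + 1) := by
      have h1 : Real.exp 1 ≤ (((c : ℝ) + 1) / c) ^ (c + 1) := by
        have h2 : Real.exp (1 / ((c : ℝ) + 1)) ≤ ((c : ℝ) + 1) / c := by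
          rw [← Real.exp_log (show 0 < ((c : ℝ) + 1) / c by positivity)]
          apply Real.exp_le_exp.mpr
          have := Real.one_sub_inv_le_log_of_pos (show 0 < ((c : ℝ) + 1) / c by positivity)
          refine le_trans (le_of_eq ?_) this
          field_simp; ring
        calc Real.exp 1 = (Real.exp (1 / ((c : ℝ) + 1))) ^ (c + 1) := by
              rw [← Real.exp_nat_mul]; congr 1; push_cast; field_simp
          _ ≤ _ := by gcongr
      rw [div_pow, le_div_iff₀ (by positivity)] at h1
      exact h1
    rw [Nat.factorial_succ]
    push_cast
    calc ((c : ℝ) + 1) * c.factorial ≤ (c + 1) * (Real.exp 1 * c * (c / Real.exp 1) ^ c) := by gcongr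
      _ = (c + 1) * (Real.exp 1 * (c : ℝ) ^ (c + 1)) / Real.exp 1 ^ c := by
          rw [div_pow]; field_simp; ring
      _ ≤ (c + 1) * ((c : ℝ) + 1) ^ (c + 1) / Real.exp 1 ^ c := by gcongr
      _ = _ := by rw [div_pow]; field_simp; ring

lemma type_lower {κ : Type*} [Fintype κ] (N : ℕ) (hN : 1 ≤ N) (c : κ → ℕ) (h : ∑ j, c j = N) :
    ∏ j, ((c j).factorial : ℝ) ≤
      (Real.exp 1 * N) ^ Fintype.card κ * (N.factorial * ∏ j, ((c j : ℝ) / N) ^ c j) := by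
  have he := Real.exp_pos 1
  have hN0 : (1 : ℝ) ≤ N := by exact_mod_cast hN
  have h1 : ∀ j, ((c j).factorial : ℝ) ≤ Real.exp 1 * N * (c j / Real.exp 1) ^ c j := by
    intro j
    rcases Nat.eq_zero_or_pos (c j) with h0 | h0
    · rw [h0]
      simp
      have := Real.one_le_exp (show (0 : ℝ) ≤ 1 by norm_num)
      nlinarith
    · refine (fact_upper (c j) h0).trans ?_
      have : (c j : ℝ) ≤ N := by
        have : c j ≤ N := by rw [← h]; exact single_le_sum (fun _ _ => Nat.zero_le _) (mem_univ j)
        exact_mod_cast this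
      gcongr
  have h2 : (N : ℝ) ^ N / N.factorial ≤ Real.exp N :=
    Real.pow_div_factorial_le_exp (N : ℝ) (by positivity) N
  have h2' : (N : ℝ) ^ N ≤ N.factorial * Real.exp 1 ^ N := by
    rw [div_le_iff₀ (by positivity)] at h2
    rw [← Real.exp_nat_mul, mul_one, mul_comm]; exact h2
  calc ∏ j, ((c j).factorial : ℝ) ≤ ∏ j, (Real.exp 1 * N * (c j / Real.exp 1) ^ c j) :=
        prod_le_prod (fun _ _ => by positivity) fun j _ => h1 j
    _ = (Real.exp 1 * N) ^ Fintype.card κ * ((∏ j, (c j : ℝ) ^ c j) / Real.exp 1 ^ N) := by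
        rw [prod_mul_distrib]; simp only [prod_const, card_univ, div_pow, prod_div_distrib]
        rw [prod_pow_eq_pow_sum, h]
    _ ≤ _ := by
        gcongr
        simp only [div_pow, prod_div_distrib]
        rw [prod_pow_eq_pow_sum, h, div_le_iff₀ (by positivity), ← mul_div_assoc,
          div_mul_eq_mul_div, le_div_iff₀ (by positivity)]
        have : 0 ≤ ∏ j, (c j : ℝ) ^ c j := by positivity
        nlinarith

lemma cnt_fst {n d p : ℕ} (v : Fin n → ZMod p) (j : ZMod p) :
    cnt (fun x : Fin n × Fin d => v x.1) j = d * cnt v j := by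
  unfold cnt
  have : (univ.filter (fun x : Fin n × Fin d => v x.1 = j))
      = (univ.filter (fun i => v i = j)) ×ˢ (univ : Finset (Fin d)) := by
    ext x; simp
  rw [this, card_product]; simp [mul_comm]

lemma EE_eq (n d p : ℕ) [NeZero p] (τ v : Fin n → ZMod p) :
    EE n d p τ v = ((n * d).factorial : ℂ)⁻¹ * ((∏ j, ((d * cnt v j).factorial : ℂ)) *
      ∑ w ∈ univ.filter (fun w : Fin n × Fin d → ZMod p => cnt w = fun j => d * cnt v j),
        ZMod.stdAddChar (∑ x, τ x.1 * w x)) := by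
  unfold EE
  congr 1
  have := perm_sum (fun x : Fin n × Fin d => v x.1)
    (fun w => (ZMod.stdAddChar (∑ x, τ x.1 * w x) : ℂ))
  have h2 : cnt (fun x : Fin n × Fin d => v x.1) = fun j => d * cnt v j :=
    funext fun j => cnt_fst v j
  rw [h2] at this
  rw [← this]
  rfl

lemma far_transfer (n d p : ℕ) [NeZero p] (hn : 1 ≤ n) (hd : 1 ≤ d) (v : Fin n → ZMod p)
    (F : Finset (Fin n → ZMod p)) (B : ℝ)
    (hB : ∀ x : ZMod p → ℂ, (∀ j, ‖x j‖ = (cnt v j : ℝ) / n) →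
      ∑ τ ∈ F, ∏ k, ‖∑ j, (ZMod.stdAddChar (τ k * j) : ℂ) * x j‖ ^ d ≤ B) :
    ∑ τ ∈ F, ‖EE n d p τ v‖ ≤ (Real.exp 1 * (n * d : ℕ)) ^ p * B := by
  set N := n * d with hN
  have hN1 : 1 ≤ N := Nat.mul_pos hn hd
  set c : ZMod p → ℕ := fun j => d * cnt v j with hc
  have hcs : ∑ j, c j = N := by
    rw [hc, ← mul_sum, sum_cnt, hN]; simp [mul_comm]
  set G : (Fin n → ZMod p) → ℂ := fun τ =>
    ∑ w ∈ univ.filter (fun w : Fin n × Fin d → ZMod p => cnt w = c),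
        ZMod.stdAddChar (∑ x, τ x.1 * w x) with hG
  set q : ZMod p → ℝ := fun j => (cnt v j : ℝ) / n with hq
  have hq' : ∀ j, q j = (c j : ℝ) / N := by
    intro j
    simp only [hq, hc, hN]
    have h1 : (n : ℝ) ≠ 0 := by positivity
    have h2 : (d : ℝ) ≠ 0 := by positivity
    push_cast
    field_simp
  have key : (∏ j, q j ^ c j) * ∑ τ ∈ F, ‖G τ‖ ≤ B := by
    have hcard : Fintype.card (Fin n × Fin d) = N := by simp [hN]
    have hclt : ∀ j, c j < N + 1 := by
      intro j
      have : c j ≤ N := by rw [← hcs]; exact single_le_sum (fun _ _ => Nat.zero_le _) (mem_univ j)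
      omega
    have h1 : ∀ τ, ((N + 1 : ℕ) : ℝ) ^ p * ((∏ j, q j ^ c j) * ‖G τ‖) ≤
        ∑ θ : ZMod p → ZMod (N + 1),
          ∏ k, ‖∑ j, (ZMod.stdAddChar (τ k * j) : ℂ) * ((q j : ℂ) * ZMod.stdAddChar (θ j))‖ ^ d := by
      intro τ
      have h2 := coeff_extract (ι := Fin n × Fin d) (N + 1) (by rw [hcard]; omega) c hclt
        (fun x j => (ZMod.stdAddChar (τ x.1 * j) : ℂ) * (q j : ℂ))
      have h3 : ∀ w ∈ univ.filter (fun w : Fin n × Fin d → ZMod p => cnt w = c),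
          ∏ x, ((ZMod.stdAddChar (τ x.1 * w x) : ℂ) * (q (w x) : ℂ))
            = (ZMod.stdAddChar (∑ x, τ x.1 * w x) : ℂ) * ∏ j, (q j : ℂ) ^ c j := by
        intro w hw
        simp only [mem_filter, mem_univ, true_and] at hw
        rw [prod_mul_distrib, addChar_sum, prod_word w (fun j => (q j : ℂ)), hw]
      rw [sum_congr rfl h3, ← sum_mul, ZMod.card] at h2
      have h4 := congrArg norm h2
      rw [norm_mul, norm_mul] at h4
      have h5 : ‖∏ j, (q j : ℂ) ^ c j‖ = ∏ j, q j ^ c j := by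
        rw [norm_prod]
        refine prod_congr rfl fun j _ => ?_
        rw [norm_pow, Complex.norm_real, Real.norm_of_nonneg]
        simp only [hq]; positivity
      have h6 : ‖((N + 1 : ℕ) : ℂ) ^ p‖ = ((N + 1 : ℕ) : ℝ) ^ p := by
        rw [norm_pow, Complex.norm_natCast]
      rw [h5, h6] at h4
      rw [mul_comm (∏ j, q j ^ c j)]
      refine h4.le.trans ((norm_sum_le _ _).trans (sum_le_sum fun θ _ => ?_))
      rw [norm_mul, AddChar.norm_apply, one_mul, norm_prod, Fintype.prod_prod_type]
      refine le_of_eq (prod_congr rfl fun k _ => ?_)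
      simp only [prod_const, card_univ, Fintype.card_fin, mul_assoc]
    have h7 : ((N + 1 : ℕ) : ℝ) ^ p * ((∏ j, q j ^ c j) * ∑ τ ∈ F, ‖G τ‖) ≤
        ((N + 1 : ℕ) : ℝ) ^ p * B := by
      rw [mul_sum, mul_sum]
      refine (sum_le_sum fun τ _ => h1 τ).trans ?_
      rw [sum_comm]
      refine (sum_le_sum fun θ _ => hB (fun j => (q j : ℂ) * ZMod.stdAddChar (θ j)) ?_).trans ?_
      · intro j
        rw [norm_mul, AddChar.norm_apply, Complex.norm_real, Real.norm_of_nonneg, mul_one]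
        simp only [hq]; positivity
      · simp [ZMod.card]
    exact le_of_mul_le_mul_left h7 (by positivity)
  have hT := type_lower N hN1 c hcs
  rw [ZMod.card] at hT
  have hE : ∀ τ, ‖EE n d p τ v‖ = ((N.factorial : ℝ)⁻¹ * ∏ j, ((c j).factorial : ℝ)) * ‖G τ‖ := by
    intro τ
    rw [EE_eq, norm_mul, norm_mul, norm_inv, norm_prod, ← mul_assoc]
    simp only [Complex.norm_natCast]
    rfl
  rw [sum_congr rfl fun τ _ => hE τ, ← mul_sum]
  have hG0 : 0 ≤ ∑ τ ∈ F, ‖G τ‖ := sum_nonneg fun _ _ => norm_nonneg _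
  calc _ ≤ ((N.factorial : ℝ)⁻¹ * ((Real.exp 1 * N) ^ p *
            (N.factorial * ∏ j, ((c j : ℝ) / N) ^ c j))) * ∑ τ ∈ F, ‖G τ‖ := by gcongr
    _ = (Real.exp 1 * N) ^ p * ((∏ j, q j ^ c j) * ∑ τ ∈ F, ‖G τ‖) := by
        simp only [hq']
        have : (N.factorial : ℝ) ≠ 0 := by positivity
        field_simp
    _ ≤ _ := by gcongr
end DL


namespace DL

lemma markov_pow {κ : Type*} [Fintype κ] [DecidableEq κ] (n K : ℕ) (s : κ) (a : κ → ℝ)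
    (ha : ∀ t, 0 ≤ a t) (l : ℝ) (hl : 1 ≤ l) :
    l ^ K * ∑ τ ∈ univ.filter (fun τ : Fin n → κ => K < (univ.filter (fun k => τ k ≠ s)).card),
      ∏ k, a (τ k) ≤ (a s + l * ∑ t ∈ univ.erase s, a t) ^ n := by
  have h1 : a s + l * ∑ t ∈ univ.erase s, a t = ∑ t, (if t = s then 1 else l) * a t := by
    rw [← add_sum_erase univ _ (mem_univ s), mul_sum]
    congr 1
    · simp
    · refine sum_congr rfl fun t ht => ?_
      simp [(mem_erase.mp ht).1]
  rw [h1, Fintype.sum_pow, mul_sum]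
  have hnn : ∀ τ : Fin n → κ, 0 ≤ ∏ k, ((if τ k = s then 1 else l) * a (τ k)) := by
    intro τ
    refine prod_nonneg fun k _ => mul_nonneg ?_ (ha _)
    split_ifs <;> linarith
  refine le_trans (sum_le_sum (g := fun τ => ∏ k, ((if τ k = s then 1 else l) * a (τ k))) ?_)
    (sum_le_sum_of_subset_of_nonneg (filter_subset _ _) fun τ _ _ => hnn τ)
  intro τ hτ
  simp only [mem_filter, mem_univ, true_and] at hτ
  rw [prod_mul_distrib]
  have : ∏ k, (if τ k = s then (1 : ℝ) else l) = l ^ (univ.filter (fun k => τ k ≠ s)).card := by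
    rw [prod_ite]; simp
  rw [this]
  have h0 : 0 ≤ ∏ k, a (τ k) := prod_nonneg fun k _ => ha _
  gcongr

lemma count_near {κ : Type*} [Fintype κ] [DecidableEq κ] (n K : ℕ) (s : κ) (l : ℝ) (hl : 1 ≤ l) :
    ((univ.filter (fun τ : Fin n → κ => (univ.filter (fun k => τ k ≠ s)).card ≤ K)).card : ℝ)
      ≤ l ^ K * Real.exp (n * Fintype.card κ / l) := by
  have hl0 : 0 < l := by linarith
  have h1 : (∑ t : κ, (if t = s then (1 : ℝ) else l⁻¹)) ^ n ≤ Real.exp (n * Fintype.card κ / l) := by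
    have h2 : ∑ t : κ, (if t = s then (1 : ℝ) else l⁻¹) ≤ Real.exp (Fintype.card κ / l) := by
      refine le_trans ?_ (Real.add_one_le_exp _)
      rw [← add_sum_erase univ _ (mem_univ s), if_pos rfl, add_comm]
      gcongr
      refine (sum_le_sum (g := fun _ => l⁻¹) ?_).trans ?_
      · intro t ht; simp [(mem_erase.mp ht).1]
      · rw [sum_const, nsmul_eq_mul, div_eq_mul_inv]
        gcongr
        exact card_le_univ _
    have h0 : 0 ≤ ∑ t : κ, (if t = s then (1 : ℝ) else l⁻¹) :=
      sum_nonneg fun t _ => by split_ifs <;> positivity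
    calc _ ≤ (Real.exp (Fintype.card κ / l)) ^ n := by gcongr
      _ = _ := by rw [← Real.exp_nat_mul]; congr 1; ring
  rw [Fintype.sum_pow] at h1
  have h3 : ∀ τ : Fin n → κ, ∏ k, (if τ k = s then (1 : ℝ) else l⁻¹)
      = (l⁻¹) ^ (univ.filter (fun k => τ k ≠ s)).card := by
    intro τ
    rw [prod_ite]; simp
  simp_rw [h3] at h1
  refine le_trans ?_ (mul_le_mul_of_nonneg_left h1 (by positivity))
  rw [mul_sum, card_eq_sum_ones, Nat.cast_sum]
  refine le_trans (sum_le_sum ?_)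
    (sum_le_sum_of_subset_of_nonneg (filter_subset _ _) fun τ _ _ => by positivity)
  intro τ hτ
  simp only [mem_filter, mem_univ, true_and] at hτ
  rw [inv_pow, Nat.cast_one, ← div_eq_mul_inv, one_le_div (by positivity)]
  gcongr

/-- Bound on the far part of the sum, for a fixed vector of Fourier coefficients. -/
lemma far_real {κ : Type*} [Fintype κ] [DecidableEq κ] [Nonempty κ] (n d K : ℕ) (hd : 3 ≤ d)
    (z : κ → ℝ) (h0 : ∀ t, 0 ≤ z t) (h1 : ∀ t, z t ≤ 1) (η : ℝ) (hη : 0 ≤ η)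
    (hz : ∑ t, z t ^ 2 ≤ 1 + η) (l u₀ : ℝ) (hl : 1 ≤ l) (hu : 9 * l ^ 2 * u₀ ≤ 1) (hu0 : 0 ≤ u₀) :
    ∑ τ ∈ univ.filter (fun τ : Fin n → κ => ∀ s, K < (univ.filter (fun k => τ k ≠ s)).card),
      ∏ k, z (τ k) ^ d ≤ (l ^ K)⁻¹ * Real.exp (n * (3 * l * (η * √η))) +
        Real.exp (n * (-u₀ / 2 + η)) := by
  obtain ⟨s, -, hs⟩ := exists_max_image univ z univ_nonempty
  set F := univ.filter (fun τ : Fin n → κ => ∀ s, K < (univ.filter (fun k => τ k ≠ s)).card)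
  have hl0 : 0 < l := by linarith
  have hpow : ∑ τ ∈ F, ∏ k, z (τ k) ^ d ≤ ∑ τ ∈ F, ∏ k, z (τ k) ^ 3 := by
    refine sum_le_sum fun τ _ => prod_le_prod (fun k _ => pow_nonneg (h0 _) _) fun k _ => ?_
    exact pow_le_pow_of_le_one (h0 _) (h1 _) hd
  refine hpow.trans ?_
  by_cases hM : 1 - u₀ ≤ z s ^ 2
  · have hmk := markov_pow n K s (fun t => z t ^ 3) (fun t => pow_nonneg (h0 t) 3) l hl
    have hsub : ∑ τ ∈ F, ∏ k, z (τ k) ^ 3 ≤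
        ∑ τ ∈ univ.filter (fun τ : Fin n → κ => K < (univ.filter (fun k => τ k ≠ s)).card),
      ∏ k, z (τ k) ^ 3 := by
      refine sum_le_sum_of_subset_of_nonneg ?_ fun τ _ _ =>
        prod_nonneg fun k _ => pow_nonneg (h0 _) _
      intro τ hτ
      simp only [F, mem_filter, mem_univ, true_and] at hτ ⊢
      exact hτ s
    have hA : z s ^ 3 + l * ∑ t ∈ univ.erase s, z t ^ 3 ≤ 1 + 3 * l * (η * √η) := by
      set u := 1 - z s ^ 2 with hu'
      have huu : u ≤ u₀ := by linarith
      have hupos : 0 ≤ u := by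
        have : z s ^ 2 ≤ 1 := pow_le_one₀ (h0 s) (h1 s)
        linarith
      have hzs : z s ^ 3 ≤ 1 - u := by
        have : z s ^ 3 ≤ z s ^ 2 := pow_le_pow_of_le_one (h0 _) (h1 _) (by norm_num)
        linarith
      have hrest : ∑ t ∈ univ.erase s, z t ^ 2 ≤ u + η := by
        rw [← add_sum_erase univ _ (mem_univ s)] at hz
        linarith
      have hz1 : ∀ t ∈ univ.erase s, z t ≤ √(u + η) := by
        intro t ht
        apply Real.le_sqrt_of_sq_le
        refine le_trans ?_ hrest
        exact single_le_sum (f := fun t => z t ^ 2) (fun _ _ => sq_nonneg _) ht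
      have hZ : ∑ t ∈ univ.erase s, z t ^ 3 ≤ √(u + η) * (u + η) := by
        calc ∑ t ∈ univ.erase s, z t ^ 3 ≤ ∑ t ∈ univ.erase s, √(u + η) * z t ^ 2 := by
              refine sum_le_sum fun t ht => ?_
              rw [show z t ^ 3 = z t * z t ^ 2 by ring]
              exact mul_le_mul_of_nonneg_right (hz1 t ht) (sq_nonneg _)
          _ = √(u + η) * ∑ t ∈ univ.erase s, z t ^ 2 := by rw [mul_sum]
          _ ≤ _ := by gcongr
      have h2 : ∀ y : ℝ, 0 ≤ y → √(2 * y) * (2 * y) ≤ 3 * (y * √y) := by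
        intro y hy
        rw [Real.sqrt_mul (by norm_num)]
        have : √2 ≤ 3 / 2 := by
          rw [Real.sqrt_le_left (by norm_num)]; norm_num
        have h3 := Real.sqrt_nonneg y
        have h4 : 0 ≤ y * √y := by positivity
        nlinarith
      rcases le_total u η with hc | hc
      · have : ∑ t ∈ univ.erase s, z t ^ 3 ≤ 3 * (η * √η) := by
          refine hZ.trans (le_trans ?_ (h2 η hη))
          have : u + η ≤ 2 * η := by linarith
          gcongr
        nlinarith
      · have h5 : ∑ t ∈ univ.erase s, z t ^ 3 ≤ 3 * (u * √u) := by
          refine hZ.trans (le_trans ?_ (h2 u hupos))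
          have : u + η ≤ 2 * u := by linarith
          gcongr
        have h6 : 3 * l * √u ≤ 1 := by
          have : (3 * l * √u) ^ 2 ≤ 1 := by
            rw [mul_pow, Real.sq_sqrt hupos]
            nlinarith [sq_nonneg l]
          have h7 : 0 ≤ 3 * l * √u := by positivity
          nlinarith
        have h8 : l * ∑ t ∈ univ.erase s, z t ^ 3 ≤ u := by
          calc _ ≤ l * (3 * (u * √u)) := by gcongr
            _ = (3 * l * √u) * u := by ring
            _ ≤ 1 * u := by gcongr
            _ = u := one_mul u
        have : 0 ≤ 3 * l * (η * √η) := by positivity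
        linarith
    have hA0 : 0 ≤ z s ^ 3 + l * ∑ t ∈ univ.erase s, z t ^ 3 :=
      add_nonneg (pow_nonneg (h0 _) _) (mul_nonneg hl0.le (sum_nonneg fun t _ => pow_nonneg (h0 _) _))
    have hB : (z s ^ 3 + l * ∑ t ∈ univ.erase s, z t ^ 3) ^ n ≤
        Real.exp (n * (3 * l * (η * √η))) := by
      rw [Real.exp_nat_mul]
      gcongr
      refine hA.trans ?_
      rw [add_comm]; exact Real.add_one_le_exp _
    have hC := hmk.trans hB
    have : ∑ τ ∈ F, ∏ k, z (τ k) ^ 3 ≤ (l ^ K)⁻¹ * Real.exp (n * (3 * l * (η * √η))) := by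
      rw [← div_eq_inv_mul, le_div_iff₀ (by positivity), mul_comm]
      refine le_trans ?_ hC
      gcongr
    have := Real.exp_pos (n * (-u₀ / 2 + η))
    linarith
  · push Not at hM
    have hall : ∑ τ ∈ F, ∏ k, z (τ k) ^ 3 ≤ (∑ t, z t ^ 3) ^ n := by
      rw [Fintype.sum_pow]
      exact sum_le_sum_of_subset_of_nonneg (subset_univ _) fun τ _ _ =>
        prod_nonneg fun k _ => pow_nonneg (h0 _) _
    have hzs : z s ≤ Real.exp (-u₀ / 2) := by
      have h3 : z s ^ 2 ≤ Real.exp (-u₀ / 2) ^ 2 := by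
        rw [← Real.exp_nat_mul]
        have := Real.add_one_le_exp (-u₀)
        have h4 : ((2 : ℕ) : ℝ) * (-u₀ / 2) = -u₀ := by push_cast; ring
        rw [h4]; linarith
      exact (pow_le_pow_iff_left₀ (h0 s) (Real.exp_pos _).le (by norm_num)).mp h3
    have hS : ∑ t, z t ^ 3 ≤ Real.exp (-u₀ / 2 + η) := by
      calc ∑ t, z t ^ 3 ≤ ∑ t, z s * z t ^ 2 := by
              refine sum_le_sum fun t ht => ?_
              rw [show z t ^ 3 = z t * z t ^ 2 by ring]
              exact mul_le_mul_of_nonneg_right (hs t ht) (sq_nonneg _)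
        _ = z s * ∑ t, z t ^ 2 := by rw [mul_sum]
        _ ≤ Real.exp (-u₀ / 2) * (1 + η) := by
            gcongr
        _ ≤ Real.exp (-u₀ / 2) * Real.exp η := by
            gcongr
            rw [add_comm]; exact Real.add_one_le_exp _
        _ = _ := by rw [← Real.exp_add]
    have hS0 : 0 ≤ ∑ t, z t ^ 3 := sum_nonneg fun t _ => pow_nonneg (h0 _) _
    have h5 : (∑ t, z t ^ 3) ^ n ≤ Real.exp (n * (-u₀ / 2 + η)) := by
      rw [Real.exp_nat_mul]; gcongr
    have : 0 ≤ (l ^ K)⁻¹ * Real.exp (n * (3 * l * (η * √η))) := by positivity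
    linarith

lemma parseval (p : ℕ) [NeZero p] (x : ZMod p → ℂ) :
    ∑ t : ZMod p, ‖∑ j, (ZMod.stdAddChar (t * j) : ℂ) * x j‖ ^ 2 = p * ∑ j, ‖x j‖ ^ 2 := by
  have h : ((∑ t : ZMod p, ‖∑ j, (ZMod.stdAddChar (t * j) : ℂ) * x j‖ ^ 2 : ℝ) : ℂ)
      = ((p * ∑ j, ‖x j‖ ^ 2 : ℝ) : ℂ) := by
    push_cast
    simp_rw [← Complex.mul_conj', map_sum, map_mul, sum_mul_sum]
    rw [sum_comm]
    rw [mul_sum]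
    refine sum_congr rfl fun j _ => ?_
    rw [sum_comm]
    have h1 : ∀ i : ZMod p, ∑ t : ZMod p, (ZMod.stdAddChar (t * j) : ℂ) * x j *
        ((starRingEnd ℂ) (ZMod.stdAddChar (t * i)) * (starRingEnd ℂ) (x i))
        = if j = i then (p : ℂ) * (x j * (starRingEnd ℂ) (x i)) else 0 := by
      intro i
      have h2 : ∀ t : ZMod p, (ZMod.stdAddChar (t * j) : ℂ) * x j *
        ((starRingEnd ℂ) (ZMod.stdAddChar (t * i)) * (starRingEnd ℂ) (x i))
        = ZMod.stdAddChar (t * (j - i)) * (x j * (starRingEnd ℂ) (x i)) := by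
        intro t
        rw [← AddChar.map_neg_eq_conj, mul_sub, sub_eq_add_neg, AddChar.map_add_eq_mul]
        ring
      rw [sum_congr rfl fun t _ => h2 t, ← sum_mul,
        AddChar.sum_mulShift _ (ZMod.isPrimitive_stdAddChar p)]
      simp only [sub_eq_zero, ZMod.card]
      split_ifs <;> simp
    rw [sum_congr rfl fun i _ => h1 i]
    simp
  exact_mod_cast h

/-- The far part, for one vector `v`. -/
lemma far_bound (n d p K : ℕ) [Fact p.Prime] (hn : 1 ≤ n) (hd : 3 ≤ d) (v : Fin n → ZMod p)
    (η : ℝ) (hη : 0 ≤ η) (hv : p * ∑ j, ((cnt v j : ℝ) / n - 1 / p) ^ 2 ≤ η)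
    (l u₀ : ℝ) (hl : 1 ≤ l) (hu : 9 * l ^ 2 * u₀ ≤ 1) (hu0 : 0 ≤ u₀) :
    ∑ τ ∈ univ.filter (fun τ : Fin n → ZMod p => ∀ s, K < (univ.filter (fun k => τ k ≠ s)).card),
      ‖EE n d p τ v‖ ≤ (Real.exp 1 * (n * d : ℕ)) ^ p *
        ((l ^ K)⁻¹ * Real.exp (n * (3 * l * (η * √η))) + Real.exp (n * (-u₀ / 2 + η))) := by
  have hp : (0 : ℝ) < p := by exact_mod_cast (Fact.out : p.Prime).pos
  have hn0 : (0 : ℝ) < n := by exact_mod_cast hn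
  have hsum : ∑ j, (cnt v j : ℝ) / n = 1 := by
    rw [← sum_div, ← Nat.cast_sum, sum_cnt]
    simp [hn0.ne']
  apply far_transfer n d p hn (by omega)
  intro x hx
  refine far_real n d K hd (fun t => ‖∑ j, (ZMod.stdAddChar (t * j) : ℂ) * x j‖)
    (fun t => norm_nonneg _) ?_ η hη ?_ l u₀ hl hu hu0
  · intro t
    refine (norm_sum_le _ _).trans ?_
    simp only [norm_mul, AddChar.norm_apply, one_mul, hx]
    exact hsum.le
  · rw [parseval]
    simp only [hx]
    have h1 : ∑ j : ZMod p, ((cnt v j : ℝ) / n - 1 / p) ^ 2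
        = ∑ j, ((cnt v j : ℝ) / n) ^ 2 - 1 / p := by
      have : ∀ j : ZMod p, ((cnt v j : ℝ) / n - 1 / p) ^ 2
        = ((cnt v j : ℝ) / n) ^ 2 - 2 / p * ((cnt v j : ℝ) / n) + 1 / p ^ 2 := by
        intro j; ring
      simp_rw [this]
      rw [sum_add_distrib, sum_sub_distrib, ← mul_sum, hsum]
      simp [ZMod.card]
      field_simp
      ring
    rw [h1, mul_sub, mul_one_div_cancel hp.ne'] at hv
    linarith
end DL


namespace DL

lemma phi_lower (x : ℝ) (hx : 0 ≤ x) :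
    (√x - 1) ^ 2 ≤ x * Real.log x - x + 1 := by
  rcases hx.eq_or_lt with rfl | hx
  · simp
  have hs : 0 < √x := Real.sqrt_pos.mpr hx
  have h1 := Real.one_sub_inv_le_log_of_pos hs
  rw [Real.log_sqrt hx.le] at h1
  have h2 : √x ^ 2 = x := Real.sq_sqrt hx.le
  have h3 : x * (1 - (√x)⁻¹) = x - √x := by
    nth_rw 1 [← h2]; field_simp; rw [mul_sub, mul_one, ← sq, h2]
  nlinarith

lemma phi_lower1 (x : ℝ) (hx : 0 ≤ x) (h : (x - 1) ^ 2 ≤ 1) :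
    (x - 1) ^ 2 / 6 ≤ x * Real.log x - x + 1 := by
  refine le_trans ?_ (phi_lower x hx)
  have h2 : √x ^ 2 = x := Real.sq_sqrt hx
  have h0 := Real.sqrt_nonneg x
  have hx2 : x ≤ 2 := by nlinarith
  have h3 : (x - 1) ^ 2 = (√x - 1) ^ 2 * (√x + 1) ^ 2 := by
    nth_rw 1 [← h2]; ring
  have h4 : (√x + 1) ^ 2 ≤ 6 := by nlinarith
  rw [h3]
  nlinarith [sq_nonneg (√x - 1)]

lemma phi_lower2 (x : ℝ) (hx : 0 ≤ x) (h : 1 ≤ (x - 1) ^ 2) :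
    1 / 6 ≤ x * Real.log x - x + 1 := by
  refine le_trans ?_ (phi_lower x hx)
  have h2 : √x ^ 2 = x := Real.sq_sqrt hx
  have h0 := Real.sqrt_nonneg x
  by_cases hx0 : x < 1
  · have : x = 0 := by nlinarith
    subst this; norm_num
  · have hx2 : 2 ≤ x := by nlinarith
    have : (1.41 : ℝ) ≤ √x := by
      apply Real.le_sqrt_of_sq_le; norm_num; linarith
    nlinarith

lemma phi_nonneg (x : ℝ) (hx : 0 ≤ x) : 0 ≤ x * Real.log x - x + 1 :=
  le_trans (sq_nonneg _) (phi_lower x hx)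

lemma type_upper (n p : ℕ) [Fact p.Prime] (hn : 1 ≤ n) (v : Fin n → ZMod p)
    (η : ℝ) (hη1 : η ≤ 1 / p)
    (hv : η < p * ∑ j, ((cnt v j : ℝ) / n - 1 / p) ^ 2) :
    ((univ.filter (fun w : Fin n → ZMod p => cnt w = cnt v)).card : ℝ)
      ≤ (p : ℝ) ^ n * Real.exp (-(n * η / 6)) := by
  have hp : (0 : ℝ) < p := by exact_mod_cast (Fact.out : p.Prime).pos
  have hn0 : (0 : ℝ) < n := by exact_mod_cast hn
  have hsumN : ∑ j, (cnt v j : ℝ) = n := by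
    rw [← Nat.cast_sum, sum_cnt]; simp
  set q : ZMod p → ℝ := fun j => (cnt v j : ℝ) / n with hq
  have hsum : ∑ j, q j = 1 := by
    simp only [hq]
    rw [← sum_div, hsumN, div_self hn0.ne']
  set x : ZMod p → ℝ := fun j => p * q j with hx
  have hx0 : ∀ j, 0 ≤ x j := fun j => by simp only [hx, hq]; positivity
  set c := ((univ.filter (fun w : Fin n → ZMod p => cnt w = cnt v)).card : ℝ) with hcdef
  have h1 : c * ∏ j, q j ^ cnt v j ≤ 1 := by
    have h2 : (∑ j, q j) ^ n = 1 := by rw [hsum, one_pow]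
    rw [Fintype.sum_pow] at h2
    rw [← h2, hcdef, card_eq_sum_ones, Nat.cast_sum, sum_mul]
    refine le_trans (le_of_eq (sum_congr rfl ?_)) (sum_le_sum_of_subset_of_nonneg
      (filter_subset _ _) fun w _ _ => prod_nonneg fun k _ => by simp only [hq]; positivity)
    intro w hw
    simp only [mem_filter, mem_univ, true_and] at hw
    rw [prod_word w q, hw]; simp
  have h3 : ∏ j, x j ^ cnt v j = (p : ℝ) ^ n * ∏ j, q j ^ cnt v j := by
    simp only [hx, mul_pow]
    rw [prod_mul_distrib, prod_pow_eq_pow_sum, sum_cnt]; simp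
  have h4 : ∏ j, x j ^ cnt v j = Real.exp (∑ j, (cnt v j : ℝ) * Real.log (x j)) := by
    rw [Real.exp_sum]
    refine prod_congr rfl fun j _ => ?_
    rcases Nat.eq_zero_or_pos (cnt v j) with h0 | h0
    · simp [h0]
    · have : 0 < x j := by simp only [hx, hq]; positivity
      rw [Real.exp_nat_mul, Real.exp_log this]
  have h5 : ∑ j, (cnt v j : ℝ) * Real.log (x j) = n / p * ∑ j, (x j * Real.log (x j) - x j + 1) := by
    have h6 : ∑ j, x j = p := by simp only [hx]; rw [← mul_sum, hsum, mul_one]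
    rw [sum_add_distrib, sum_sub_distrib, h6]
    simp only [sum_const, card_univ, ZMod.card, nsmul_eq_mul, mul_one, sub_add_cancel]
    rw [mul_sum]
    refine sum_congr rfl fun j _ => ?_
    simp only [hx, hq]
    field_simp
  have h7 : n * η / 6 ≤ n / p * ∑ j, (x j * Real.log (x j) - x j + 1) := by
    have hkey : p * η / 6 ≤ ∑ j, (x j * Real.log (x j) - x j + 1) := by
      by_cases hall : ∀ j, (x j - 1) ^ 2 ≤ 1
      · have h8 : ∑ j, (x j - 1) ^ 2 / 6 ≤ ∑ j, (x j * Real.log (x j) - x j + 1) :=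
          sum_le_sum fun j _ => phi_lower1 _ (hx0 j) (hall j)
        refine le_trans ?_ h8
        rw [← sum_div]
        have h9 : ∑ j, (x j - 1) ^ 2 = (p : ℝ) * ((p : ℝ) * ∑ j : ZMod p, ((cnt v j : ℝ) / n - 1 / p) ^ 2) := by
          rw [mul_sum, mul_sum]
          refine sum_congr rfl fun j _ => ?_
          simp only [hx, hq]
          field_simp
        rw [h9]
        gcongr
      · push Not at hall
        obtain ⟨j, hj⟩ := hall
        have h8 : 1 / 6 ≤ ∑ j, (x j * Real.log (x j) - x j + 1) :=
          (phi_lower2 _ (hx0 j) hj.le).trans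
            (single_le_sum (f := fun j => x j * Real.log (x j) - x j + 1)
              (fun j _ => phi_nonneg _ (hx0 j)) (mem_univ j))
        refine le_trans ?_ h8
        have : p * η ≤ 1 := by
          rw [le_div_iff₀ hp] at hη1; linarith
        linarith
    calc n * η / 6 = n / p * (p * η / 6) := by field_simp
      _ ≤ _ := by gcongr
  have hc0 : 0 ≤ c := by positivity
  have h10 : c * Real.exp (n * η / 6) ≤ (p : ℝ) ^ n := by
    calc c * Real.exp (n * η / 6) ≤ c * ∏ j, x j ^ cnt v j := by
          rw [h4, h5]; gcongr
      _ = (p : ℝ) ^ n * (c * ∏ j, q j ^ cnt v j) := by rw [h3]; ring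
      _ ≤ (p : ℝ) ^ n * 1 := by gcongr
      _ = _ := mul_one _
  rw [Real.exp_neg, ← div_eq_mul_inv, le_div_iff₀ (Real.exp_pos _)]
  exact h10

lemma bad_bound (n p : ℕ) [Fact p.Prime] (hn : 1 ≤ n) (η : ℝ) (hη1 : η ≤ 1 / p) :
    ((univ.filter (fun v : Fin n → ZMod p =>
      η < p * ∑ j, ((cnt v j : ℝ) / n - 1 / p) ^ 2)).card : ℝ)
      ≤ ((n : ℝ) + 1) ^ p * ((p : ℝ) ^ n * Real.exp (-(n * η / 6))) := by
  set S := univ.filter (fun v : Fin n → ZMod p => η < p * ∑ j, ((cnt v j : ℝ) / n - 1 / p) ^ 2)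
  rw [card_eq_sum_card_fiberwise (f := fun v => cnt v) (s := S)
    (t := Fintype.piFinset (fun _ : ZMod p => range (n + 1)))]
  · push_cast
    refine (sum_le_sum (g := fun _ => ((p : ℝ) ^ n * Real.exp (-(n * η / 6)))) ?_).trans ?_
    · intro ν _
      rcases (S.filter (fun v => cnt v = ν)).eq_empty_or_nonempty with he | ⟨v, hv⟩
      · rw [he]; simp; positivity
      · rw [mem_filter] at hv
        obtain ⟨hv, rfl⟩ := hv
        simp only [S, mem_filter, mem_univ, true_and] at hv
        refine le_trans ?_ (type_upper n p hn v η hη1 hv)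
        exact_mod_cast card_le_card (filter_subset_filter _ (subset_univ _))
    · rw [sum_const, nsmul_eq_mul, Fintype.card_piFinset]
      simp [ZMod.card]
  · intro v _
    rw [mem_coe, Fintype.mem_piFinset]
    intro j
    have := cnt_le v j
    simp at this ⊢
    omega
end DL


namespace DL

/-- Number of permutations mapping `P` into `W`. -/
def pc {α : Type*} [Fintype α] [DecidableEq α] (P W : Finset α) : ℕ :=
  (univ.filter (fun σ : Equiv.Perm α => ∀ a ∈ P, σ a ∈ W)).card

lemma pc_swap {α : Type*} [Fintype α] [DecidableEq α] (P W : Finset α) (a b : α)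
    (ha : a ∉ P) (hb : b ∉ P) : pc (insert a P) W = pc (insert b P) W := by
  unfold pc
  refine Finset.card_bij (fun σ _ => σ * Equiv.swap a b) ?_ ?_ ?_
  · intro σ hσ
    simp only [mem_filter, mem_univ, true_and, mem_insert] at hσ ⊢
    rintro x (rfl | hx)
    · simpa using hσ a (Or.inl rfl)
    · have h1 : x ≠ a := fun h => ha (h ▸ hx)
      have h2 : x ≠ b := fun h => hb (h ▸ hx)
      simpa [Equiv.swap_apply_of_ne_of_ne h1 h2] using hσ x (Or.inr hx)
  · intro x _ y _ h
    simpa using h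
  · intro σ hσ
    refine ⟨σ * Equiv.swap a b, ?_, by simp [mul_assoc]⟩
    simp only [mem_filter, mem_univ, true_and, mem_insert] at hσ ⊢
    rintro x (rfl | hx)
    · simpa using hσ b (Or.inl rfl)
    · have h1 : x ≠ a := fun h => ha (h ▸ hx)
      have h2 : x ≠ b := fun h => hb (h ▸ hx)
      simpa [Equiv.swap_apply_of_ne_of_ne h1 h2] using hσ x (Or.inr hx)

lemma pc_step {α : Type*} [Fintype α] [DecidableEq α] (P W : Finset α) (a : α) (ha : a ∉ P) :
    (Fintype.card α - P.card) * pc (insert a P) W = (W.card - P.card) * pc P W := by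
  have h1 : ∑ b ∈ Pᶜ, pc (insert b P) W = (Fintype.card α - P.card) * pc (insert a P) W := by
    rw [sum_congr rfl (g := fun _ => pc (insert a P) W), sum_const, card_compl, smul_eq_mul]
    intro b hb
    exact pc_swap P W b a (by simpa using hb) ha
  rw [← h1]
  unfold pc
  have h2 : ∀ b, (univ.filter (fun σ : Equiv.Perm α => ∀ x ∈ insert b P, σ x ∈ W)).card
      = ∑ σ ∈ univ.filter (fun σ : Equiv.Perm α => ∀ x ∈ P, σ x ∈ W), if σ b ∈ W then 1 else 0 := by
    intro b
    rw [← card_filter, filter_filter]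
    congr 1
    ext σ
    simp only [mem_filter, mem_univ, true_and, mem_insert, forall_eq_or_imp]
    tauto
  simp_rw [h2]
  rw [sum_comm, mul_comm, ← smul_eq_mul, ← sum_const]
  refine sum_congr rfl fun σ hσ => ?_
  simp only [mem_filter, mem_univ, true_and] at hσ
  rw [← card_filter]
  have h3 : (Pᶜ.filter (fun b => σ b ∈ W)).card = (W \ P.image σ).card := by
    refine Finset.card_bij (fun b _ => σ b) ?_ ?_ ?_
    · intro b hb
      simp only [mem_filter, mem_compl, mem_sdiff, mem_image, not_exists, not_and] at hb ⊢
      refine ⟨hb.2, fun x hx h => hb.1 ?_⟩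
      rw [σ.injective h] at hx; exact hx
    · intro x _ y _ h; exact σ.injective h
    · intro w hw
      simp only [mem_sdiff, mem_image, not_exists, not_and] at hw
      refine ⟨σ.symm w, ?_, by simp⟩
      simp only [mem_filter, mem_compl, Equiv.apply_symm_apply]
      exact ⟨fun h => hw.2 _ h (by simp), hw.1⟩
  rw [h3, card_sdiff_of_subset, card_image_of_injective _ σ.injective]
  intro y hy
  obtain ⟨x, hx, rfl⟩ := mem_image.mp hy
  exact hσ x hx

lemma pc_bound {α : Type*} [Fintype α] [DecidableEq α] (P W : Finset α) :
    pc P W * Fintype.card α ^ P.card ≤ W.card ^ P.card * (Fintype.card α).factorial := by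
  induction P using Finset.induction_on with
  | empty =>
    unfold pc
    simp [Fintype.card_perm]
  | insert a P ha ih =>
    rw [card_insert_of_notMem ha]
    have hs := pc_step P W a ha
    have hP : P.card < Fintype.card α := by
      have := card_le_univ (insert a P)
      rw [card_insert_of_notMem ha] at this
      omega
    have hW : W.card ≤ Fintype.card α := card_le_univ W
    set N := Fintype.card α
    have h1 : N * pc (insert a P) W ≤ W.card * pc P W := by
      have h2 : N * (W.card - P.card) ≤ W.card * (N - P.card) := by
        rcases le_total W.card P.card with h | h
        · simp [Nat.sub_eq_zero_of_le h]
        · zify [h, hP.le]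
          have : (W.card : ℤ) ≤ N := by exact_mod_cast hW
          nlinarith [Nat.cast_nonneg (α := ℤ) P.card]
      have h3 : (N - P.card) * (N * pc (insert a P) W) ≤ (N - P.card) * (W.card * pc P W) := by
        calc (N - P.card) * (N * pc (insert a P) W) = N * ((N - P.card) * pc (insert a P) W) := by ring
          _ = (N * (W.card - P.card)) * pc P W := by rw [hs]; ring
          _ ≤ (W.card * (N - P.card)) * pc P W := Nat.mul_le_mul_right _ h2
          _ = _ := by ring
      exact Nat.le_of_mul_le_mul_left h3 (by omega)
    calc pc (insert a P) W * N ^ (P.card + 1) = (N * pc (insert a P) W) * N ^ P.card := by ring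
      _ ≤ (W.card * pc P W) * N ^ P.card := Nat.mul_le_mul_right _ h1
      _ = W.card * (pc P W * N ^ P.card) := by ring
      _ ≤ W.card * (W.card ^ P.card * N.factorial) := Nat.mul_le_mul_left _ ih
      _ = _ := by ring

/-- The dual event. -/
def dualSet (n d p : ℕ) (τ : Fin n → ZMod p) : Finset (Equiv.Perm (Fin n × Fin d)) :=
  univ.filter (fun σ => ∀ i, ∑ x ∈ univ.filter (fun x : Fin n × Fin d => (σ x).1 = i), τ x.1 = 0)

/-- The probability of the dual event. -/
noncomputable def QQ (n d p : ℕ) (τ : Fin n → ZMod p) : ℝ :=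
  ((dualSet n d p τ).card : ℝ) / (n * d).factorial

lemma sum_EE (n d p : ℕ) [NeZero p] (τ : Fin n → ZMod p) :
    ∑ v, EE n d p τ v = (p : ℂ) ^ n * (QQ n d p τ : ℂ) := by
  unfold EE QQ
  rw [← mul_sum, sum_comm]
  have h1 : ∀ σ : Equiv.Perm (Fin n × Fin d),
      ∑ v : Fin n → ZMod p, (ZMod.stdAddChar (∑ x, τ x.1 * v (σ x).1) : ℂ)
      = if σ ∈ dualSet n d p τ then (p : ℂ) ^ n else 0 := by
    intro σ
    have h2 : ∀ v : Fin n → ZMod p, (ZMod.stdAddChar (∑ x, τ x.1 * v (σ x).1) : ℂ)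
        = ∏ i, (ZMod.stdAddChar (v i *
            ∑ x ∈ univ.filter (fun x : Fin n × Fin d => (σ x).1 = i), τ x.1) : ℂ) := by
      intro v
      rw [← addChar_sum]
      congr 1
      rw [← sum_fiberwise_of_maps_to (s := univ) (t := univ)
        (g := fun x : Fin n × Fin d => (σ x).1) (by simp)]
      refine sum_congr rfl fun i _ => ?_
      rw [mul_sum]
      refine sum_congr rfl fun x hx => ?_
      simp only [mem_filter, mem_univ, true_and] at hx
      rw [hx, mul_comm]
    simp_rw [h2]
    have h3 := Finset.prod_univ_sum (ι := Fin n) (fun _ => (univ : Finset (ZMod p)))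
      (fun i t => (ZMod.stdAddChar (t *
            ∑ x ∈ univ.filter (fun x : Fin n × Fin d => (σ x).1 = i), τ x.1) : ℂ))
    rw [Fintype.piFinset_univ] at h3
    rw [← h3]
    simp_rw [AddChar.sum_mulShift _ (ZMod.isPrimitive_stdAddChar p)]
    by_cases hσ : σ ∈ dualSet n d p τ
    · rw [if_pos hσ]
      unfold dualSet at hσ
      simp only [mem_filter, mem_univ, true_and] at hσ
      simp [hσ]
    · rw [if_neg hσ]
      unfold dualSet at hσ
      simp only [mem_filter, mem_univ, true_and, not_forall] at hσ
      obtain ⟨i, hi⟩ := hσ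
      exact prod_eq_zero (mem_univ i) (by rw [if_neg hi]; simp)
  rw [sum_congr rfl fun σ _ => h1 σ]
  rw [sum_ite_mem, univ_inter, sum_const, nsmul_eq_mul]
  push_cast
  field_simp

lemma QQ_zero (n d p : ℕ) : QQ n d p 0 = 1 := by
  unfold QQ dualSet
  simp [Fintype.card_perm]
  exact Nat.factorial_ne_zero _

lemma QQ_nonneg (n d p : ℕ) (τ : Fin n → ZMod p) : 0 ≤ QQ n d p τ := by
  unfold QQ; positivity

lemma card_fst {n d : ℕ} (S : Finset (Fin n)) :
    (univ.filter (fun x : Fin n × Fin d => x.1 ∈ S)).card = S.card * d := by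
  have : (univ.filter (fun x : Fin n × Fin d => x.1 ∈ S)) = S ×ˢ (univ : Finset (Fin d)) := by
    ext x; simp
  rw [this, card_product]; simp

lemma QQ_near (n d p : ℕ) [Fact p.Prime] (hpd : Nat.gcd p d = 1) (τ : Fin n → ZMod p)
    (s : ZMod p) (hs : s ≠ 0) (h : (univ.filter (fun k => τ k ≠ s)).card * d < n) :
    QQ n d p τ = 0 := by
  unfold QQ
  have : dualSet n d p τ = ∅ := by
    rw [eq_empty_iff_forall_notMem]
    intro σ hσ
    unfold dualSet at hσ
    simp only [mem_filter, mem_univ, true_and] at hσ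
    set A := univ.filter (fun x : Fin n × Fin d => x.1 ∈ univ.filter (fun k => τ k ≠ s))
    have hA : (A.image (fun x => (σ x).1)).card < n := by
      refine lt_of_le_of_lt card_image_le ?_
      rw [card_fst]; exact h
    obtain ⟨i, hi⟩ : ∃ i, i ∉ A.image (fun x => (σ x).1) := by
      by_contra hcon
      push Not at hcon
      have : A.image (fun x => (σ x).1) = univ := eq_univ_of_forall hcon
      rw [this] at hA
      simp at hA
    have h1 := hσ i
    have h2 : ∑ x ∈ univ.filter (fun x : Fin n × Fin d => (σ x).1 = i), τ x.1
        = ∑ x ∈ univ.filter (fun x : Fin n × Fin d => (σ x).1 = i), s := by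
      refine sum_congr rfl fun x hx => ?_
      simp only [mem_filter, mem_univ, true_and] at hx
      by_contra hne
      apply hi
      rw [mem_image]
      exact ⟨x, by simp [A, hne], hx⟩
    have h3 : (univ.filter (fun x : Fin n × Fin d => (σ x).1 = i)).card = d := by
      have h4 : (univ.filter (fun x : Fin n × Fin d => (σ x).1 = i)).card
          = (univ.filter (fun x : Fin n × Fin d => x.1 ∈ ({i} : Finset (Fin n)))).card := by
        refine Finset.card_bij (fun x _ => σ x) ?_ ?_ ?_
        · intro a ha; simpa using ha
        · intro a _ b _ h; simpa using h
        · intro b hb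
          exact ⟨σ.symm b, by simpa using hb, by simp⟩
      rw [h4, card_fst]; simp
    rw [h2, sum_const, h3, nsmul_eq_mul] at h1
    rcases mul_eq_zero.mp h1 with h5 | h5
    · rw [ZMod.natCast_eq_zero_iff] at h5
      have := Nat.gcd_eq_left h5
      rw [hpd] at this
      exact (Fact.out : p.Prime).one_lt.ne this
    · exact hs h5
  rw [this]; simp

lemma QQ_supp (n d p : ℕ) (hd : 1 ≤ d) (τ : Fin n → ZMod p) (k : ℕ)
    (hk : (univ.filter (fun i => τ i ≠ 0)).card = k) (hkd : k * d ≤ n) (hn : 1 ≤ n) :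
    QQ n d p τ ≤ (n.choose (k * d / 2)) * (((k * d / 2 : ℕ) : ℝ) / n) ^ (k * d) := by
  set h := k * d / 2 with hh
  set P := univ.filter (fun x : Fin n × Fin d => x.1 ∈ univ.filter (fun i => τ i ≠ 0)) with hP
  have hPc : P.card = k * d := by rw [hP, card_fst, hk]
  have hsub : dualSet n d p τ ⊆ (powersetCard h (univ : Finset (Fin n))).biUnion
      (fun H => univ.filter (fun σ : Equiv.Perm (Fin n × Fin d) =>
        ∀ a ∈ P, σ a ∈ univ.filter (fun x : Fin n × Fin d => x.1 ∈ H))) := by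
    intro σ hσ
    unfold dualSet at hσ
    simp only [mem_filter, mem_univ, true_and] at hσ
    set I := P.image (fun x => (σ x).1) with hI
    have hI2 : 2 * I.card ≤ P.card := by
      rw [card_eq_sum_card_image (fun x => (σ x).1) P, mul_comm, ← smul_eq_mul, ← sum_const]
      refine sum_le_sum fun i hi => ?_
      by_contra hlt
      push Not at hlt
      obtain ⟨x, hx, hxi⟩ := mem_image.mp hi
      have h1 : (P.filter (fun x => (σ x).1 = i)).card = 1 := by
        have : 0 < (P.filter (fun x => (σ x).1 = i)).card :=
          card_pos.mpr ⟨x, by simp [hx]; exact hxi⟩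
        omega
      obtain ⟨y, hy⟩ := card_eq_one.mp h1
      have hyP : y ∈ P.filter (fun x => (σ x).1 = i) := by rw [hy]; simp
      have h2 := hσ i
      have h3 : ∑ x ∈ univ.filter (fun x : Fin n × Fin d => (σ x).1 = i), τ x.1
          = ∑ x ∈ P.filter (fun x => (σ x).1 = i), τ x.1 := by
        symm
        refine sum_subset (filter_subset_filter _ (subset_univ _)) ?_
        intro x hx hx'
        simp only [mem_filter, mem_univ, true_and] at hx
        by_contra hne
        exact hx' (by simp [hP, hne, hx])
      rw [h3, hy, sum_singleton] at h2
      simp [hP] at hyP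
      exact hyP.1 h2
    have hIh : I.card ≤ h := by omega
    have hhn : h ≤ n := by omega
    obtain ⟨H, hIH, -, hH⟩ := exists_subsuperset_card_eq (subset_univ I) hIh (by simpa using hhn)
    rw [mem_biUnion]
    refine ⟨H, by simp [mem_powersetCard, hH], ?_⟩
    simp only [mem_filter, mem_univ, true_and]
    intro a ha
    exact hIH (mem_image.mpr ⟨a, by simpa using ha, rfl⟩)
  have hn0 : (0 : ℝ) < n := by exact_mod_cast hn
  have hd0 : (0 : ℝ) < d := by exact_mod_cast hd
  have h1 : ((dualSet n d p τ).card : ℝ) ≤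
      ∑ H ∈ powersetCard h (univ : Finset (Fin n)), ((h : ℝ) / n) ^ (k * d) * (n * d).factorial := by
    have h0 := (card_le_card hsub).trans card_biUnion_le
    have h0' := (Nat.cast_le (α := ℝ)).mpr h0
    refine h0'.trans ?_
    push_cast
    refine sum_le_sum fun H hH => ?_
    rw [mem_powersetCard] at hH
    have h2 := pc_bound P (univ.filter (fun x : Fin n × Fin d => x.1 ∈ H))
    rw [hPc, card_fst, hH.2] at h2
    simp only [Fintype.card_prod, Fintype.card_fin] at h2
    have h3 : (pc P (univ.filter (fun x : Fin n × Fin d => x.1 ∈ H)) : ℝ) * ((n : ℝ) * d) ^ (k * d)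
        ≤ ((h : ℝ) * d) ^ (k * d) * (n * d).factorial := by exact_mod_cast h2
    have h4 : ((h : ℝ) / n) ^ (k * d) = ((h : ℝ) * d) ^ (k * d) / ((n : ℝ) * d) ^ (k * d) := by
      rw [← div_pow]; congr 1; field_simp
    rw [h4, div_mul_eq_mul_div, le_div_iff₀ (by positivity)]
    exact h3
  unfold QQ
  rw [div_le_iff₀ (by positivity)]
  refine h1.trans (le_of_eq ?_)
  rw [sum_const, card_powersetCard, nsmul_eq_mul]
  simp
  ring

lemma QQ_supp' (n d p : ℕ) (hd : 3 ≤ d) (τ : Fin n → ZMod p) (k : ℕ)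
    (hk : (univ.filter (fun i => τ i ≠ 0)).card = k) (hkd : k * d ≤ n) (hn : 1 ≤ n) :
    QQ n d p τ ≤ (Real.exp d * √((k * d : ℝ) / n) ^ 3) ^ k := by
  refine (QQ_supp n d p (by omega) τ k hk hkd hn).trans ?_
  have hn0 : (0 : ℝ) < n := by exact_mod_cast hn
  set L := k * d with hL
  set h := L / 2 with hh
  have hhL : h ≤ L := by omega
  have hy0 : (0 : ℝ) ≤ (k * d : ℝ) / n := by positivity
  have hkd' : (k * d : ℝ) ≤ n := by exact_mod_cast hkd
  have hy1 : (k * d : ℝ) / n ≤ 1 := by rw [div_le_one hn0]; exact hkd'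
  set y := (k * d : ℝ) / n with hy
  have h1 : ((n.choose h : ℕ) : ℝ) ≤ (n : ℝ) ^ h / h.factorial := Nat.choose_le_pow_div h n
  have h2 : (h : ℝ) ^ h / h.factorial ≤ Real.exp h :=
    Real.pow_div_factorial_le_exp (h : ℝ) (by positivity) h
  have h3 : (h : ℝ) / n ≤ y := by
    rw [hy]; gcongr
    have : h ≤ k * d := by omega
    exact_mod_cast this
  calc (n.choose h : ℝ) * ((h : ℝ) / n) ^ L
      ≤ ((n : ℝ) ^ h / h.factorial) * ((h : ℝ) / n) ^ L := by gcongr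
    _ = ((h : ℝ) ^ h / h.factorial) * ((h : ℝ) / n) ^ (L - h) := by
        conv_lhs => rw [← Nat.add_sub_cancel' hhL, pow_add]
        rw [div_pow (h : ℝ) n h]
        field_simp
    _ ≤ Real.exp h * y ^ (L - h) := by gcongr
    _ ≤ Real.exp d ^ k * √y ^ (3 * k) := by
        gcongr
        · rw [← Real.exp_nat_mul]
          apply Real.exp_le_exp.mpr
          have : h ≤ k * d := by omega
          exact_mod_cast this
        · have : y ^ (L - h) = √y ^ (2 * (L - h)) := by rw [pow_mul, Real.sq_sqrt hy0]
          rw [this]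
          apply pow_le_pow_of_le_one (Real.sqrt_nonneg _)
          · rw [Real.sqrt_le_left (by norm_num)]; simpa using hy1
          · have : 3 * k ≤ L := by rw [hL, mul_comm k d]; exact Nat.mul_le_mul_right _ hd
            omega
    _ = _ := by rw [mul_pow, ← pow_mul]
end DL


namespace DL

/-- Count of matrices with zero row sums and prescribed counting vector. -/
def AA (n d p : ℕ) [NeZero p] (ν : ZMod p → ℕ) : ℕ :=
  (Finset.univ.filter (fun a : Fin n → Fin d → ZMod p =>
                  (∀ k, ∑ i, a k i = 0) ∧
                  (∀ j : ZMod p, (∑ k, Phi (a k) j) = d * ν j))).card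

lemma AA_eq (n d p : ℕ) [NeZero p] (ν : ZMod p → ℕ) :
    AA n d p ν = (univ.filter (fun w : Fin n × Fin d → ZMod p =>
      (∀ k, ∑ i, w (k, i) = 0) ∧ cnt w = fun j => d * ν j)).card := by
  unfold AA
  refine card_bij (fun a _ => fun x => a x.1 x.2) ?_ ?_ ?_
  · intro a ha
    simp only [mem_filter, mem_univ, true_and] at ha ⊢
    refine ⟨ha.1, ?_⟩
    funext j
    rw [← ha.2 j]
    unfold cnt Phi
    simp only [card_filter]
    rw [Fintype.sum_prod_type]
  · intro a _ b _ h
    funext k i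
    exact congrFun h (k, i)
  · intro w hw
    refine ⟨fun k i => w (k, i), ?_, rfl⟩
    simp only [mem_filter, mem_univ, true_and] at hw ⊢
    refine ⟨hw.1, fun j => ?_⟩
    have := congrFun hw.2 j
    rw [← this]
    unfold cnt Phi
    simp only [card_filter]
    rw [Fintype.sum_prod_type]

lemma sum_tau (n d p : ℕ) [NeZero p] (w : Fin n × Fin d → ZMod p) :
    ∑ τ : Fin n → ZMod p, (ZMod.stdAddChar (∑ x, τ x.1 * w x) : ℂ)
      = if (∀ k, ∑ i, w (k, i) = 0) then (p : ℂ) ^ n else 0 := by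
  have h2 : ∀ τ : Fin n → ZMod p, (ZMod.stdAddChar (∑ x, τ x.1 * w x) : ℂ)
      = ∏ k, (ZMod.stdAddChar (τ k * ∑ i, w (k, i)) : ℂ) := by
    intro τ
    rw [← addChar_sum, Fintype.sum_prod_type]
    congr 1
    refine sum_congr rfl fun k _ => ?_
    rw [mul_sum]
  simp_rw [h2]
  have h3 := Finset.prod_univ_sum (ι := Fin n) (fun _ => (univ : Finset (ZMod p)))
    (fun k t => (ZMod.stdAddChar (t * ∑ i, w (k, i)) : ℂ))
  rw [Fintype.piFinset_univ] at h3
  rw [← h3]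
  simp_rw [AddChar.sum_mulShift _ (ZMod.isPrimitive_stdAddChar p)]
  by_cases hw : ∀ k, ∑ i, w (k, i) = 0
  · rw [if_pos hw]
    simp [hw]
  · rw [if_neg hw]
    push Not at hw
    obtain ⟨k, hk⟩ := hw
    exact prod_eq_zero (mem_univ k) (by rw [if_neg hk]; simp)

lemma sum_EE_tau (n d p : ℕ) [NeZero p] (v : Fin n → ZMod p) :
    ∑ τ, EE n d p τ v = (p : ℂ) ^ n * (((n * d).factorial : ℂ)⁻¹ *
      (∏ j, ((d * cnt v j).factorial : ℂ)) * (AA n d p (cnt v) : ℂ)) := by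
  simp_rw [EE_eq]
  rw [← mul_sum, ← mul_sum, sum_comm]
  simp_rw [sum_tau]
  rw [← sum_filter, sum_const, nsmul_eq_mul, filter_filter, AA_eq]
  have : (univ.filter (fun w : Fin n × Fin d → ZMod p =>
      (cnt w = fun j => d * cnt v j) ∧ (∀ k, ∑ i, w (k, i) = 0)))
      = (univ.filter (fun w : Fin n × Fin d → ZMod p =>
      (∀ k, ∑ i, w (k, i) = 0) ∧ cnt w = fun j => d * cnt v j)) := by
    ext w; simp only [mem_filter, mem_univ, true_and]; tauto
  rw [this]
  ring

/-- The sum over types equals a sum over words. -/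
lemma T_eq (n d p : ℕ) [NeZero p] (P : (ZMod p → ℕ) → Prop) [DecidablePred P] :
    (((∑ᶠ ν ∈ {ν : ZMod p → ℕ | (∑ j, ν j) = n ∧ P ν},
      ((n.factorial : ℝ) * ∏ j : ZMod p, ((d * ν j).factorial : ℝ)) /
                  ((∏ j : ZMod p, ((ν j).factorial : ℝ)) * ((n * d).factorial : ℝ)) *
                (AA n d p ν : ℝ)) : ℝ) : ℂ) * (p : ℂ) ^ n
      = ∑ v ∈ univ.filter (fun v : Fin n → ZMod p => P (cnt v)), ∑ τ, EE n d p τ v := by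
  set V := univ.filter (fun v : Fin n → ZMod p => P (cnt v)) with hV
  have hS : {ν : ZMod p → ℕ | (∑ j, ν j) = n ∧ P ν} = ↑(V.image cnt) := by
    ext ν
    simp only [Set.mem_setOf_eq, coe_image, Set.mem_image, mem_coe, hV, mem_filter, mem_univ,
      true_and]
    constructor
    · rintro ⟨h1, h2⟩
      obtain ⟨w, hw⟩ := exists_word (ι := Fin n) ν (by simpa using h1)
      exact ⟨w, by rw [hw]; exact h2, hw⟩
    · rintro ⟨w, h1, rfl⟩
      refine ⟨?_, h1⟩
      have := sum_cnt w
      simpa using this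
  rw [hS, finsum_mem_coe_finset]
  rw [← sum_fiberwise_of_maps_to (s := V) (t := V.image cnt) (g := cnt)
    (fun v hv => mem_image_of_mem _ hv)]
  push_cast
  rw [sum_mul]
  refine sum_congr rfl fun ν hν => ?_
  rw [mem_image] at hν
  obtain ⟨w, hw, hwν⟩ := hν
  have h1 : V.filter (fun v => cnt v = ν) = univ.filter (fun v => cnt v = ν) := by
    ext v
    simp only [mem_filter, mem_univ, true_and, hV] at hw ⊢
    constructor
    · exact fun h => h.2
    · intro h; refine ⟨?_, h⟩; rw [h, ← hwν]; exact hw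
  rw [h1]
  have h2 : ∀ v ∈ univ.filter (fun v : Fin n → ZMod p => cnt v = ν), ∑ τ, EE n d p τ v
      = (p : ℂ) ^ n * (((n * d).factorial : ℂ)⁻¹ *
      (∏ j, ((d * ν j).factorial : ℂ)) * (AA n d p ν : ℂ)) := by
    intro v hv
    simp only [mem_filter, mem_univ, true_and] at hv
    rw [sum_EE_tau, hv]
  rw [sum_congr rfl h2, sum_const, nsmul_eq_mul]
  have h3 := card_type (ι := Fin n) ν (by rw [← hwν]; exact sum_cnt w)
  rw [Fintype.card_fin] at h3
  have h4 : (∏ j, ((ν j).factorial : ℂ)) ≠ 0 :=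
    prod_ne_zero_iff.mpr fun j _ => by exact_mod_cast Nat.factorial_ne_zero _
  have h5 : ((n * d).factorial : ℂ) ≠ 0 := by exact_mod_cast Nat.factorial_ne_zero _
  rw [← h3]
  field_simp

lemma EE_norm (n d p : ℕ) [NeZero p] (τ v : Fin n → ZMod p) : ‖EE n d p τ v‖ ≤ 1 := by
  unfold EE
  rw [norm_mul, norm_inv]
  have h5 : (0 : ℝ) < ((n * d).factorial : ℝ) := by exact_mod_cast Nat.factorial_pos _
  have : ‖((n * d).factorial : ℂ)‖ = ((n * d).factorial : ℝ) := by simp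
  rw [this, inv_mul_le_iff₀ h5, mul_one]
  refine (norm_sum_le _ _).trans ?_
  simp [Fintype.card_perm]

/-- Decomposition into near and far frequencies. -/
lemma decomp (n d p : ℕ) [NeZero p] (hn : 1 ≤ n) (T : ℝ)
    (G : Finset (Fin n → ZMod p)) (near : Finset (Fin n → ZMod p)) (h0 : (0 : Fin n → ZMod p) ∈ near)
    (hT : (T : ℂ) * (p : ℂ) ^ n = ∑ v ∈ G, ∑ τ, EE n d p τ v) (F : ℝ) (hF : 0 ≤ F)
    (hfar : ∀ v ∈ G, ∑ τ ∈ nearᶜ, ‖EE n d p τ v‖ ≤ F) :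
    |T - 1| ≤ ∑ τ ∈ near.erase 0, QQ n d p τ + near.card * (Gᶜ.card : ℝ) / p ^ n + F := by
  have hp : (0 : ℝ) < (p : ℝ) ^ n := by
    have : 0 < p := Nat.pos_of_ne_zero (NeZero.ne p)
    positivity
  have e1 : ((T - 1 : ℝ) : ℂ) * (p : ℂ) ^ n
      = (p : ℂ) ^ n * ((∑ τ ∈ near.erase 0, QQ n d p τ : ℝ) : ℂ)
        - ∑ τ ∈ near, ∑ v ∈ Gᶜ, EE n d p τ v + ∑ v ∈ G, ∑ τ ∈ nearᶜ, EE n d p τ v := by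
    have a1 : ∑ v ∈ G, ∑ τ, EE n d p τ v
        = ∑ v ∈ G, ∑ τ ∈ near, EE n d p τ v + ∑ v ∈ G, ∑ τ ∈ nearᶜ, EE n d p τ v := by
      rw [← sum_add_distrib]
      refine sum_congr rfl fun v _ => ?_
      rw [sum_add_sum_compl]
    have a2 : ∑ v ∈ G, ∑ τ ∈ near, EE n d p τ v
        = (p : ℂ) ^ n * (∑ τ ∈ near, (QQ n d p τ : ℂ)) - ∑ τ ∈ near, ∑ v ∈ Gᶜ, EE n d p τ v := by
      rw [sum_comm, eq_sub_iff_add_eq, ← sum_add_distrib, mul_sum]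
      refine sum_congr rfl fun τ _ => ?_
      rw [sum_add_sum_compl, sum_EE]
    have a3 : ∑ τ ∈ near, (QQ n d p τ : ℂ) = 1 + ∑ τ ∈ near.erase 0, (QQ n d p τ : ℂ) := by
      rw [← add_sum_erase _ _ h0, QQ_zero]; simp
    push_cast
    rw [sub_mul, hT, a1, a2, a3]
    ring
  have e2 : |T - 1| * (p : ℝ) ^ n ≤ (∑ τ ∈ near.erase 0, QQ n d p τ) * p ^ n
      + near.card * (Gᶜ.card : ℝ) + F * p ^ n := by
    have b0 : |T - 1| * (p : ℝ) ^ n = ‖((T - 1 : ℝ) : ℂ) * (p : ℂ) ^ n‖ := by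
      rw [norm_mul, Complex.norm_real, norm_pow, Complex.norm_natCast, Real.norm_eq_abs]
    rw [b0, e1]
    refine (norm_add_le _ _).trans (add_le_add ((norm_sub_le _ _).trans (add_le_add ?_ ?_)) ?_)
    · rw [norm_mul, Complex.norm_real, norm_pow, Complex.norm_natCast, Real.norm_eq_abs,
        abs_of_nonneg (sum_nonneg fun τ _ => QQ_nonneg n d p τ), mul_comm]
    · refine (norm_sum_le _ _).trans ?_
      calc ∑ τ ∈ near, ‖∑ v ∈ Gᶜ, EE n d p τ v‖ ≤ ∑ τ ∈ near, ∑ v ∈ Gᶜ, (1 : ℝ) :=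
            sum_le_sum fun τ _ => (norm_sum_le _ _).trans (sum_le_sum fun v _ => EE_norm n d p τ v)
        _ = _ := by simp
    · refine (norm_sum_le _ _).trans ?_
      calc ∑ v ∈ G, ‖∑ τ ∈ nearᶜ, EE n d p τ v‖ ≤ ∑ v ∈ G, F :=
            sum_le_sum fun v hv => (norm_sum_le _ _).trans (hfar v hv)
        _ = G.card * F := by simp
        _ ≤ p ^ n * F := by
            gcongr
            have : G.card ≤ p ^ n := by
              have := card_le_univ G
              simpa [ZMod.card] using this
            exact_mod_cast this
        _ = _ := mul_comm _ _
  rw [← mul_le_mul_iff_left₀ hp]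
  refine e2.trans (le_of_eq ?_)
  field_simp
end DL


namespace DL

lemma geo_sum (K : ℕ) : ∑ k ∈ Icc 1 K, (k : ℝ) * (1 / 2) ^ (k - 1) ≤ 4 := by
  have : ∑ k ∈ Icc 1 K, (k : ℝ) * (1 / 2) ^ (k - 1) = 4 - (2 * K + 4) * (1 / 2) ^ K := by
    induction K with
    | zero => simp
    | succ K ih =>
      rw [sum_Icc_succ_top (by omega), ih]
      push_cast
      rw [pow_succ]
      ring
  rw [this]
  have : (0 : ℝ) ≤ (2 * K + 4) * (1 / 2) ^ K := by positivity
  linarith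

/-- The near set. -/
def nearSet (n p K : ℕ) [NeZero p] : Finset (Fin n → ZMod p) :=
  univ.filter (fun τ => ∃ s, (univ.filter (fun k => τ k ≠ s)).card ≤ K)

lemma near_card (n p K : ℕ) [NeZero p] (hn : 1 ≤ n) :
    ((nearSet n p K).card : ℝ) ≤ p * (((n : ℝ) * p) ^ K * Real.exp 1) := by
  have hp : 1 ≤ p := Nat.pos_of_ne_zero (NeZero.ne p)
  have hn' : (1 : ℝ) ≤ n := by exact_mod_cast hn
  have hp' : (1 : ℝ) ≤ p := by exact_mod_cast hp
  have h1 : nearSet n p K ⊆ (univ : Finset (ZMod p)).biUnion (fun s =>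
      univ.filter (fun τ : Fin n → ZMod p => (univ.filter (fun k => τ k ≠ s)).card ≤ K)) := by
    intro τ hτ
    unfold nearSet at hτ
    simpa using hτ
  have h2 := (Nat.cast_le (α := ℝ)).mpr ((card_le_card h1).trans card_biUnion_le)
  refine h2.trans ?_
  push_cast
  calc _ ≤ ∑ s : ZMod p, (((n : ℝ) * p) ^ K * Real.exp 1) := by
        refine sum_le_sum fun s _ => ?_
        refine (count_near n K s ((n : ℝ) * p) (by nlinarith)).trans (le_of_eq ?_)
        congr 2
        rw [ZMod.card]
        field_simp
    _ = _ := by simp [ZMod.card]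

lemma near_sum (n d p K : ℕ) [Fact p.Prime] (hn : 1 ≤ n) (hd : 3 ≤ d) (hpd : Nat.gcd p d = 1)
    (hK : K * d < n)
    (hA : Real.exp (d + 1) * (d * √d) * p * √((K : ℝ) / n) ≤ 1 / 2) :
    ∑ τ ∈ (nearSet n p K).erase 0, QQ n d p τ
      ≤ 4 * (Real.exp (d + 1) * (d * √d)) * p / √n := by
  set A := Real.exp (d + 1) * (d * √d) with hAdef
  have hA0 : 0 ≤ A := by positivity
  have hp : 1 ≤ p := (Fact.out : p.Prime).one_lt.le
  have hn' : (1 : ℝ) ≤ n := by exact_mod_cast hn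
  have hp' : (1 : ℝ) ≤ p := by exact_mod_cast hp
  let f : (Fin n → ZMod p) → ℕ := fun τ => (univ.filter (fun i => τ i ≠ 0)).card
  have h1 : ∑ τ ∈ (nearSet n p K).erase 0, QQ n d p τ
      = ∑ τ ∈ ((nearSet n p K).erase 0).filter (fun τ => f τ ∈ Icc 1 K), QQ n d p τ := by
    symm
    apply sum_filter_of_ne
    intro τ hτ hQ
    rw [mem_erase] at hτ
    rw [mem_Icc]
    constructor
    · rw [Nat.one_le_iff_ne_zero]
      intro h0
      apply hτ.1
      simp only [f, card_eq_zero, filter_eq_empty_iff, mem_univ, true_implies, not_not] at h0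
      funext i
      exact @h0 i
    · by_contra hcon
      push Not at hcon
      have := hτ.2
      unfold nearSet at this
      simp only [mem_filter, mem_univ, true_and] at this
      obtain ⟨s, hs⟩ := this
      apply hQ
      refine QQ_near n d p hpd τ s ?_ ?_
      · rintro rfl
        exact absurd hs (not_le.mpr hcon)
      · exact lt_of_le_of_lt (Nat.mul_le_mul_right d hs) hK
  rw [h1, ← sum_fiberwise_of_maps_to (t := Icc 1 K) (g := f) (fun τ hτ => (mem_filter.mp hτ).2)]
  have h2 : ∀ k ∈ Icc 1 K, ∑ τ ∈ (((nearSet n p K).erase 0).filter (fun τ => f τ ∈ Icc 1 K)).filter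
      (fun τ => f τ = k), QQ n d p τ ≤ (A * p / √n) * ((k : ℝ) * (1 / 2) ^ (k - 1)) := by
    intro k hk
    rw [mem_Icc] at hk
    have hk1 : (1 : ℝ) ≤ k := by exact_mod_cast hk.1
    have hkK : (k : ℝ) ≤ K := by exact_mod_cast hk.2
    have hkd : k * d ≤ n := (Nat.mul_le_mul_right d hk.2).trans hK.le
    have hkn : k ≤ n := le_trans (Nat.le_mul_of_pos_right k (by omega)) hkd
    have hkn' : (k : ℝ) ≤ n := by exact_mod_cast hkn
    set B := (Real.exp d * √((k * d : ℝ) / n) ^ 3) ^ k with hB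
    have hB0 : 0 ≤ B := by positivity
    calc _ ≤ ∑ τ ∈ (((nearSet n p K).erase 0).filter (fun τ => f τ ∈ Icc 1 K)).filter
            (fun τ => f τ = k), B := by
          refine sum_le_sum fun τ hτ => ?_
          exact QQ_supp' n d p hd τ k (mem_filter.mp hτ).2 hkd hn
      _ ≤ (((univ.filter (fun τ : Fin n → ZMod p =>
            (univ.filter (fun i => τ i ≠ 0)).card ≤ k)).card : ℕ) : ℝ) * B := by
          rw [sum_const, nsmul_eq_mul]
          gcongr
          intro τ hτ
          simp only [mem_filter, mem_univ, true_and] at hτ ⊢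
          exact hτ.2.le
      _ ≤ (((n : ℝ) * p / k) ^ k * Real.exp 1 ^ k) * B := by
          gcongr
          refine (count_near n k (0 : ZMod p) ((n : ℝ) * p / k) ?_).trans (le_of_eq ?_)
          · rw [le_div_iff₀ (by linarith)]; nlinarith
          · congr 1
            rw [← Real.exp_nat_mul, ZMod.card]
            congr 1
            field_simp
      _ = (A * p * √((k : ℝ) / n)) ^ k := by
          rw [hB, ← mul_pow, ← mul_pow]
          congr 1
          have e1 : √((k * d : ℝ) / n) = √d * √((k : ℝ) / n) := by
            rw [← Real.sqrt_mul (by positivity)]; congr 1; ring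
          have e2 : (√(d : ℝ)) ^ 2 = d := Real.sq_sqrt (by positivity)
          have e3 : (√((k : ℝ) / n)) ^ 2 = (k : ℝ) / n := Real.sq_sqrt (by positivity)
          rw [e1, hAdef, Real.exp_add]
          calc _ = (n : ℝ) * p / k * Real.exp 1 * (Real.exp d * (√d ^ 2 * √d * (√((k : ℝ) / n) ^ 2 * √((k : ℝ) / n)))) := by ring
            _ = _ := by rw [e2, e3]; field_simp
      _ = (A * p * √((k : ℝ) / n)) * (A * p * √((k : ℝ) / n)) ^ (k - 1) := by
          rw [← pow_succ', Nat.sub_add_cancel hk.1]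
      _ ≤ (A * p * (k / √n)) * (1 / 2) ^ (k - 1) := by
          gcongr
          · rw [Real.sqrt_div (by positivity)]
            gcongr
            rw [Real.sqrt_le_left (by positivity)]
            nlinarith
          · refine le_trans ?_ hA
            gcongr
      _ = _ := by ring
  refine (sum_le_sum h2).trans ?_
  rw [← mul_sum]
  calc _ ≤ (A * p / √n) * 4 := by
        gcongr
        exact geo_sum K
    _ = _ := by ring
end DL


namespace DL

/-- Bad part estimate. -/
lemma bad_real (x n p b : ℝ) (m : ℕ) (hm : (m : ℝ) = p) (hx : 1 ≤ x) (hL : 1 ≤ Real.log n)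
    (hn : 1 ≤ n) (hp : 1 ≤ p) (hpn : p ≤ n) (hb : 240 ≤ b) :
    p * ((n * p) ^ (16 * m) * Real.exp 1) *
      ((n + 1) ^ m * Real.exp (-(n * (p * (b * Real.log n / n)) / 6))) ≤ 1 / n := by
  set L := Real.log n with hLd
  have hn0 : 0 < n := by linarith
  have en : n = Real.exp L := (Real.exp_log hn0).symm
  have h2 : 2 ≤ n := by
    rw [en]; have := Real.add_one_le_exp L; linarith
  have a1 : p ≤ Real.exp L := en ▸ hpn
  have a2 : n * p ≤ Real.exp (2 * L) := by
    have : Real.exp (2 * L) = n * n := by rw [two_mul, Real.exp_add, ← en]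
    rw [this]; gcongr
  have a3 : n + 1 ≤ Real.exp (2 * L) := by
    have : Real.exp (2 * L) = n * n := by rw [two_mul, Real.exp_add, ← en]
    rw [this]; nlinarith
  have a4 : n * (p * (b * L / n)) / 6 = p * b * L / 6 := by field_simp
  rw [a4]
  calc _ ≤ Real.exp L * (Real.exp (2 * L) ^ (16 * m) * Real.exp 1) *
        (Real.exp (2 * L) ^ m * Real.exp (-(p * b * L / 6))) := by gcongr
    _ = Real.exp (L + (16 * p * (2 * L) + 1) + (p * (2 * L) - p * b * L / 6)) := by
        rw [← Real.exp_nat_mul, ← Real.exp_nat_mul, ← Real.exp_add, ← Real.exp_add, ← Real.exp_add,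
          ← Real.exp_add]
        push_cast
        rw [hm]
        congr 1
    _ ≤ Real.exp (-L) := by
        apply Real.exp_le_exp.mpr
        have : p * 1 * L * 240 ≤ p * L * b := by nlinarith [mul_nonneg (by linarith : 0 ≤ p) (by linarith : 0 ≤ L)]
        have h3 : L ≤ p * L := by nlinarith
        nlinarith
    _ = 1 / n := by rw [Real.exp_neg, ← en, one_div]

/-- Far part estimate. -/
lemma far_est (x n p b D : ℝ) (m : ℕ) (hm : (m : ℝ) = p) (hx : 1 ≤ x) (hxn : x ^ 4 = n)
    (hL : 1 ≤ Real.log n) (hp : 1 ≤ p) (hpx : p ≤ x) (hb : 240 ≤ b)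
    (hD : 1 ≤ D) (hDx : 3 * D ≤ x)
    (h1 : 9 * b ^ 3 * Real.log n ≤ x) (h2 : 18 * (3 + b) * Real.log n ≤ x) :
    (Real.exp 1 * (n * D)) ^ m * ((x ^ (16 * m))⁻¹ *
      Real.exp (n * (3 * x * ((p * (b * Real.log n / n)) * √(p * (b * Real.log n / n)))))
      + Real.exp (n * (-(1 / (9 * x ^ 2)) / 2 + p * (b * Real.log n / n)))) ≤ 2 / n := by
  set L := Real.log n with hLd
  have hx0 : 0 < x := by linarith
  have hn0 : 0 < n := by rw [← hxn]; positivity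
  have hxn1 : x ≤ n := by
    rw [← hxn]
    exact le_self_pow₀ hx (by norm_num)
  have en : n = Real.exp L := (Real.exp_log hn0).symm
  have hb0 : 0 < b := by linarith
  have a1 : Real.exp 1 * (n * D) ≤ Real.exp (2 * L) := by
    have : Real.exp (2 * L) = n * n := by rw [two_mul, Real.exp_add, ← en]
    rw [this]
    have h3 := Real.exp_one_lt_three
    calc Real.exp 1 * (n * D) ≤ 3 * (n * D) := by gcongr
      _ = n * (3 * D) := by ring
      _ ≤ n * n := by gcongr; linarith
  have a2 : (x ^ (16 * m))⁻¹ = Real.exp (-(4 * p * L)) := by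
    rw [Real.exp_neg, show (16 * m) = 4 * (4 * m) by ring, pow_mul, hxn]
    congr 1
    conv_lhs => rw [en]
    rw [← Real.exp_nat_mul]
    push_cast
    rw [hm]
  have a3 : n * (3 * x * ((p * (b * L / n)) * √(p * (b * L / n)))) ≤ p * L := by
    have s1 : √(p * (b * L / n)) ≤ 1 / (3 * b * x) := by
      rw [Real.sqrt_le_left (by positivity), div_pow, one_pow, le_div_iff₀ (by positivity),
        ← hxn]
      rw [show p * (b * L / x ^ 4) * (3 * b * x) ^ 2 = p * (9 * b ^ 3 * L) / x ^ 2 by field_simp; ring,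
        div_le_one (by positivity)]
      nlinarith
    calc n * (3 * x * ((p * (b * L / n)) * √(p * (b * L / n))))
        ≤ n * (3 * x * ((p * (b * L / n)) * (1 / (3 * b * x)))) := by gcongr
      _ = p * L := by field_simp
  have a4 : n * (-(1 / (9 * x ^ 2)) / 2 + p * (b * L / n)) = - (x ^ 2 / 18) + p * b * L := by
    rw [← hxn]; field_simp; ring
  have hpL : L ≤ p * L := by nlinarith
  rw [a4]
  calc _ ≤ Real.exp (2 * L) ^ m * (Real.exp (-(4 * p * L)) * Real.exp (p * L)
        + Real.exp (-(x ^ 2 / 18) + p * b * L)) := by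
        rw [a2]; gcongr
    _ = Real.exp (-(p * L)) + Real.exp (2 * p * L - x ^ 2 / 18 + p * b * L) := by
        rw [← Real.exp_nat_mul, mul_add, ← Real.exp_add, ← Real.exp_add, ← Real.exp_add, hm]
        congr 2 <;> ring
    _ ≤ Real.exp (-L) + Real.exp (-L) := by
        gcongr
        have : p * (18 * (3 + b) * L) ≤ x * x := by gcongr
        nlinarith
    _ = 2 / n := by rw [Real.exp_neg, ← en]; ring

set_option maxHeartbeats 1000000 in
theorem main_n (d : ℕ) (hd : 3 ≤ d) (b : ℝ) (hb : 240 ≤ b) (n : ℕ) (x : ℝ) (hx : 1 ≤ x)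
    (hxn : x ^ 4 = n) (hL : 1 ≤ Real.log n) (p : ℕ) [Fact p.Prime] (hpd : Nat.gcd p d = 1)
    (hpx : (p : ℝ) ≤ x) (hdx : 16 * (d : ℝ) < x)
    (hAx : 64 * (Real.exp (d + 1) * (d * √d)) ^ 2 ≤ x)
    (h1 : 9 * b ^ 3 * Real.log n ≤ x) (h2 : 18 * (3 + b) * Real.log n ≤ x) :
    |(∑ᶠ ν ∈ {ν : ZMod p → ℕ | (∑ j, ν j) = n ∧
                (∑ j : ZMod p, ((ν j : ℝ) / n - 1 / p) ^ 2) ≤ b * Real.log n / n},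
              ((n.factorial : ℝ) * ∏ j : ZMod p, ((d * ν j).factorial : ℝ)) /
                  ((∏ j : ZMod p, ((ν j).factorial : ℝ)) * ((n * d).factorial : ℝ)) *
                (AA n d p ν : ℝ))
            - 1| ≤ (4 * (Real.exp (d + 1) * (d * √d)) + 3) *
              (p : ℝ) ^ 2 * (Real.log n) ^ ((3 : ℝ) / 2) / Real.sqrt n := by
  classical
  set A := Real.exp (d + 1) * (d * √d) with hA
  set L := Real.log n with hLd
  have hA0 : 0 ≤ A := by positivity
  have hx0 : 0 < x := by linarith
  have hn0 : (0 : ℝ) < n := by rw [← hxn]; positivity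
  have hn : 1 ≤ n := by exact_mod_cast hn0
  have hn' : (1 : ℝ) ≤ n := by exact_mod_cast hn
  have hp' : (1 : ℝ) ≤ p := by exact_mod_cast (Fact.out : p.Prime).one_lt.le
  have hd' : (3 : ℝ) ≤ d := by exact_mod_cast hd
  have hxn1 : x ≤ n := by
    rw [← hxn]
    exact le_self_pow₀ hx (by norm_num)
  have hb0 : 0 < b := by linarith
  set η := (p : ℝ) * (b * L / n) with hη
  have hη0 : 0 ≤ η := by positivity
  have hη1 : η ≤ 1 / p := by
    rw [le_div_iff₀ (by linarith), hη, ← hxn]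
    rw [show (p : ℝ) * (b * L / x ^ 4) * p = (p * p) * (b * L) / x ^ 4 by ring,
      div_le_one (by positivity)]
    have : b * L ≤ x := by nlinarith
    calc (p * p : ℝ) * (b * L) ≤ (x * x) * (x * x) := by
          have t2 : b * L ≤ x * x := by nlinarith
          have t1 : (p * p : ℝ) ≤ x * x := by nlinarith
          exact mul_le_mul t1 t2 (by positivity) (by positivity)
      _ = _ := by ring
  set P : (ZMod p → ℕ) → Prop := fun ν =>
    (∑ j : ZMod p, ((ν j : ℝ) / n - 1 / p) ^ 2) ≤ b * L / n with hP
  set T := (∑ᶠ ν ∈ {ν : ZMod p → ℕ | (∑ j, ν j) = n ∧ P ν},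
      ((n.factorial : ℝ) * ∏ j : ZMod p, ((d * ν j).factorial : ℝ)) /
                  ((∏ j : ZMod p, ((ν j).factorial : ℝ)) * ((n * d).factorial : ℝ)) *
                (AA n d p ν : ℝ)) with hT
  set G := univ.filter (fun v : Fin n → ZMod p => P (cnt v)) with hG
  set K := 16 * p with hK
  set F : ℝ := (Real.exp 1 * ((n * d : ℕ) : ℝ)) ^ p * ((x ^ K)⁻¹ * Real.exp (n * (3 * x * (η * √η)))
    + Real.exp (n * (-(1 / (9 * x ^ 2)) / 2 + η))) with hF
  have hF0 : 0 ≤ F := by positivity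
  have hfar : ∀ v ∈ G, ∑ τ ∈ (nearSet n p K)ᶜ, ‖EE n d p τ v‖ ≤ F := by
    intro v hv
    rw [hG, mem_filter] at hv
    have e : (nearSet n p K)ᶜ = univ.filter (fun τ : Fin n → ZMod p =>
        ∀ s, K < (univ.filter (fun k => τ k ≠ s)).card) := by
      ext τ
      unfold nearSet
      simp
    rw [e]
    refine far_bound n d p K hn hd v η hη0 ?_ x (1 / (9 * x ^ 2)) hx (le_of_eq ?_) (by positivity)
    · rw [hη]
      exact mul_le_mul_of_nonneg_left hv.2 (by positivity)
    · field_simp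
  have h0 : (0 : Fin n → ZMod p) ∈ nearSet n p K := by
    unfold nearSet
    simp only [mem_filter, mem_univ, true_and]
    exact ⟨0, by simp⟩
  have D := decomp n d p hn T G (nearSet n p K) h0 (T_eq n d p P) F hF0 hfar
  have hKd : K * d < n := by
    have : (K : ℝ) * d < n := by
      rw [hK]; push_cast
      calc (16 * p : ℝ) * d = p * (16 * d) := by ring
        _ < x * x := by nlinarith
        _ ≤ n := by rw [← hxn]; nlinarith [mul_pos hx0 hx0]
    exact_mod_cast this
  have B1 : ∑ τ ∈ (nearSet n p K).erase 0, QQ n d p τ ≤ 4 * A * p / √n := by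
    refine near_sum n d p K hn hd hpd hKd ?_
    refine (pow_le_pow_iff_left₀ (by positivity) (by norm_num) two_ne_zero).mp ?_
    rw [mul_pow, Real.sq_sqrt (by positivity), hK, ← hA]
    push_cast
    rw [← mul_div_assoc, div_le_iff₀ hn0]
    calc (A * p) ^ 2 * (16 * p) = (64 * A ^ 2) * p ^ 3 / 4 := by ring
      _ ≤ x * x ^ 3 / 4 := by gcongr
      _ = _ := by rw [← hxn]; ring
  have B2 : ((nearSet n p K).card : ℝ) * (Gᶜ.card : ℝ) / p ^ n ≤ 1 / n := by
    have e : Gᶜ = univ.filter (fun v : Fin n → ZMod p =>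
        η < p * ∑ j, ((cnt v j : ℝ) / n - 1 / p) ^ 2) := by
      ext v
      simp only [hG, mem_compl, mem_filter, mem_univ, true_and, hP, not_le, hη]
      rw [mul_lt_mul_iff_right₀ (by linarith)]
    have c1 := bad_bound n p hn η hη1
    rw [← e] at c1
    have c2 := near_card n p K hn
    have c3 := bad_real x n p b p rfl hx hL hn' hp' (hpx.trans hxn1) hb
    rw [div_le_iff₀ (by positivity)]
    calc ((nearSet n p K).card : ℝ) * (Gᶜ.card : ℝ)
        ≤ (p * (((n : ℝ) * p) ^ K * Real.exp 1)) *
          (((n : ℝ) + 1) ^ p * (p ^ n * Real.exp (-(n * η / 6)))) := by gcongr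
      _ = (p * (((n : ℝ) * p) ^ K * Real.exp 1) *
          (((n : ℝ) + 1) ^ p * Real.exp (-(n * η / 6)))) * p ^ n := by ring
      _ ≤ _ := by gcongr
  have B3 : F ≤ 2 / n := by
    rw [hF, hK]
    push_cast
    exact far_est x n p b d p rfl hx hxn hL hp' hpx hb (by linarith) (by linarith) h1 h2
  have hsq : √(n : ℝ) ≤ n := by
    rw [Real.sqrt_le_left (by linarith)]; nlinarith
  have hs0 : 0 < √(n : ℝ) := Real.sqrt_pos.mpr hn0
  refine D.trans ?_
  have hL32 : 1 ≤ L ^ ((3 : ℝ) / 2) := Real.one_le_rpow hL (by norm_num)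
  have hp2 : (p : ℝ) ≤ p ^ 2 := le_self_pow₀ hp' (by norm_num)
  calc _ ≤ 4 * A * p / √n + 1 / n + 2 / n := by gcongr
    _ = 4 * A * p / √n + 3 / n := by ring
    _ ≤ 4 * A * p / √n + 3 / √n := by gcongr
    _ = (4 * A * p + 3 * 1) / √n := by ring
    _ ≤ (4 * A * p + 3 * p) / √n := by gcongr
    _ = ((4 * A + 3) * p * 1) / √n := by ring
    _ ≤ _ := by gcongr
end DL

theorem directed_lclt_estimate (d : ℕ) (hd : 3 ≤ d) :
    ∃ b₀ : ℝ, 0 < b₀ ∧ ∀ b : ℝ, b₀ ≤ b →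
      ∃ C c : ℝ, ∃ N : ℕ, 0 < C ∧ 0 < c ∧ 0 < N ∧
        ∀ n : ℕ, N ≤ n → ∀ (p : ℕ) [Fact p.Prime], Nat.gcd p d = 1 →
          (p : ℝ) ≤ c * (n : ℝ) ^ ((1 : ℝ) / 4) →
          |(∑ᶠ ν ∈ {ν : ZMod p → ℕ | (∑ j, ν j) = n ∧
                (∑ j : ZMod p, ((ν j : ℝ) / n - 1 / p) ^ 2) ≤ b * Real.log n / n},
              ((n.factorial : ℝ) * ∏ j : ZMod p, ((d * ν j).factorial : ℝ)) /
                  ((∏ j : ZMod p, ((ν j).factorial : ℝ)) * ((n * d).factorial : ℝ)) *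
                ((Finset.univ.filter (fun a : Fin n → Fin d → ZMod p =>
                  (∀ k, ∑ i, a k i = 0) ∧
                  (∀ j : ZMod p, (∑ k, Phi (a k) j) = d * ν j))).card : ℝ))
            - 1| ≤ C * (p : ℝ) ^ 2 * (Real.log n) ^ ((3 : ℝ) / 2) / Real.sqrt n := by
  refine ⟨240, by norm_num, fun b hb => ?_⟩
  set A := Real.exp (d + 1) * (d * √d) with hA
  have hA0 : 0 ≤ A := by positivity
  have hb0 : 0 < b := by linarith
  set M := 16 * (d : ℝ) + 1 + 64 * A ^ 2 + 9 * b ^ 3 + 18 * (3 + b) with hM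
  have hM0 : 0 < M := by positivity
  have ev : ∀ᶠ n : ℕ in Filter.atTop, 1 ≤ n ∧ 1 ≤ Real.log n ∧
      M * Real.log n ≤ (n : ℝ) ^ ((1 : ℝ) / 4) := by
    have e1 := (isLittleO_log_rpow_atTop (show (0 : ℝ) < 1 / 4 by norm_num)).bound
      (show (0 : ℝ) < 1 / M by positivity)
    have e2 := tendsto_natCast_atTop_atTop (R := ℝ) |>.eventually e1
    have e3 := (Real.tendsto_log_atTop.comp (tendsto_natCast_atTop_atTop (R := ℝ))).eventually
      (Filter.eventually_ge_atTop (1 : ℝ))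
    filter_upwards [e2, e3, Filter.eventually_ge_atTop 1] with n h2 h3 h1
    refine ⟨h1, h3, ?_⟩
    rw [Real.norm_of_nonneg (by simp at h3; linarith), Real.norm_of_nonneg (by positivity)] at h2
    rw [one_div, inv_mul_eq_div, le_div_iff₀ hM0] at h2
    linarith
  obtain ⟨N, hN⟩ := Filter.eventually_atTop.mp ev
  refine ⟨4 * A + 3, 1, N + 1, by positivity, by norm_num, by omega, ?_⟩
  intro n hn p _ hpd hpx
  obtain ⟨hn1, hL, hML⟩ := hN n (by omega)
  rw [one_mul] at hpx
  set x := (n : ℝ) ^ ((1 : ℝ) / 4) with hx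
  have hxn : x ^ 4 = n := by
    rw [hx, ← Real.rpow_natCast, ← Real.rpow_mul (by positivity)]
    norm_num
  have hd0 : (0 : ℝ) ≤ d := by positivity
  have hA2 : 0 ≤ A ^ 2 := by positivity
  have hb3 : 0 < b ^ 3 := by positivity
  have hMx : M ≤ x := by nlinarith
  have hx1 : 1 ≤ x := by nlinarith
  have k1 : 9 * b ^ 3 * Real.log n ≤ x := by
    refine le_trans ?_ hML
    gcongr
    rw [hM]; nlinarith
  have k2 : 18 * (3 + b) * Real.log n ≤ x := by
    refine le_trans ?_ hML
    gcongr
    rw [hM]; nlinarith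
  have := DL.main_n d hd b hb n x hx1 hxn hL p hpd hpx (by nlinarith) (by nlinarith) k1 k2
  exact this
end

section
/- Let d ≥ 3 be a fixed integer. There exists 𝔟₀ > 0 such that for every 𝔟 ≥ 𝔟₀ there exist constants C, c, N > 0 with the following property: for all n ≥ N and all primes p with gcd(p,d) = 1 and p ≤ c·n^{(d−2)/(2d)}, letting 𝒩_𝔟 be the set of (n_0,…,n_{p−1}) ∈ ℤ_{≥0}^p with n_0+⋯+n_{p−1} = n which are neither equal to (n,0,…,0) nor satisfy Σ_{j=0}^{p−1} (n_j/n − 1/p)² ≤ 𝔟·(ln n)/n, one has Σ_{(n_0,…,n_{p−1}) ∈ 𝒩_𝔟} (n!·∏_{j=0}^{p−1}(d·n_j)!)/((∏_{j=0}^{p−1} n_j!)·(nd)!) · #{(a¹,…,aⁿ) ∈ (Z_{d,p})^n : Σ_{k=1}^n Φ(aᵏ) = (dn_0, dn_1, …, dn_{p−1})} ≤ C·p²/n^{d−2}. -/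
open Finset

/-- The number of walks. -/
noncomputable def walkCount (d n p : ℕ) [NeZero p] (ν : ZMod p → ℕ) : ℕ :=
  (Finset.univ.filter (fun a : Fin n → Fin d → ZMod p =>
                  (∀ k, ∑ i, a k i = 0) ∧
                  (∀ j : ZMod p, (∑ k, Phi (a k) j) = d * ν j))).card

/-- The zero-sum generating function. -/
noncomputable def zgen {G : Type*} [AddCommGroup G] [Fintype G] [DecidableEq G] (d : ℕ)
    (w : G → ℝ) : ℝ :=
  ∑ a ∈ (univ.filter (fun a : Fin d → G => ∑ i, a i = 0)), ∏ i, w (a i)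

lemma prod_Phi {d p : ℕ} [NeZero p] (w : ZMod p → ℝ) (a : Fin d → ZMod p) :
    ∏ i, w (a i) = ∏ j, w j ^ Phi a j := by
  unfold Phi
  rw [← Finset.prod_fiberwise univ a (fun i => w (a i))]
  refine Finset.prod_congr rfl fun j _ => ?_
  rw [← Finset.prod_const]
  refine Finset.prod_congr rfl fun i hi => ?_
  rw [(Finset.mem_filter.1 hi).2]

lemma sum_Phi {d p : ℕ} [NeZero p] (a : Fin d → ZMod p) :
    ∑ i, a i = ∑ j, (Phi a j : ZMod p) * j := by
  unfold Phi
  rw [← Finset.sum_fiberwise univ a (fun i => a i)]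
  refine Finset.sum_congr rfl fun j _ => ?_
  rw [← nsmul_eq_mul, ← Finset.sum_const]
  refine Finset.sum_congr rfl fun i hi => ?_
  rw [(Finset.mem_filter.1 hi).2]

lemma walkCount_le (d n p : ℕ) [NeZero p] (ν : ZMod p → ℕ) (w : ZMod p → ℝ)
    (hw : ∀ j, 0 ≤ w j) :
    (walkCount d n p ν : ℝ) * ∏ j, w j ^ (d * ν j) ≤ zgen d w ^ n := by
  unfold zgen walkCount
  rw [Finset.sum_pow', ← nsmul_eq_mul, ← Finset.sum_const]
  calc _ = ∑ a ∈ (Finset.univ.filter (fun a : Fin n → Fin d → ZMod p =>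
                  (∀ k, ∑ i, a k i = 0) ∧
                  (∀ j : ZMod p, (∑ k, Phi (a k) j) = d * ν j))), ∏ k, ∏ i, w (a k i) := by
        refine Finset.sum_congr rfl fun a ha => ?_
        have := (Finset.mem_filter.1 ha).2.2
        simp_rw [prod_Phi]
        rw [Finset.prod_comm]
        refine Finset.prod_congr rfl fun j _ => ?_
        rw [Finset.prod_pow_eq_pow_sum, this j]
    _ ≤ _ := by
        refine Finset.sum_le_sum_of_subset_of_nonneg ?_ ?_
        · intro a ha
          have := (Finset.mem_filter.1 ha).2.1
          simpa using this
        · intros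
          exact Finset.prod_nonneg fun _ _ => Finset.prod_nonneg fun _ _ => hw _

lemma walkCount_sum {d n p : ℕ} [Fact p.Prime] (hpd : Nat.gcd p d = 1) (ν : ZMod p → ℕ)
    (h : walkCount d n p ν ≠ 0) : ∑ j, (ν j : ZMod p) * j = 0 := by
  unfold walkCount at h
  obtain ⟨a, ha⟩ := Finset.card_ne_zero.1 h
  obtain ⟨h1, h2⟩ := (Finset.mem_filter.1 ha).2
  have hd : (d : ZMod p) ≠ 0 := by
    intro h0
    rw [ZMod.natCast_eq_zero_iff] at h0
    rw [Nat.gcd_eq_left h0] at hpd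
    exact (Fact.out : p.Prime).one_lt.ne' hpd
  have : (d : ZMod p) * ∑ j, (ν j : ZMod p) * j = 0 := by
    calc (d : ZMod p) * ∑ j, (ν j : ZMod p) * j = ∑ j, ((d * ν j : ℕ) : ZMod p) * j := by
          rw [Finset.mul_sum]; refine Finset.sum_congr rfl fun j _ => ?_; push_cast; ring
      _ = ∑ j, ∑ k, (Phi (a k) j : ZMod p) * j := by
          refine Finset.sum_congr rfl fun j _ => ?_
          rw [← h2 j, Nat.cast_sum, Finset.sum_mul]
      _ = ∑ k, ∑ i, a k i := by
          rw [Finset.sum_comm]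
          refine Finset.sum_congr rfl fun k _ => ?_
          rw [sum_Phi]
      _ = 0 := Finset.sum_eq_zero fun k _ => h1 k
  exact (mul_eq_zero.1 this).resolve_left hd

lemma walkCount_conc {d n p : ℕ} [Fact p.Prime] (hpd : Nat.gcd p d = 1) (hd0 : 1 ≤ d)
    (ν : ZMod p → ℕ)
    (h : walkCount d n p ν ≠ 0) (j : ZMod p) (hj : j ≠ 0) : d * ν j ≤ n * (d - 1) := by
  unfold walkCount at h
  obtain ⟨a, ha⟩ := Finset.card_ne_zero.1 h
  obtain ⟨h1, h2⟩ := (Finset.mem_filter.1 ha).2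
  have hd : (d : ZMod p) ≠ 0 := by
    intro h0
    rw [ZMod.natCast_eq_zero_iff] at h0
    rw [Nat.gcd_eq_left h0] at hpd
    exact (Fact.out : p.Prime).one_lt.ne' hpd
  rw [← h2 j]
  have : ∀ k ∈ (univ : Finset (Fin n)), Phi (a k) j ≤ d - 1 := by
    intro k _
    by_contra hc
    have hle : Phi (a k) j ≤ d := by
      unfold Phi; exact (Finset.card_le_univ _).trans (by simp)
    have heq : Phi (a k) j = d := by omega
    have hall : ∀ i, a k i = j := by
      unfold Phi at heq
      have : (univ.filter (fun r : Fin d => a k r = j)) = univ := by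
        apply Finset.eq_univ_of_card; simpa using heq
      intro i
      have := Finset.mem_univ i
      rw [← ‹_ = univ›] at this
      exact (Finset.mem_filter.1 this).2
    have := h1 k
    simp [hall, hd, hj] at this
  calc _ ≤ ∑ k : Fin n, (d - 1) := Finset.sum_le_sum this
    _ = _ := by simp


section Geometry

set_option linter.unusedSectionVars false

variable {G : Type*} [AddCommGroup G] [Fintype G] [DecidableEq G]

/-- squared shift distance -/
noncomputable def shiftD (r : G → ℝ) (t : G) : ℝ := ∑ u, (r u - r (u + t)) ^ 2

/-- squared reflection distance -/
noncomputable def reflD (r : G → ℝ) (s : G) : ℝ := ∑ u, (r u - r (s - u)) ^ 2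

lemma shiftD_nonneg (r : G → ℝ) (t : G) : 0 ≤ shiftD r t :=
  Finset.sum_nonneg fun _ _ => sq_nonneg _

lemma shiftD_zero (r : G → ℝ) : shiftD r 0 = 0 := by simp [shiftD]

lemma shiftD_neg (r : G → ℝ) (t : G) : shiftD r (-t) = shiftD r t := by
  unfold shiftD
  rw [← Equiv.sum_comp (Equiv.addRight t) (fun u => (r u - r (u + -t)) ^ 2)]
  refine Finset.sum_congr rfl fun u _ => ?_
  simp only [Equiv.coe_addRight, add_neg_cancel_right]
  ring

lemma shiftD_add (r : G → ℝ) (s t : G) : shiftD r (s + t) ≤ 2 * shiftD r s + 2 * shiftD r t := by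
  have h : shiftD r t = ∑ u, (r (u + s) - r (u + s + t)) ^ 2 := by
    unfold shiftD
    rw [← Equiv.sum_comp (Equiv.addRight s) (fun u => (r u - r (u + t)) ^ 2)]
    rfl
  rw [h]
  unfold shiftD
  rw [Finset.mul_sum, Finset.mul_sum, ← Finset.sum_add_distrib]
  refine Finset.sum_le_sum fun u _ => ?_
  rw [← add_assoc]
  nlinarith [sq_nonneg ((r u - r (u + s)) - (r (u + s) - r (u + s + t)))]

lemma shiftD_le_refl (r : G → ℝ) (c α β : G) :
    shiftD r (α - β) ≤ 2 * reflD r (c - α) + 2 * reflD r (c - β) := by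
  have h : reflD r (c - β) = ∑ u, (r (c - α - u) - r (u + (α - β))) ^ 2 := by
    unfold reflD
    rw [← Equiv.sum_comp (Equiv.subLeft (c - α)) (fun u => (r u - r (c - β - u)) ^ 2)]
    refine Finset.sum_congr rfl fun u _ => ?_
    simp only [Equiv.subLeft_apply]
    congr 3
    abel_nf
  rw [h]
  unfold reflD shiftD
  rw [Finset.mul_sum, Finset.mul_sum, ← Finset.sum_add_distrib]
  refine Finset.sum_le_sum fun u _ => ?_
  nlinarith [sq_nonneg ((r u - r (c - α - u)) - (r (c - α - u) - r (u + (α - β))))]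

lemma sum_shiftD (r : G → ℝ) (hr : ∑ u, r u ^ 2 = 1) :
    ∑ t, shiftD r t = 2 * Fintype.card G - 2 * (∑ u, r u) ^ 2 := by
  have h1 : ∀ t, shiftD r t = 2 - 2 * ∑ u, r u * r (u + t) := by
    intro t
    have : ∑ u, r (u + t) ^ 2 = 1 := by
      rw [← hr, ← Equiv.sum_comp (Equiv.addRight t) (fun u => (r u) ^ 2)]; rfl
    calc shiftD r t = ∑ u, r u ^ 2 + ∑ u, r (u + t) ^ 2 - 2 * ∑ u, r u * r (u + t) := by
          unfold shiftD
          rw [Finset.mul_sum, ← Finset.sum_add_distrib, ← Finset.sum_sub_distrib]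
          refine Finset.sum_congr rfl fun u _ => ?_
          ring
      _ = _ := by rw [hr, this]; ring
  simp_rw [h1]
  rw [Finset.sum_sub_distrib, ← Finset.mul_sum, Finset.sum_comm]
  have : ∀ u, ∑ t, r u * r (u + t) = r u * ∑ t, r t := by
    intro u
    rw [← Finset.mul_sum, ← Equiv.sum_comp (Equiv.addLeft u) r]; rfl
  simp_rw [this]
  rw [← Finset.sum_mul]
  simp
  ring

lemma exists_le_of_weighted {ι : Type*} [Fintype ι] (x F : ι → ℝ) (hx : ∀ i, 0 ≤ x i)
    (hs : ∑ i, x i = 1) (η : ℝ) (h : ∑ i, x i * F i ≤ η) : ∃ i, F i ≤ η := by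
  by_contra! hc
  have h1 : ∑ i, x i * (F i - η) ≤ 0 := by
    simp_rw [mul_sub]
    rw [Finset.sum_sub_distrib, ← Finset.sum_mul, hs]; linarith
  have h2 : ∀ i ∈ univ, 0 ≤ x i * (F i - η) := fun i _ =>
    mul_nonneg (hx i) (by linarith [hc i])
  have h3 := (Finset.sum_eq_zero_iff_of_nonneg h2).1 (le_antisymm h1 (Finset.sum_nonneg h2))
  have : ∀ i, x i = 0 := fun i =>
    (mul_eq_zero.1 (h3 i (mem_univ i))).resolve_right (by linarith [hc i])
  simp [this] at hs

lemma geometry [Fact (Nat.Prime (Nat.card G))] (r : G → ℝ) (hr0 : ∀ u, 0 ≤ r u)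
    (hr : ∑ u, r u ^ 2 = 1) (η : ℝ)
    (hη : 0 < η) (hη1 : η ≤ 1 / 1280) (c : G)
    (hc : ∑ α, r α ^ 2 * reflD r (c - α) ≤ η) :
    (∃ a, 1 - r a ^ 2 ≤ 16 * η) ∨
      ∑ u, (r u - 1 / √(Fintype.card G : ℝ)) ^ 2 ≤ 128 * η := by
  obtain ⟨a, ha⟩ := exists_le_of_weighted (fun α => r α ^ 2) (fun α => reflD r (c - α))
    (fun _ => sq_nonneg _) hr η hc
  have hf : ∑ α, r α ^ 2 * shiftD r (α - a) ≤ 4 * η := by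
    calc _ ≤ ∑ α, r α ^ 2 * (2 * reflD r (c - α) + 2 * η) := by
          refine Finset.sum_le_sum fun α _ => mul_le_mul_of_nonneg_left ?_ (sq_nonneg _)
          linarith [shiftD_le_refl r c α a]
      _ = 2 * ∑ α, r α ^ 2 * reflD r (c - α) + 2 * η * ∑ α, r α ^ 2 := by
          rw [Finset.mul_sum, Finset.mul_sum, ← Finset.sum_add_distrib]
          refine Finset.sum_congr rfl fun u _ => ?_
          ring
      _ ≤ _ := by rw [hr]; linarith
  let P : G → Prop := fun t => shiftD r t ≤ 32 * η
  have hP0 : P 0 := by simp only [P, shiftD_zero]; positivity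
  have hPn : ∀ t, P t → P (-t) := fun t ht => by simpa only [P, shiftD_neg] using ht
  classical
  let E : Finset G := univ.filter fun α => P (α - a)
  have hE : 7 / 8 ≤ ∑ α ∈ E, r α ^ 2 := by
    have h1 : ∑ α ∈ univ.filter (fun α => ¬ P (α - a)), r α ^ 2 * (32 * η) ≤ 4 * η := by
      refine le_trans ?_ hf
      refine le_trans (Finset.sum_le_sum (g := fun α => r α ^ 2 * shiftD r (α - a)) ?_) ?_
      · intro α hα
        have := (Finset.mem_filter.1 hα).2
        simp only [P, not_le] at this
        exact mul_le_mul_of_nonneg_left this.le (sq_nonneg _)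
      · exact Finset.sum_le_sum_of_subset_of_nonneg (Finset.subset_univ _)
          fun _ _ _ => mul_nonneg (sq_nonneg _) (shiftD_nonneg _ _)
    rw [← Finset.sum_mul] at h1
    have h2 := Finset.sum_filter_add_sum_filter_not univ (fun α => P (α - a)) (fun α => r α ^ 2)
    rw [hr] at h2
    have h3 : ∑ α ∈ univ.filter (fun α => ¬ P (α - a)), r α ^ 2 ≤ 1 / 8 := by
      by_contra! hh
      nlinarith
    change 7 / 8 ≤ ∑ α ∈ univ.filter (fun α => P (α - a)), r α ^ 2
    linarith
  have key : ∀ t, shiftD r t ≤ 320 * η → ∃ x y, P x ∧ P y ∧ t = x + y := by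
    intro t ht
    by_contra! hcon
    let E' : Finset G := E.map (Equiv.addRight t).toEmbedding
    have hdisj : Disjoint E E' := by
      rw [Finset.disjoint_left]
      intro u hu hu'
      obtain ⟨v, hv, hvu⟩ := Finset.mem_map.1 hu'
      simp only [Equiv.coe_toEmbedding, Equiv.coe_addRight] at hvu
      refine hcon (u - a) (-(v - a)) (Finset.mem_filter.1 hu).2
        (hPn _ (Finset.mem_filter.1 hv).2) ?_
      rw [← hvu]; abel
    have h1 : ∑ u ∈ E, r u ^ 2 + ∑ u ∈ E', r u ^ 2 ≤ 1 := by
      rw [← Finset.sum_union hdisj, ← hr]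
      exact Finset.sum_le_sum_of_subset_of_nonneg (Finset.subset_univ _)
        fun _ _ _ => sq_nonneg _
    have h2 : ∑ u ∈ E', r u ^ 2 = ∑ u ∈ E, r (u + t) ^ 2 := by
      simp [E']
    have h3 : ∑ u ∈ E, (r u - r (u + t)) ^ 2 ≤ shiftD r t :=
      Finset.sum_le_sum_of_subset_of_nonneg (Finset.subset_univ _)
        fun _ _ _ => sq_nonneg _
    have h4 : ∑ u ∈ E, r u ^ 2 ≤ 2 * ∑ u ∈ E, r (u + t) ^ 2 + 2 * ∑ u ∈ E, (r u - r (u + t)) ^ 2 := by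
      rw [Finset.mul_sum, Finset.mul_sum, ← Finset.sum_add_distrib]
      refine Finset.sum_le_sum fun u _ => ?_
      nlinarith [sq_nonneg (r (u + t) - (r u - r (u + t)))]
    linarith
  have three : ∀ x y z, P x → P y → P z → ∃ x' y', P x' ∧ P y' ∧ x + y + z = x' + y' := by
    intro x y z hx hy hz
    apply key
    have h1 := shiftD_add r (x + y) z
    have h2 := shiftD_add r x y
    simp only [P] at hx hy hz
    linarith
  let H : AddSubgroup G :=
    { carrier := {t | ∃ x y, P x ∧ P y ∧ t = x + y}
      zero_mem' := ⟨0, 0, hP0, hP0, by simp⟩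
      add_mem' := by
        rintro s t ⟨x, y, hx, hy, rfl⟩ ⟨z, w, hz, hw, rfl⟩
        obtain ⟨x', y', hx', hy', h⟩ := three x y z hx hy hz
        obtain ⟨x'', y'', hx'', hy'', h'⟩ := three x' y' w hx' hy' hw
        refine ⟨x'', y'', hx'', hy'', ?_⟩
        rw [← h', ← h]; abel
      neg_mem' := by
        rintro s ⟨x, y, hx, hy, rfl⟩
        exact ⟨-x, -y, hPn _ hx, hPn _ hy, by abel⟩ }
  rcases AddSubgroup.eq_bot_or_eq_top_of_prime_card H with hH | hH
  · left
    have hB : ∀ t, P t → t = 0 := by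
      intro t ht
      have : t ∈ H := ⟨t, 0, ht, hP0, by simp⟩
      rw [hH] at this
      simpa using this
    refine ⟨a, ?_⟩
    have hEa : E ⊆ {a} := by
      intro u hu
      have := hB _ (Finset.mem_filter.1 hu).2
      simpa [sub_eq_zero] using this
    have h1 : 7 / 8 ≤ r a ^ 2 := by
      refine hE.trans ?_
      refine (Finset.sum_le_sum_of_subset_of_nonneg hEa fun _ _ _ => sq_nonneg _).trans ?_
      simp
    have h2 : r a ^ 2 + ∑ u ∈ univ.erase a, r u ^ 2 = 1 := by
      rw [Finset.add_sum_erase univ (fun u => r u ^ 2) (mem_univ a), hr]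
    have h3 : ∀ u ∈ univ.erase a, r u ^ 2 * (1 / 4) ≤ r u ^ 2 * shiftD r (u - a) := by
      intro u hu
      refine mul_le_mul_of_nonneg_left ?_ (sq_nonneg _)
      have h4 : r u ^ 2 ≤ 1 / 8 := by
        have : r u ^ 2 ≤ ∑ v ∈ univ.erase a, r v ^ 2 :=
          Finset.single_le_sum (f := fun u => r u ^ 2) (fun i _ => sq_nonneg _) hu
        linarith
      have h5 : (r a - r (a + (u - a))) ^ 2 ≤ shiftD r (u - a) :=
        Finset.single_le_sum (f := fun v => (r v - r (v + (u - a))) ^ 2)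
          (fun i _ => sq_nonneg _) (mem_univ a)
      rw [add_sub_cancel] at h5
      refine le_trans ?_ h5
      have h6 : 9 / 10 ≤ r a := by
        by_contra! h
        nlinarith [hr0 a]
      have h7 : r u ≤ 2 / 5 := by
        by_contra! h
        nlinarith [hr0 u]
      nlinarith
    have h8 : ∑ u ∈ univ.erase a, r u ^ 2 * (1 / 4) ≤ 4 * η := by
      refine (Finset.sum_le_sum h3).trans (le_trans ?_ hf)
      exact Finset.sum_le_sum_of_subset_of_nonneg (Finset.subset_univ _)
          fun _ _ _ => mul_nonneg (sq_nonneg _) (shiftD_nonneg _ _)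
    rw [← Finset.sum_mul] at h8
    linarith
  · right
    have hall : ∀ t, shiftD r t ≤ 128 * η := by
      intro t
      have : t ∈ H := by rw [hH]; trivial
      obtain ⟨x, y, hx, hy, rfl⟩ := this
      have := shiftD_add r x y
      simp only [P] at hx hy
      linarith
    have h1 := sum_shiftD r hr
    have h2 : ∑ t, shiftD r t ≤ Fintype.card G * (128 * η) := by
      refine (Finset.sum_le_sum fun t _ => hall t).trans ?_
      simp
    set q : ℝ := (Fintype.card G : ℝ) with hq
    have hqpos : 0 < q := by
      rw [hq]; exact_mod_cast Fintype.card_pos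
    have hsq : √q ^ 2 = q := Real.sq_sqrt hqpos.le
    have hsp : 0 < √q := Real.sqrt_pos.2 hqpos
    have h3 : ∑ u, (r u - 1 / √q) ^ 2 = 2 - 2 * ((∑ u, r u) / √q) := by
      calc _ = ∑ u, (r u ^ 2 - 2 / √q * r u + 1 / q) := by
            refine Finset.sum_congr rfl fun u _ => ?_
            rw [sub_sq, div_pow, hsq]; ring
        _ = _ := by
            rw [Finset.sum_add_distrib, Finset.sum_sub_distrib, hr, ← Finset.mul_sum]
            simp only [Finset.sum_const, Finset.card_univ, nsmul_eq_mul]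
            rw [← hq]; field_simp; ring
    rw [h3]
    set ρ := (∑ u, r u) / √q with hρ
    have hρ0 : 0 ≤ ρ := div_nonneg (Finset.sum_nonneg fun _ _ => hr0 _) hsp.le
    have hρ2 : (∑ u, r u) ^ 2 = ρ ^ 2 * q := by
      rw [hρ, div_pow, hsq]; field_simp
    rw [h1, hρ2] at h2
    have h4 : 1 - ρ ^ 2 ≤ 64 * η := by
      have : q * (1 - ρ ^ 2) ≤ q * (64 * η) := by nlinarith
      exact le_of_mul_le_mul_left this hqpos
    have h5 : ρ ≤ 1 := by
      have : 0 ≤ 2 - 2 * ρ := by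
        rw [← h3]; exact Finset.sum_nonneg fun _ _ => sq_nonneg _
      linarith
    nlinarith

end Geometry

section Young

set_option linter.unusedSectionVars false

variable {G : Type*} [AddCommGroup G] [Fintype G] [DecidableEq G]

lemma sum_insertNth {k : ℕ} (i : Fin (k + 1)) (F : (Fin (k + 1) → G) → ℝ) :
    ∑ a, F a = ∑ u, ∑ b, F (i.insertNth u b) := by
  rw [← Equiv.sum_comp (Fin.insertNthEquiv (fun _ => G) i) F, Fintype.sum_prod_type]
  rfl

lemma sum_fin_cons {k : ℕ} (F : (Fin (k + 1) → G) → ℝ) :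
    ∑ a, F a = ∑ u, ∑ b, F (Fin.cons u b) := by
  rw [← Equiv.sum_comp (Fin.consEquiv (fun _ => G)) F, Fintype.sum_prod_type]
  rfl

lemma sum_prod_one {k : ℕ} (x : G → ℝ) (hx : ∑ u, x u = 1) :
    ∑ b : Fin k → G, ∏ i, x (b i) = 1 := by
  rw [← Fintype.sum_pow, hx, one_pow]

/-- product without one index -/
noncomputable def dropP {k : ℕ} (x : G → ℝ) (i : Fin (k + 1)) (a : Fin (k + 1) → G) : ℝ :=
  ∏ l, x (a (i.succAbove l))

lemma dropP_nonneg {k : ℕ} (x : G → ℝ) (hx0 : ∀ u, 0 ≤ x u) (i : Fin (k + 1))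
    (a : Fin (k + 1) → G) : 0 ≤ dropP x i a := Finset.prod_nonneg fun _ _ => hx0 _

lemma sum_dropP {k : ℕ} (x : G → ℝ) (hx : ∑ u, x u = 1) (i : Fin (k + 1)) :
    ∑ a ∈ univ.filter (fun a : Fin (k + 1) → G => ∑ i, a i = 0), dropP x i a = 1 := by
  rw [Finset.sum_filter, sum_insertNth i, Finset.sum_comm, ← sum_prod_one (k := k) x hx]
  refine Finset.sum_congr rfl fun b _ => ?_
  have : ∀ u : G, (∑ j, (i.insertNth u b : Fin (k + 1) → G) j = 0) ↔ u = - ∑ j, b j := by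
    intro u
    rw [Fin.sum_univ_succAbove _ i]
    simp [eq_neg_iff_add_eq_zero]
  simp_rw [this]
  simp [dropP]

lemma prod_dropP {k : ℕ} (x : G → ℝ) (a : Fin (k + 1) → G) :
    ∏ i, dropP x i a = ∏ i, x (a i) ^ k := by
  have h : ∀ i, dropP x i a = ∏ l, if l ≠ i then x (a l) else 1 := by
    intro i
    rw [Fin.prod_univ_succAbove _ i]
    simp [dropP]
  simp_rw [h]
  rw [Finset.prod_comm]
  refine Finset.prod_congr rfl fun l _ => ?_
  rw [Fin.prod_univ_succAbove _ l]
  simp [Fin.ne_succAbove]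

lemma amgm_deficit {m : ℕ} (x : G → ℝ) (hx0 : ∀ u, 0 ≤ x u) (a : Fin (m + 3) → G) :
    (m + 3 : ℝ) * ∏ i, x (a i) ^ (((m : ℝ) + 2) / (m + 3)) ≤
      ∑ i, dropP x i a - (√(dropP x 0 a) - √(dropP x 1 a)) ^ 2 := by
  set A := dropP x 0 a with hA
  set B := dropP x 1 a with hB
  have hA0 : 0 ≤ A := dropP_nonneg x hx0 _ _
  have hB0 : 0 ≤ B := dropP_nonneg x hx0 _ _
  let z : Fin (m + 3) → ℝ :=
    Fin.cons (√A * √B) (Fin.cons (√A * √B) (fun l : Fin (m + 1) => dropP x l.succ.succ a))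
  have hz0 : ∀ i, 0 ≤ z i := by
    intro i
    refine Fin.cases ?_ (fun i => ?_) i
    · simp only [z, Fin.cons_zero]; positivity
    · refine Fin.cases ?_ (fun i => ?_) i
      · simp only [z, Fin.cons_zero, Fin.cons_succ]; positivity
      · simp only [z, Fin.cons_succ]; exact dropP_nonneg x hx0 _ _
  have hd : (0 : ℝ) < (m : ℝ) + 3 := by positivity
  have h := Real.geom_mean_le_arith_mean_weighted univ (fun _ => 1 / ((m : ℝ) + 3)) z
    (fun _ _ => by positivity) (by simp; field_simp) (fun i _ => hz0 i)
  have hprod : ∏ i, z i = ∏ i, x (a i) ^ (m + 2) := by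
    rw [← prod_dropP, Fin.prod_univ_succ, Fin.prod_univ_succ, Fin.prod_univ_succ (n := m + 2),
      Fin.prod_univ_succ (n := m + 1)]
    simp only [z, Fin.cons_zero, Fin.cons_succ]
    simp only [Fin.succ_zero_eq_one]
    rw [← hA, ← hB, ← mul_assoc, ← mul_assoc A B]
    congr 1
    calc √A * √B * (√A * √B) = (√A * √A) * (√B * √B) := by ring
      _ = A * B := by rw [Real.mul_self_sqrt hA0, Real.mul_self_sqrt hB0]
  have hL : ∏ i, z i ^ (1 / ((m : ℝ) + 3)) = ∏ i, x (a i) ^ (((m : ℝ) + 2) / (m + 3)) := by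
    rw [Real.finsetProd_rpow _ _ (fun i _ => hz0 i), hprod,
      ← Real.finsetProd_rpow _ _ (fun i _ => pow_nonneg (hx0 _) _)]
    refine Finset.prod_congr rfl fun i _ => ?_
    rw [← Real.rpow_natCast, ← Real.rpow_mul (hx0 _)]
    congr 1
    push_cast; ring
  rw [hL, ← Finset.mul_sum] at h
  have hsum : ∑ i, z i = ∑ i, dropP x i a - (√A - √B) ^ 2 := by
    rw [Fin.sum_univ_succ, Fin.sum_univ_succ, Fin.sum_univ_succ (n := m + 2),
      Fin.sum_univ_succ (n := m + 1)]
    simp only [z, Fin.cons_zero, Fin.cons_succ]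
    simp only [Fin.succ_zero_eq_one]
    rw [← hA, ← hB, sub_sq, Real.sq_sqrt hA0, Real.sq_sqrt hB0]
    ring
  rw [hsum] at h
  calc _ ≤ ((m : ℝ) + 3) * (1 / ((m : ℝ) + 3) * (∑ i, dropP x i a - (√A - √B) ^ 2)) :=
        mul_le_mul_of_nonneg_left h hd.le
    _ = _ := by field_simp

lemma sum_sq_part {m : ℕ} (x : G → ℝ) (hx0 : ∀ u, 0 ≤ x u) :
    ∑ a ∈ univ.filter (fun a : Fin (m + 3) → G => ∑ i, a i = 0),
      (√(dropP x 0 a) - √(dropP x 1 a)) ^ 2 =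
    ∑ b : Fin m → G, (∏ i, x (b i)) *
      ∑ α, x α * reflD (fun u => √(x u)) ((- ∑ i, b i) - α) := by
  rw [Finset.sum_filter, sum_fin_cons]
  simp_rw [sum_fin_cons (k := m + 1), sum_fin_cons (k := m)]
  have h0 : ∀ (u v α : G) (b : Fin m → G),
      dropP x 0 (Fin.cons u (Fin.cons v (Fin.cons α b)) : Fin (m + 3) → G)
        = x v * (x α * ∏ i, x (b i)) := by
    intro u v α b
    simp [dropP, Fin.prod_univ_succ]
  have h1 : ∀ (u v α : G) (b : Fin m → G),
      dropP x 1 (Fin.cons u (Fin.cons v (Fin.cons α b)) : Fin (m + 3) → G)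
        = x u * (x α * ∏ i, x (b i)) := by
    intro u v α b
    rw [dropP, Fin.prod_univ_succ, Fin.prod_univ_succ]
    have e1 : (1 : Fin (m + 3)).succAbove 0 = 0 := rfl
    have e2 : ∀ l : Fin (m + 1), (1 : Fin (m + 3)).succAbove l.succ = l.succ.succ := by
      intro l
      rw [← Fin.succ_zero_eq_one, Fin.succ_succAbove_succ]; simp
    rw [e1, e2]
    simp only [e2, Fin.cons_zero, Fin.cons_succ]
  have hs : ∀ (u v α : G) (b : Fin m → G),
      (∑ i, (Fin.cons u (Fin.cons v (Fin.cons α b)) : Fin (m + 3) → G) i = 0) ↔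
        v = (- ∑ i, b i) - α - u := by
    intro u v α b
    simp only [Fin.sum_univ_succ (n := m + 2), Fin.sum_univ_succ (n := m + 1),
      Fin.sum_univ_succ (n := m), Fin.cons_zero, Fin.cons_succ]
    constructor
    · intro h
      rw [← sub_eq_zero, ← h]; abel
    · rintro rfl; abel
  simp_rw [h0, h1, hs]
  calc _ = ∑ u, ∑ α, ∑ b : Fin m → G, ∑ v, (if v = (- ∑ i, b i) - α - u then
        (√(x v * (x α * ∏ i, x (b i))) - √(x u * (x α * ∏ i, x (b i)))) ^ 2 else 0) := by
        refine Finset.sum_congr rfl fun u _ => ?_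
        rw [Finset.sum_comm]
        refine Finset.sum_congr rfl fun α _ => ?_
        rw [Finset.sum_comm]
    _ = ∑ u, ∑ α, ∑ b : Fin m → G, (∏ i, x (b i)) * (x α *
          (√(x u) - √(x ((- ∑ i, b i) - α - u))) ^ 2) := by
        refine Finset.sum_congr rfl fun u _ => Finset.sum_congr rfl fun α _ =>
          Finset.sum_congr rfl fun b _ => ?_
        rw [Finset.sum_ite_eq' univ]
        simp only [mem_univ, if_true]
        have hb : 0 ≤ ∏ i, x (b i) := Finset.prod_nonneg fun _ _ => hx0 _
        rw [Real.sqrt_mul (hx0 (_ - u)), Real.sqrt_mul (hx0 u), ← sub_mul, mul_pow,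
          Real.sq_sqrt (mul_nonneg (hx0 _) hb)]
        ring
    _ = ∑ b : Fin m → G, ∑ α, ∑ u, (∏ i, x (b i)) * (x α *
          (√(x u) - √(x ((- ∑ i, b i) - α - u))) ^ 2) := by
        rw [Finset.sum_comm, Finset.sum_comm (s := univ (α := Fin m → G))]
        refine Finset.sum_congr rfl fun α _ => ?_
        rw [Finset.sum_comm]
    _ = _ := by
        simp_rw [reflD, Finset.mul_sum]

lemma young_deficit {m : ℕ} (x : G → ℝ) (hx0 : ∀ u, 0 ≤ x u) (hx : ∑ u, x u = 1) :
    ∃ c, ∑ α, x α * reflD (fun u => √(x u)) (c - α) ≤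
      (m + 3 : ℝ) * (1 - zgen (m + 3) (fun j => x j ^ (((m : ℝ) + 2) / (m + 3)))) := by
  have h : ∑ b : Fin m → G, (∏ i, x (b i)) *
      ∑ α, x α * reflD (fun u => √(x u)) ((- ∑ i, b i) - α) ≤
      (m + 3 : ℝ) * (1 - zgen (m + 3) (fun j => x j ^ (((m : ℝ) + 2) / (m + 3)))) := by
    rw [← sum_sq_part x hx0]
    have h1 := Finset.sum_le_sum (s := univ.filter (fun a : Fin (m + 3) → G => ∑ i, a i = 0))
      (fun a _ => amgm_deficit x hx0 a)
    rw [← Finset.mul_sum, Finset.sum_sub_distrib, Finset.sum_comm] at h1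
    simp_rw [sum_dropP x hx] at h1
    simp only [Finset.sum_const, Finset.card_univ, Fintype.card_fin, nsmul_eq_mul, mul_one] at h1
    push_cast at h1
    unfold zgen
    linarith
  obtain ⟨b, hb⟩ := exists_le_of_weighted (fun b : Fin m → G => ∏ i, x (b i)) _
    (fun b => Finset.prod_nonneg fun _ _ => hx0 _) (sum_prod_one x hx) _ h
  exact ⟨_, hb⟩

end Young

/-- The summand. -/
noncomputable def ldTerm (d n p : ℕ) [NeZero p] (ν : ZMod p → ℕ) : ℝ :=
  ((n.factorial : ℝ) * ∏ j : ZMod p, ((d * ν j).factorial : ℝ)) /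
    ((∏ j : ZMod p, ((ν j).factorial : ℝ)) * ((n * d).factorial : ℝ)) * (walkCount d n p ν : ℝ)

lemma ldTerm_nonneg (d n p : ℕ) [NeZero p] (ν : ZMod p → ℕ) : 0 ≤ ldTerm d n p ν := by
  unfold ldTerm; positivity

lemma fact_lower (k : ℕ) : ((k : ℝ) / Real.exp 1) ^ k ≤ (k.factorial : ℝ) := by
  have h := Real.pow_div_factorial_le_exp (k : ℝ) (Nat.cast_nonneg k) k
  rw [div_le_iff₀ (by positivity)] at h
  rw [div_pow, div_le_iff₀ (by positivity), ← Real.exp_nat_mul, mul_one, mul_comm]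
  exact h

lemma fact_upper_pos (k : ℕ) :
    ((k + 1).factorial : ℝ) ≤ Real.exp 1 * (k + 1) * (((k : ℝ) + 1) / Real.exp 1) ^ (k + 1) := by
  induction k with
  | zero => simp
  | succ k ih =>
    rw [Nat.factorial_succ]
    push_cast
    have hk : (0 : ℝ) < (k : ℝ) + 1 := by positivity
    have hstep : Real.exp 1 * ((k : ℝ) + 1) ^ (k + 2) ≤ ((k : ℝ) + 2) ^ (k + 2) := by
      have h1 : 1 / ((k : ℝ) + 2) ≤ Real.log (((k : ℝ) + 2) / (k + 1)) := by
        have := Real.one_sub_inv_le_log_of_pos (x := ((k : ℝ) + 2) / (k + 1)) (by positivity)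
        refine le_trans (le_of_eq ?_) this
        rw [inv_div]; field_simp; ring
      have h2 : Real.exp 1 ≤ (((k : ℝ) + 2) / (k + 1)) ^ (k + 2) := by
        rw [← Real.exp_log (x := (((k : ℝ) + 2) / (k + 1)) ^ (k + 2)) (by positivity),
          Real.log_pow]
        apply Real.exp_le_exp.2
        push_cast
        rw [div_le_iff₀ (by positivity)] at h1
        linarith
      rw [div_pow, le_div_iff₀ (by positivity)] at h2
      exact h2
    have he : 0 < Real.exp 1 := Real.exp_pos 1
    calc ((k : ℝ) + 1 + 1) * ((k + 1).factorial : ℝ)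
        ≤ ((k : ℝ) + 1 + 1) * (Real.exp 1 * (k + 1) * (((k : ℝ) + 1) / Real.exp 1) ^ (k + 1)) := by
          gcongr
      _ = ((k : ℝ) + 1 + 1) * (Real.exp 1 * ((k : ℝ) + 1) ^ (k + 2)) / Real.exp 1 ^ (k + 1) := by
          rw [div_pow, pow_succ ((k : ℝ) + 1) (k + 1)]; ring
      _ ≤ ((k : ℝ) + 1 + 1) * (((k : ℝ) + 2) ^ (k + 2)) / Real.exp 1 ^ (k + 1) := by
          gcongr
      _ = _ := by
          rw [div_pow, pow_succ (Real.exp 1) (k + 1)]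
          field_simp
          ring

lemma fact_upper (k : ℕ) :
    (k.factorial : ℝ) ≤ Real.exp 1 * (k + 1) * ((k : ℝ) / Real.exp 1) ^ k := by
  cases k with
  | zero => simp
  | succ k =>
    refine (fact_upper_pos k).trans ?_
    push_cast
    gcongr
    linarith

lemma ldTerm_mid {m n p : ℕ} [NeZero p] (hn : 1 ≤ n) (ν : ZMod p → ℕ) (hν : ∑ j, ν j = n) :
    ldTerm (m + 3) n p ν ≤ (Real.exp 1 * (n * (m + 3) + 1)) ^ p *
      zgen (m + 3) (fun j => ((ν j : ℝ) / n) ^ (((m : ℝ) + 2) / (m + 3))) ^ n := by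
  have hn0 : (0 : ℝ) < n := by exact_mod_cast hn
  have he : 0 < Real.exp 1 := Real.exp_pos 1
  set x : ZMod p → ℝ := fun j => (ν j : ℝ) / n with hx
  have hx0 : ∀ j, 0 ≤ x j := fun j => by simp only [hx]; positivity
  have hxs : ∑ j, x j = 1 := by
    simp only [hx]
    rw [← Finset.sum_div, ← Nat.cast_sum, hν, div_self hn0.ne']
  set X : ℝ := ∏ j, x j ^ ν j with hX
  have hXpos : 0 < X := by
    refine Finset.prod_pos fun j _ => ?_
    rcases Nat.eq_zero_or_pos (ν j) with h | h
    · rw [h]; simp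
    · have : (0 : ℝ) < ν j := by exact_mod_cast h
      simp only [hx]; positivity
  have ha : (n.factorial : ℝ) / (∏ j, ((ν j).factorial : ℝ)) * X ≤ 1 := by
    have h1 : (n.factorial : ℝ) / (∏ j, ((ν j).factorial : ℝ)) = Nat.multinomial univ ν := by
      rw [div_eq_iff (by positivity), ← hν, ← Nat.multinomial_spec]
      push_cast; ring
    rw [h1, hX]
    have h2 := Finset.sum_pow_eq_sum_piAntidiag univ x n
    rw [hxs, one_pow] at h2
    rw [h2]
    exact Finset.single_le_sum
      (f := fun k : ZMod p → ℕ => (Nat.multinomial univ k : ℝ) * ∏ i, x i ^ k i)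
      (fun k _ => mul_nonneg (Nat.cast_nonneg _)
        (Finset.prod_nonneg fun _ _ => pow_nonneg (hx0 _) _))
      (Finset.mem_piAntidiag.2 ⟨hν, fun _ _ => mem_univ _⟩)
  have hb : (∏ j, (((m + 3) * ν j).factorial : ℝ)) / ((n * (m + 3)).factorial : ℝ) ≤
      (Real.exp 1 * (n * (m + 3) + 1)) ^ p * X ^ (m + 3) := by
    rw [div_le_iff₀ (by positivity)]
    have h1 : ∀ j, (((m + 3) * ν j).factorial : ℝ) ≤ (Real.exp 1 * (n * (m + 3) + 1)) *
        ((x j ^ ν j) ^ (m + 3) * ((n * (m + 3) : ℝ) / Real.exp 1) ^ ((m + 3) * ν j)) := by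
      intro j
      refine (fact_upper _).trans ?_
      have hle : ν j ≤ n := by
        rw [← hν]; exact Finset.single_le_sum (fun _ _ => Nat.zero_le _) (mem_univ j)
      have hle' : (ν j : ℝ) ≤ n := by exact_mod_cast hle
      have e1 : ((((m + 3) * ν j : ℕ) : ℝ) / Real.exp 1) ^ ((m + 3) * ν j) =
          (x j ^ ν j) ^ (m + 3) * ((n * (m + 3) : ℝ) / Real.exp 1) ^ ((m + 3) * ν j) := by
        rw [← pow_mul, mul_comm (ν j) (m + 3), ← mul_pow]
        congr 1
        simp only [hx]
        push_cast
        field_simp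
      rw [e1]
      refine mul_le_mul_of_nonneg_right ?_ ?_
      · refine mul_le_mul_of_nonneg_left ?_ he.le
        push_cast
        nlinarith
      · exact mul_nonneg (pow_nonneg (pow_nonneg (hx0 _) _) _) (by positivity)
    have h2 := fact_lower (n * (m + 3))
    push_cast at h2
    calc _ ≤ ∏ j : ZMod p, ((Real.exp 1 * (n * (m + 3) + 1)) *
        ((x j ^ ν j) ^ (m + 3) * ((n * (m + 3) : ℝ) / Real.exp 1) ^ ((m + 3) * ν j))) :=
          Finset.prod_le_prod (fun _ _ => by positivity) (fun j _ => h1 j)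
      _ = (Real.exp 1 * (n * (m + 3) + 1)) ^ p * X ^ (m + 3) *
          ((n * (m + 3) : ℝ) / Real.exp 1) ^ (n * (m + 3)) := by
          rw [Finset.prod_mul_distrib, Finset.prod_const,
            Finset.card_univ, ZMod.card, Finset.prod_mul_distrib, Finset.prod_pow, Finset.prod_pow_eq_pow_sum,
            ← Finset.mul_sum, hν, ← hX, mul_comm (m + 3) n]
          ring
      _ ≤ _ := by gcongr
  have hc := walkCount_le (m + 3) n p ν (fun j => x j ^ (((m : ℝ) + 2) / (m + 3)))
    (fun j => Real.rpow_nonneg (hx0 j) _)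
  have hc' : ∏ j, (x j ^ (((m : ℝ) + 2) / (m + 3))) ^ ((m + 3) * ν j) = X ^ (m + 2) := by
    rw [hX, ← Finset.prod_pow]
    refine Finset.prod_congr rfl fun j _ => ?_
    rw [pow_mul, ← Real.rpow_natCast (x j ^ _), ← Real.rpow_mul (hx0 j)]
    have : ((m : ℝ) + 2) / (m + 3) * ((m + 3 : ℕ) : ℝ) = ((m + 2 : ℕ) : ℝ) := by
      push_cast; field_simp
    rw [this, Real.rpow_natCast, ← pow_mul, ← pow_mul, mul_comm]
  rw [hc'] at hc
  set Z := zgen (m + 3) (fun j => x j ^ (((m : ℝ) + 2) / (m + 3))) ^ n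
  set Lc := (Real.exp 1 * (n * (m + 3 : ℝ) + 1)) ^ p
  have hL0 : 0 ≤ Lc := by positivity
  set M1 := (n.factorial : ℝ) / (∏ j, ((ν j).factorial : ℝ)) with hM1
  have hM10 : 0 ≤ M1 := by positivity
  set W := (walkCount (m + 3) n p ν : ℝ) with hW
  have hW0 : 0 ≤ W := by positivity
  have hZ0 : 0 ≤ W * X ^ (m + 2) := by positivity
  calc ldTerm (m + 3) n p ν = M1 * ((∏ j, (((m + 3) * ν j).factorial : ℝ)) /
        ((n * (m + 3)).factorial : ℝ)) * W := by
        unfold ldTerm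
        rw [hM1, hW, div_mul_div_comm]
    _ ≤ M1 * (Lc * X ^ (m + 3)) * W := by gcongr
    _ = Lc * ((M1 * X) * (W * X ^ (m + 2))) := by ring
    _ ≤ Lc * (1 * Z) := by gcongr
    _ = _ := by ring

lemma zgen_small {d p : ℕ} [Fact p.Prime] (t : ℝ) (ht0 : 0 ≤ t) (ht1 : t ≤ 1) (y : ZMod p → ℝ)
    (hy0 : ∀ j, 0 ≤ y j) (hy : ∑ j ∈ univ.erase 0, y j = 1) :
    zgen d (fun j => if j = 0 then 1 else t * y j) ≤ 1 + 2 ^ d * t ^ 2 := by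
  let z : ZMod p → ℝ := fun j => if j = 0 then 1 else y j
  have hz0 : ∀ j, 0 ≤ z j := by
    intro j; simp only [z]; split_ifs
    · norm_num
    · exact hy0 j
  have hzs : ∑ j, z j = 2 := by
    rw [← Finset.add_sum_erase univ z (mem_univ 0)]
    have : ∑ j ∈ univ.erase 0, z j = ∑ j ∈ univ.erase 0, y j := by
      refine Finset.sum_congr rfl fun j hj => ?_
      simp [z, (Finset.mem_erase.1 hj).1]
    rw [this, hy]
    simp only [z, if_true]; norm_num
  have hall : ∑ a : Fin d → ZMod p, ∏ i, z (a i) = 2 ^ d := by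
    rw [← Fintype.sum_pow, hzs]
  unfold zgen
  have hmem : (0 : Fin d → ZMod p) ∈
      univ.filter (fun a : Fin d → ZMod p => ∑ i, a i = 0) := by simp
  rw [← Finset.add_sum_erase _ _ hmem]
  refine add_le_add (by simp) ?_
  rw [← hall, Finset.sum_mul]
  calc _ ≤ ∑ a ∈ (univ.filter (fun a : Fin d → ZMod p => ∑ i, a i = 0)).erase 0,
        (∏ i, z (a i)) * t ^ 2 := by
        refine Finset.sum_le_sum fun a ha => ?_
        obtain ⟨hane, ha⟩ := Finset.mem_erase.1 ha
        have hasum := (Finset.mem_filter.1 ha).2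
        have h1 : ∀ i, (if a i = 0 then (1 : ℝ) else t * y (a i)) =
            z (a i) * (if a i = 0 then 1 else t) := by
          intro i; simp only [z]; split_ifs <;> ring
        simp_rw [h1]
        rw [Finset.prod_mul_distrib]
        refine mul_le_mul_of_nonneg_left ?_ (Finset.prod_nonneg fun _ _ => hz0 _)
        rw [Finset.prod_ite]
        simp only [Finset.prod_const, one_pow, one_mul]
        refine pow_le_pow_of_le_one ht0 ht1 ?_
        by_contra hcard
        have hcard' : (univ.filter (fun i => ¬ a i = 0)).card ≤ 1 := by omega
        apply hane
        funext i
        by_contra hi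
        have hi' : i ∈ univ.filter (fun i => ¬ a i = 0) := by simpa using hi
        have hothers : ∀ l, l ≠ i → a l = 0 := by
          intro l hl
          by_contra hl0
          exact hl (Finset.card_le_one.1 hcard' l (by simpa using hl0) i hi')
        rw [Finset.sum_eq_single i (fun l _ hl => hothers l hl) (by simp)] at hasum
        exact hi hasum
    _ ≤ _ := Finset.sum_le_sum_of_subset_of_nonneg (Finset.subset_univ _)
        fun _ _ _ => mul_nonneg (Finset.prod_nonneg fun _ _ => hz0 _) (sq_nonneg _)

/-- The constant in the small-support regime. -/
noncomputable def KK (d : ℕ) : ℝ := Real.exp (2 ^ d) * Real.exp 1 * 2 ^ d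

lemma KK_pos (d : ℕ) : 0 < KK d := by unfold KK; positivity

lemma one_le_KK (d : ℕ) : 1 ≤ KK d := by
  unfold KK
  have h1 : 1 ≤ Real.exp (2 ^ d) := Real.one_le_exp (by positivity)
  have h2 : 1 ≤ Real.exp 1 := Real.one_le_exp (by positivity)
  have h3 : (1 : ℝ) ≤ 2 ^ d := one_le_pow₀ (by norm_num)
  exact one_le_mul_of_one_le_of_one_le (one_le_mul_of_one_le_of_one_le h1 h2) h3

lemma ldTerm_small {d n p : ℕ} [Fact p.Prime] (hd : 2 ≤ d) (ν : ZMod p → ℕ)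
    (hν : ∑ j, ν j = n) (M : ℕ) (hM : ∑ j ∈ univ.erase 0, ν j = M) (hM1 : 1 ≤ M)
    (hM2 : 2 * M ≤ n) :
    ldTerm d n p ν ≤ (KK d * √((M : ℝ) / n) ^ (d - 2)) ^ M * Nat.multinomial (univ.erase 0) ν := by
  have hMr : (0 : ℝ) < M := by exact_mod_cast hM1
  have hnr : (0 : ℝ) < n := by exact_mod_cast (by omega : 0 < n)
  have hMn : (M : ℝ) ≤ n := by exact_mod_cast (by omega : M ≤ n)
  have hdr : (0 : ℝ) < d := by exact_mod_cast (by omega : 0 < d)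
  set t : ℝ := √((M : ℝ) / n) with ht
  have ht2 : t ^ 2 = M / n := Real.sq_sqrt (by positivity)
  have htpos : 0 < t := Real.sqrt_pos.2 (by positivity)
  have ht1 : t ≤ 1 := by
    rw [ht, Real.sqrt_le_one, div_le_one hnr]; exact hMn
  have h0 : ν 0 + M = n := by
    rw [← hM, ← hν, Finset.add_sum_erase univ ν (mem_univ 0)]
  set Y : ℝ := ∏ j ∈ univ.erase 0, (ν j : ℝ) ^ ν j with hY
  have hYpos : 0 < Y := by
    refine Finset.prod_pos fun j _ => ?_
    rcases Nat.eq_zero_or_pos (ν j) with h | h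
    · rw [h]; simp
    · have : (0 : ℝ) < ν j := by exact_mod_cast h
      positivity
  have h1 : (n.factorial : ℝ) ≤ ((ν 0).factorial : ℝ) * (n : ℝ) ^ M := by
    have := Nat.factorial_mul_descFactorial (n := n) (k := M) (by omega)
    rw [show n - M = ν 0 by omega] at this
    have h' : n.descFactorial M ≤ n ^ M := Nat.descFactorial_le_pow _ _
    rw [← this]
    push_cast
    have h'' : ((n.descFactorial M : ℕ) : ℝ) ≤ (n : ℝ) ^ M := by exact_mod_cast h'
    gcongr
  have h2 : ((d * ν 0).factorial : ℝ) * ((n : ℝ) * d / 2) ^ (d * M) ≤ ((n * d).factorial : ℝ) := by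
    have hle : d * M ≤ n * d := by nlinarith
    have := Nat.factorial_mul_descFactorial (n := n * d) (k := d * M) hle
    have hsub : n * d - d * M = d * ν 0 := by
      rw [← h0]; rw [Nat.sub_eq_iff_eq_add (by nlinarith)]; ring
    rw [hsub] at this
    rw [← this]
    push_cast
    have h' := Nat.pow_sub_le_descFactorial (n * d) (d * M)
    have h'' : (((n * d + 1 - d * M : ℕ) : ℝ)) ^ (d * M) ≤ ((n * d).descFactorial (d * M) : ℝ) := by
      exact_mod_cast h'
    refine mul_le_mul_of_nonneg_left (le_trans ?_ h'') (by positivity)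
    refine pow_le_pow_left₀ (by positivity) ?_ _
    rw [Nat.cast_sub (by omega)]
    push_cast
    have hM2r : (2 : ℝ) * M ≤ n := by exact_mod_cast hM2
    nlinarith
  have h3 : ∏ j ∈ univ.erase 0, ((d * ν j).factorial : ℝ) ≤ (d : ℝ) ^ (d * M) * Y ^ d := by
    calc _ ≤ ∏ j ∈ univ.erase (0 : ZMod p), ((d : ℝ) ^ (d * ν j) * ((ν j : ℝ) ^ ν j) ^ d) := by
          refine Finset.prod_le_prod (fun _ _ => by positivity) fun j _ => ?_
          have : ((d * ν j).factorial : ℝ) ≤ ((d * ν j : ℕ) : ℝ) ^ (d * ν j) := by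
            exact_mod_cast Nat.factorial_le_pow _
          refine this.trans (le_of_eq ?_)
          push_cast
          rw [mul_pow, ← pow_mul, mul_comm (ν j) d]
      _ = _ := by
          rw [Finset.prod_mul_distrib, Finset.prod_pow_eq_pow_sum, ← Finset.mul_sum, hM,
            Finset.prod_pow]
  have h4 : ((M : ℝ) / Real.exp 1) ^ M ≤ (∏ j ∈ univ.erase 0, ((ν j).factorial : ℝ)) *
      Nat.multinomial (univ.erase 0) ν := by
    have := Nat.multinomial_spec (univ.erase 0) ν
    rw [hM] at this
    have h' : (∏ j ∈ univ.erase 0, ((ν j).factorial : ℝ)) *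
      Nat.multinomial (univ.erase 0) ν = (M.factorial : ℝ) := by exact_mod_cast this
    rw [h']
    exact fact_lower M
  set W := (walkCount d n p ν : ℝ) with hW
  have h5 : W * Y ^ d ≤ Real.exp (2 ^ d) ^ M * (M : ℝ) ^ (d * M) / t ^ (d * M) := by
    have hc := walkCount_le d n p ν (fun j => if j = 0 then 1 else t * ((ν j : ℝ) / M))
      (fun j => by split_ifs <;> positivity)
    have hz := zgen_small (d := d) t htpos.le ht1 (fun j => (ν j : ℝ) / M)
      (fun j => by positivity) (by
        rw [← Finset.sum_div, ← Nat.cast_sum, hM, div_self hMr.ne'])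
    have hz0 : 0 ≤ zgen d (fun j : ZMod p => if j = 0 then (1 : ℝ) else t * ((ν j : ℝ) / M)) := by
      unfold zgen
      exact Finset.sum_nonneg fun _ _ => Finset.prod_nonneg fun _ _ => by
        dsimp only; split_ifs <;> positivity
    have hz' : zgen d (fun j : ZMod p => if j = 0 then (1 : ℝ) else t * ((ν j : ℝ) / M)) ^ n ≤
        Real.exp (2 ^ d) ^ M := by
      calc _ ≤ (1 + 2 ^ d * t ^ 2) ^ n := pow_le_pow_left₀ hz0 hz n
        _ ≤ Real.exp (2 ^ d * t ^ 2) ^ n := by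
            refine pow_le_pow_left₀ (by positivity) ?_ n
            rw [add_comm]; exact Real.add_one_le_exp _
        _ = _ := by
            rw [← Real.exp_nat_mul, ← Real.exp_nat_mul, ht2]
            congr 1; field_simp
    have hp : ∏ j, (if j = 0 then (1 : ℝ) else t * ((ν j : ℝ) / M)) ^ (d * ν j) =
        t ^ (d * M) * Y ^ d / (M : ℝ) ^ (d * M) := by
      rw [← Finset.mul_prod_erase univ _ (mem_univ 0)]
      simp only [if_true, one_pow, one_mul]
      calc _ = ∏ j ∈ univ.erase (0 : ZMod p), ((t / M) ^ (d * ν j) * ((ν j : ℝ) ^ ν j) ^ d) := by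
            refine Finset.prod_congr rfl fun j hj => ?_
            rw [if_neg (Finset.mem_erase.1 hj).1, ← pow_mul, mul_comm (ν j) d, ← mul_pow]
            congr 1; ring
        _ = _ := by
            rw [Finset.prod_mul_distrib, Finset.prod_pow_eq_pow_sum, ← Finset.mul_sum, hM,
              Finset.prod_pow, div_pow]
            ring
    rw [hp] at hc
    rw [le_div_iff₀ (by positivity)]
    have := hc.trans hz'
    rw [← mul_div_assoc, div_le_iff₀ (by positivity)] at this
    linarith
  have hfinal : (n : ℝ) * d ^ d * Real.exp (2 ^ d) * M ^ d / t ^ d =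
      KK d * t ^ (d - 2) * ((M : ℝ) / Real.exp 1) * ((n : ℝ) * d / 2) ^ d := by
    have hMt : (M : ℝ) = t ^ 2 * n := by rw [ht2]; field_simp
    rw [hMt]
    unfold KK
    obtain ⟨e, rfl⟩ : ∃ e, d = e + 2 := ⟨d - 2, by omega⟩
    simp only [Nat.add_sub_cancel]
    rw [div_pow, mul_pow, mul_pow]
    field_simp
    ring
  unfold ldTerm
  rw [← Finset.mul_prod_erase univ (fun j => ((d * ν j).factorial : ℝ)) (mem_univ 0),
    ← Finset.mul_prod_erase univ (fun j => ((ν j).factorial : ℝ)) (mem_univ 0), ← hW,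
    div_mul_eq_mul_div, div_le_iff₀ (by positivity)]
  set F := ∏ j ∈ univ.erase (0 : ZMod p), ((ν j).factorial : ℝ)
  set D := ∏ j ∈ univ.erase (0 : ZMod p), ((d * ν j).factorial : ℝ)
  set m' := (Nat.multinomial (univ.erase 0) ν : ℝ)
  have hKt : 0 ≤ KK d * t ^ (d - 2) := mul_nonneg (KK_pos d).le (by positivity)
  have hW0 : 0 ≤ W := by positivity
  have hD0 : 0 ≤ D := by positivity
  calc (n.factorial : ℝ) * (((d * ν 0).factorial : ℝ) * D) * W
      ≤ (((ν 0).factorial : ℝ) * (n : ℝ) ^ M) *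
        (((d * ν 0).factorial : ℝ) * ((d : ℝ) ^ (d * M) * Y ^ d)) * W := by gcongr
    _ = (((ν 0).factorial : ℝ) * (n : ℝ) ^ M) *
        (((d * ν 0).factorial : ℝ) * ((d : ℝ) ^ (d * M))) * (W * Y ^ d) := by ring
    _ ≤ (((ν 0).factorial : ℝ) * (n : ℝ) ^ M) *
        (((d * ν 0).factorial : ℝ) * ((d : ℝ) ^ (d * M))) *
          (Real.exp (2 ^ d) ^ M * (M : ℝ) ^ (d * M) / t ^ (d * M)) := by gcongr
    _ = ((ν 0).factorial : ℝ) * ((d * ν 0).factorial : ℝ) *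
        ((n : ℝ) * d ^ d * Real.exp (2 ^ d) * M ^ d / t ^ d) ^ M := by
        simp only [div_pow, mul_pow, pow_mul]; ring
    _ = ((ν 0).factorial : ℝ) * ((d * ν 0).factorial : ℝ) *
        ((KK d * t ^ (d - 2)) ^ M * ((M : ℝ) / Real.exp 1) ^ M * ((n : ℝ) * d / 2) ^ (d * M)) := by
        rw [hfinal, mul_pow, mul_pow, pow_mul ((n : ℝ) * d / 2)]
    _ = (KK d * t ^ (d - 2)) ^ M * ((M : ℝ) / Real.exp 1) ^ M * (((ν 0).factorial : ℝ)) *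
        (((d * ν 0).factorial : ℝ) * ((n : ℝ) * d / 2) ^ (d * M)) := by ring
    _ ≤ (KK d * t ^ (d - 2)) ^ M * (F * m') * (((ν 0).factorial : ℝ)) *
        ((n * d).factorial : ℝ) := by gcongr
    _ = _ := by ring

lemma sum_multinomial_le {n p : ℕ} [Fact p.Prime] (M : ℕ) (S : Finset (ZMod p → ℕ))
    (hS : ∀ ν ∈ S, ∑ j, ν j = n ∧ ∑ j ∈ univ.erase 0, ν j = M) :
    ∑ ν ∈ S, (Nat.multinomial (univ.erase 0) ν : ℝ) ≤ (p : ℝ) ^ M := by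
  let φ : (ZMod p → ℕ) → (ZMod p → ℕ) := fun ν j => if j = 0 then 0 else ν j
  have hφ : ∀ ν, ∀ j ∈ univ.erase (0 : ZMod p), φ ν j = ν j := by
    intro ν j hj
    exact if_neg (Finset.mem_erase.1 hj).1
  have hinj : Set.InjOn φ (S : Set (ZMod p → ℕ)) := by
    intro ν hν μ hμ h
    have hν' := hS ν hν
    have hμ' := hS μ hμ
    have hn0 : ν 0 + M = n := by
      rw [← hν'.2, ← hν'.1, Finset.add_sum_erase univ ν (mem_univ 0)]
    have hm0 : μ 0 + M = n := by
      rw [← hμ'.2, ← hμ'.1, Finset.add_sum_erase univ μ (mem_univ 0)]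
    funext j
    by_cases hj : j = 0
    · rw [hj]; omega
    · have := congrFun h j
      rw [hφ ν j (by simp [hj]), hφ μ j (by simp [hj])] at this
      exact this
  have e1 : ∑ ν ∈ S, (Nat.multinomial (univ.erase 0) ν : ℝ) =
      ∑ lam ∈ S.image φ, (Nat.multinomial (univ.erase 0) lam : ℝ) := by
    rw [Finset.sum_image hinj]
    refine Finset.sum_congr rfl fun ν _ => ?_
    rw [Nat.multinomial_congr (hφ ν)]
  have e2 : ∑ lam ∈ S.image φ, (Nat.multinomial (univ.erase 0) lam : ℝ) ≤
      ∑ lam ∈ piAntidiag (univ.erase (0 : ZMod p)) M,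
        (Nat.multinomial (univ.erase 0) lam : ℝ) := by
    refine Finset.sum_le_sum_of_subset_of_nonneg ?_ (fun _ _ _ => Nat.cast_nonneg _)
    intro lam hlam
    obtain ⟨ν, hν, rfl⟩ := Finset.mem_image.1 hlam
    rw [Finset.mem_piAntidiag]
    refine ⟨?_, ?_⟩
    · rw [← (hS ν hν).2]
      exact Finset.sum_congr rfl (hφ ν)
    · intro j hj
      refine Finset.mem_erase.2 ⟨?_, mem_univ _⟩
      intro hj0
      exact hj (if_pos hj0)
  have e3 : ∑ lam ∈ piAntidiag (univ.erase (0 : ZMod p)) M,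
        (Nat.multinomial (univ.erase 0) lam : ℝ) = (((univ.erase (0 : ZMod p)).card : ℝ)) ^ M := by
    have := Finset.sum_pow_eq_sum_piAntidiag (univ.erase (0 : ZMod p)) (fun _ => (1 : ℝ)) M
    simp only [one_pow, Finset.prod_const_one, mul_one, Finset.sum_const, nsmul_eq_mul] at this
    exact this.symm
  have e4 : ((univ.erase (0 : ZMod p)).card : ℝ) ≤ p := by
    have : (univ.erase (0 : ZMod p)).card ≤ p := by
      refine (Finset.card_le_univ _).trans ?_
      rw [ZMod.card]
    exact_mod_cast this
  rw [e1]
  refine e2.trans ?_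
  rw [e3]
  exact pow_le_pow_left₀ (Nat.cast_nonneg _) e4 _

lemma sum_sq_le_hell {p : ℕ} [NeZero p] (x : ZMod p → ℝ) (hx0 : ∀ u, 0 ≤ x u) (h : ℝ)
    (hh : ∑ u, (√(x u) - 1 / √(p : ℝ)) ^ 2 ≤ h) :
    ∑ u, (x u - 1 / p) ^ 2 ≤ 2 * h ^ 2 + 8 * h / p := by
  have hp : (0 : ℝ) < p := by exact_mod_cast Nat.pos_of_ne_zero (NeZero.ne p)
  set s : ℝ := 1 / √(p : ℝ) with hs
  have hs2 : s ^ 2 = 1 / p := by rw [hs, div_pow, Real.sq_sqrt hp.le, one_pow]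
  have hh0 : 0 ≤ h := le_trans (Finset.sum_nonneg fun _ _ => sq_nonneg _) hh
  have key : ∀ u, (x u - 1 / p) ^ 2 ≤ (2 * h + 8 / p) * (√(x u) - s) ^ 2 := by
    intro u
    have h1 : (√(x u) - s) ^ 2 ≤ h := le_trans
      (Finset.single_le_sum (f := fun u => (√(x u) - s) ^ 2) (fun _ _ => sq_nonneg _) (mem_univ u)) hh
    have h2 : x u - 1 / p = (√(x u) - s) * (√(x u) + s) := by
      rw [← hs2]; nth_rewrite 1 [← Real.sq_sqrt (hx0 u)]; ring
    rw [h2, mul_pow, mul_comm]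
    refine mul_le_mul_of_nonneg_right ?_ (sq_nonneg _)
    have h3 : (8 : ℝ) / p = 8 * s ^ 2 := by rw [hs2]; ring
    rw [h3]
    nlinarith [sq_nonneg ((√(x u) - s) - 2 * s)]
  calc _ ≤ ∑ u, (2 * h + 8 / p) * (√(x u) - s) ^ 2 := Finset.sum_le_sum fun u _ => key u
    _ = (2 * h + 8 / p) * ∑ u, (√(x u) - s) ^ 2 := by rw [Finset.mul_sum]
    _ ≤ (2 * h + 8 / p) * h := by gcongr
    _ = _ := by ring

lemma trichotomy {m n p : ℕ} [Fact p.Prime] (hpd : Nat.gcd p (m + 3) = 1) (hn : 1 ≤ n)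
    (ν : ZMod p → ℕ) (hν : ∑ j, ν j = n) (η : ℝ) (hη : 0 < η) (hη1 : η ≤ 1 / 1280)
    (hη2 : (m + 3 : ℝ) * (16 * η) < 1)
    (hfar : 2 * (128 * η) ^ 2 + 8 * (128 * η) / p <
      ∑ j : ZMod p, ((ν j : ℝ) / n - 1 / p) ^ 2) :
    ldTerm (m + 3) n p ν ≤ (Real.exp 1 * (n * (m + 3) + 1)) ^ p * Real.exp (-(η * n / (m + 3)))
      ∨ 1 - (ν 0 : ℝ) / n ≤ 16 * η := by
  have hn0 : (0 : ℝ) < n := by exact_mod_cast hn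
  set x : ZMod p → ℝ := fun j => (ν j : ℝ) / n with hx
  have hx0 : ∀ j, 0 ≤ x j := fun j => by simp only [hx]; positivity
  have hxs : ∑ j, x j = 1 := by
    simp only [hx]
    rw [← Finset.sum_div, ← Nat.cast_sum, hν, div_self hn0.ne']
  set Z := zgen (m + 3) (fun j => x j ^ (((m : ℝ) + 2) / (m + 3))) with hZ
  have hZ0 : 0 ≤ Z := by
    rw [hZ]; unfold zgen
    exact Finset.sum_nonneg fun _ _ => Finset.prod_nonneg fun _ _ => Real.rpow_nonneg (hx0 _) _
  by_cases hcase : Z ≤ 1 - η / (m + 3)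
  · left
    refine (ldTerm_mid hn ν hν).trans ?_
    refine mul_le_mul_of_nonneg_left ?_ (by positivity)
    change Z ^ n ≤ _
    calc Z ^ n ≤ Real.exp (-(η / (m + 3))) ^ n := by
          refine pow_le_pow_left₀ hZ0 (hcase.trans ?_) n
          linarith [Real.add_one_le_exp (-(η / (m + 3)))]
      _ = _ := by
          rw [← Real.exp_nat_mul]; congr 1; ring
  · push Not at hcase
    obtain ⟨c, hc⟩ := young_deficit (m := m) x hx0 hxs
    have hd : (0 : ℝ) < (m : ℝ) + 3 := by positivity
    have hsmall : (m + 3 : ℝ) * (1 - Z) ≤ η := by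
      have : 1 - Z ≤ η / (m + 3) := by linarith
      rw [le_div_iff₀ hd] at this
      linarith
    have : Fact (Nat.Prime (Nat.card (ZMod p))) := ⟨by rw [Nat.card_zmod]; exact Fact.out⟩
    have hr2 : ∀ u, √(x u) ^ 2 = x u := fun u => Real.sq_sqrt (hx0 u)
    rcases geometry (fun u => √(x u)) (fun u => Real.sqrt_nonneg _)
      (by simp only [hr2]; exact hxs) η hη hη1 c
      (by simp only [hr2]; exact hc.trans hsmall) with ⟨a, ha⟩ | hh
    · simp only [hr2] at ha
      by_cases ha0 : a = 0
      · right; rw [ha0] at ha; exact ha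
      · left
        have hz : walkCount (m + 3) n p ν = 0 := by
          by_contra hne
          have h1 := walkCount_conc hpd (by omega) ν hne a ha0
          have h2 : ((m : ℝ) + 3) * ν a ≤ n * (m + 2) := by
            have : (m + 3) * ν a ≤ n * (m + 2) := h1
            exact_mod_cast this
          have h3 : ((m : ℝ) + 3) * x a ≤ m + 2 := by
            simp only [hx]
            rw [← mul_div_assoc, div_le_iff₀ hn0]; linarith
          nlinarith
        have : ldTerm (m + 3) n p ν = 0 := by unfold ldTerm; rw [hz]; simp
        rw [this]; positivity
    · exfalso
      simp only [ZMod.card] at hh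
      have := sum_sq_le_hell x hx0 _ hh
      linarith

lemma ld_small_sum {d n p : ℕ} [Fact p.Prime] (hd : 2 ≤ d) (hpd : Nat.gcd p d = 1) (hn : 1 ≤ n)
    (S : Finset (ZMod p → ℕ))
    (hS : ∀ ν ∈ S, ∑ j, ν j = n ∧ ν ≠ (fun j => if j = 0 then n else 0) ∧
      2 * (∑ j ∈ univ.erase 0, ν j) ≤ n ∧
      KK d * p * √(((∑ j ∈ univ.erase 0, ν j : ℕ) : ℝ) / n) ^ (d - 2) ≤ 1 / 2) :
    ∑ ν ∈ S, ldTerm d n p ν ≤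
      4 * KK d ^ 2 * (∑' M : ℕ, (M : ℝ) ^ (d - 2) * (1 / 2 : ℝ) ^ M) * (p : ℝ) ^ 2 /
        (n : ℝ) ^ (d - 2) := by
  have hn0 : (0 : ℝ) < n := by exact_mod_cast hn
  have hK := KK_pos d
  have hmaps : ∀ ν ∈ S, (∑ j ∈ univ.erase 0, ν j) ∈ range (n + 1) := by
    intro ν hν
    rw [Finset.mem_range]
    have := (hS ν hν).2.2.1
    omega
  rw [← Finset.sum_fiberwise_of_maps_to hmaps]
  have hinner : ∀ M : ℕ, ∑ ν ∈ S.filter (fun ν => ∑ j ∈ univ.erase 0, ν j = M), ldTerm d n p ν ≤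
      4 * KK d ^ 2 * (p : ℝ) ^ 2 / (n : ℝ) ^ (d - 2) * ((M : ℝ) ^ (d - 2) * (1 / 2 : ℝ) ^ M) := by
    intro M
    have hnn : 0 ≤ 4 * KK d ^ 2 * (p : ℝ) ^ 2 / (n : ℝ) ^ (d - 2) *
      ((M : ℝ) ^ (d - 2) * (1 / 2 : ℝ) ^ M) := by positivity
    rcases Finset.eq_empty_or_nonempty
      (S.filter (fun ν => ∑ j ∈ univ.erase 0, ν j = M)) with he | ⟨ν₀, hν₀⟩
    · rw [he]; simpa using hnn
    rcases Nat.lt_or_ge M 2 with hM | hM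
    · refine le_trans (le_of_eq ?_) hnn
      refine Finset.sum_eq_zero fun ν hν => ?_
      obtain ⟨hνS, hνM⟩ := Finset.mem_filter.1 hν
      obtain ⟨hsum, hne, -, -⟩ := hS ν hνS
      have h0 : ν 0 + M = n := by
        rw [← hνM, ← hsum, Finset.add_sum_erase univ ν (mem_univ 0)]
      have hM1 : M = 1 := by
        by_contra hM1
        have hM0 : M = 0 := by omega
        apply hne
        funext j
        by_cases hj : j = 0
        · rw [hj, if_pos rfl]; omega
        · rw [if_neg hj]
          rw [hM0, Finset.sum_eq_zero_iff] at hνM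
          exact hνM j (by simp [hj])
      have hz : walkCount d n p ν = 0 := by
        by_contra hwc
        have h1 := walkCount_sum hpd ν hwc
        rw [hM1] at hνM
        obtain ⟨j, hj, hj1⟩ : ∃ j ∈ univ.erase (0 : ZMod p), ν j ≠ 0 := by
          apply Finset.exists_ne_zero_of_sum_ne_zero
          rw [hνM]; norm_num
        have h2 := Finset.add_sum_erase (univ.erase (0 : ZMod p)) ν hj
        rw [hνM] at h2
        have hνj : ν j = 1 := by omega
        have h3 : ∑ k ∈ (univ.erase (0 : ZMod p)).erase j, ν k = 0 := by omega
        rw [Finset.sum_eq_zero_iff] at h3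
        rw [Finset.sum_eq_single j] at h1
        · rw [hνj] at h1
          have hj0 := (Finset.mem_erase.1 hj).1
          apply hj0; simpa using h1
        · intro k _ hk
          by_cases hk0 : k = 0
          · rw [hk0, mul_zero]
          · rw [h3 k (by simp [hk, hk0])]; simp
        · simp
      unfold ldTerm; rw [hz]; simp
    · obtain ⟨hν₀S, hν₀M⟩ := Finset.mem_filter.1 hν₀
      obtain ⟨-, -, hc1, hc2⟩ := hS ν₀ hν₀S
      rw [hν₀M] at hc1 hc2
      set t : ℝ := √((M : ℝ) / n) with ht
      have ht2 : t ^ 2 = M / n := Real.sq_sqrt (by positivity)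
      have ht0 : 0 ≤ t := Real.sqrt_nonneg _
      set q := KK d * p * t ^ (d - 2) with hq
      have hq0 : 0 ≤ q := by positivity
      calc _ ≤ ∑ ν ∈ S.filter (fun ν => ∑ j ∈ univ.erase 0, ν j = M),
            (KK d * t ^ (d - 2)) ^ M * (Nat.multinomial (univ.erase 0) ν : ℝ) := by
            refine Finset.sum_le_sum fun ν hν => ?_
            obtain ⟨hνS, hνM⟩ := Finset.mem_filter.1 hν
            exact ldTerm_small hd ν (hS ν hνS).1 M hνM (by omega) hc1
        _ = (KK d * t ^ (d - 2)) ^ M * ∑ ν ∈ S.filter (fun ν => ∑ j ∈ univ.erase 0, ν j = M),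
            (Nat.multinomial (univ.erase 0) ν : ℝ) := by rw [Finset.mul_sum]
        _ ≤ (KK d * t ^ (d - 2)) ^ M * (p : ℝ) ^ M := by
            refine mul_le_mul_of_nonneg_left ?_ (by positivity)
            refine sum_multinomial_le (n := n) M _ fun ν hν => ?_
            obtain ⟨hνS, hνM⟩ := Finset.mem_filter.1 hν
            exact ⟨(hS ν hνS).1, hνM⟩
        _ = q ^ 2 * q ^ (M - 2) := by
            rw [← pow_add, ← mul_pow, show 2 + (M - 2) = M by omega, hq]; ring
        _ ≤ q ^ 2 * (1 / 2) ^ (M - 2) := by gcongr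
        _ = _ := by
            obtain ⟨e, rfl⟩ : ∃ e, M = e + 2 := ⟨M - 2, by omega⟩
            have : q ^ 2 = KK d ^ 2 * (p : ℝ) ^ 2 * (t ^ 2) ^ (d - 2) := by
              rw [hq]; ring
            rw [this, ht2, div_pow, Nat.add_sub_cancel, pow_add (1 / 2 : ℝ) e 2]
            ring
  refine (Finset.sum_le_sum fun M _ => hinner M).trans ?_
  rw [← Finset.mul_sum]
  have hsm : Summable (fun M : ℕ => (M : ℝ) ^ (d - 2) * (1 / 2 : ℝ) ^ M) :=
    summable_pow_mul_geometric_of_norm_lt_one (d - 2) (by norm_num)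
  have := hsm.sum_le_tsum (range (n + 1)) (fun M _ => by positivity)
  calc _ ≤ 4 * KK d ^ 2 * (p : ℝ) ^ 2 / (n : ℝ) ^ (d - 2) *
        (∑' M : ℕ, (M : ℝ) ^ (d - 2) * (1 / 2 : ℝ) ^ M) := by gcongr
    _ = _ := by ring

lemma ld_pbounds {m n p : ℕ} (hn : 1 ≤ n)
    (h : (p : ℝ) ≤ (n : ℝ) ^ ((((m + 3 : ℕ) : ℝ) - 2) / (2 * ((m + 3 : ℕ) : ℝ)))) :
    (p : ℝ) ^ (m + 3) ≤ √(n : ℝ) ^ (m + 1) ∧ (p : ℝ) ≤ √(n : ℝ) ∧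
      (p : ℝ) ^ 2 * (n : ℝ) ^ ((2 : ℝ) / ((m + 3 : ℕ) : ℝ)) ≤ n := by
  have hn1 : (1 : ℝ) ≤ n := by exact_mod_cast hn
  have hn0 : (0 : ℝ) < n := by linarith
  have hd : (0 : ℝ) < (m : ℝ) + 3 := by positivity
  push_cast at h ⊢
  refine ⟨?_, ?_, ?_⟩
  · calc (p : ℝ) ^ (m + 3) ≤ ((n : ℝ) ^ (((m : ℝ) + 3 - 2) / (2 * ((m : ℝ) + 3)))) ^ (m + 3) :=
          pow_le_pow_left₀ (Nat.cast_nonneg _) h _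
      _ = _ := by
          rw [← Real.rpow_natCast, ← Real.rpow_mul hn0.le, Real.sqrt_eq_rpow, ← Real.rpow_natCast,
            ← Real.rpow_mul hn0.le]
          congr 1
          push_cast
          field_simp
          ring
  · refine h.trans ?_
    rw [Real.sqrt_eq_rpow]
    refine Real.rpow_le_rpow_of_exponent_le hn1 ?_
    rw [div_le_div_iff₀ (by positivity) (by norm_num)]
    linarith
  · calc (p : ℝ) ^ 2 * (n : ℝ) ^ ((2 : ℝ) / ((m : ℝ) + 3))
        ≤ ((n : ℝ) ^ (((m : ℝ) + 3 - 2) / (2 * ((m : ℝ) + 3)))) ^ 2 *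
          (n : ℝ) ^ ((2 : ℝ) / ((m : ℝ) + 3)) := by gcongr
      _ = (n : ℝ) ^ (1 : ℝ) := by
          rw [← Real.rpow_natCast, ← Real.rpow_mul hn0.le, ← Real.rpow_add hn0]
          congr 1
          push_cast
          field_simp
          ring
      _ = n := Real.rpow_one _

lemma ld_rest_num {m n p : ℕ} (hn : m + 6 ≤ n) (hp : 1 ≤ p) :
    ((n : ℝ) + 1) ^ p * ((Real.exp 1 * (n * (m + 3) + 1)) ^ p *
      Real.exp (-(((m + 9 : ℝ)) * p * Real.log n))) ≤ 1 / (n : ℝ) ^ (m + 1) := by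
  have hn' : (m : ℝ) + 6 ≤ n := by exact_mod_cast hn
  have hm0 : (0 : ℝ) ≤ m := Nat.cast_nonneg m
  have hn0 : (0 : ℝ) < n := by linarith
  have hexp : Real.exp (-(((m + 9 : ℝ)) * p * Real.log n)) = (1 / (n : ℝ) ^ (m + 9)) ^ p := by
    have : -(((m + 9 : ℝ)) * p * Real.log n) = (p : ℝ) * (-(((m + 9 : ℕ) : ℝ) * Real.log n)) := by
      push_cast; ring
    rw [this, Real.exp_nat_mul, Real.exp_neg, Real.exp_nat_mul, Real.exp_log hn0, one_div]
  rw [hexp, ← mul_pow, ← mul_pow]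
  have he : Real.exp 1 ≤ 3 := by linarith [Real.exp_one_lt_d9]
  have h1 : Real.exp 1 ≤ (n : ℝ) ^ 2 := by nlinarith
  have h2 : (n : ℝ) + 1 ≤ (n : ℝ) ^ 2 := by nlinarith
  have h3 : (n : ℝ) * (m + 3) + 1 ≤ (n : ℝ) ^ 2 := by nlinarith
  have hbase : ((n : ℝ) + 1) * (Real.exp 1 * (n * (m + 3) + 1) * (1 / (n : ℝ) ^ (m + 9)))
      ≤ 1 / (n : ℝ) ^ (m + 1) := by
    calc _ ≤ (n : ℝ) ^ 2 * ((n : ℝ) ^ 2 * (n : ℝ) ^ 2 * (1 / (n : ℝ) ^ (m + 9))) := by gcongr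
      _ = 1 / (n : ℝ) ^ (m + 3) := by field_simp; ring
      _ ≤ 1 / (n : ℝ) ^ (m + 1) := by
          apply one_div_le_one_div_of_le (by positivity)
          exact pow_le_pow_right₀ (by linarith) (by omega)
  have hle1 : 1 / (n : ℝ) ^ (m + 1) ≤ 1 := by
    rw [div_le_one (by positivity)]; exact one_le_pow₀ (by linarith)
  calc _ ≤ (1 / (n : ℝ) ^ (m + 1)) ^ p := pow_le_pow_left₀ (by positivity) hbase p
    _ ≤ (1 / (n : ℝ) ^ (m + 1)) ^ 1 := pow_le_pow_of_le_one (by positivity) hle1 hp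
    _ = _ := pow_one _

set_option maxHeartbeats 1000000 in
lemma ld_core {m n p : ℕ} [Fact p.Prime] (hpd : Nat.gcd p (m + 3) = 1) (hn : m + 6 ≤ n)
    (D C₁ b : ℝ) (hD : D = (m + 3) * (m + 9))
    (hC : C₁ = 64 * KK (m + 3) ^ 2 * D + 1280 * D + 32 * (m + 3) * D + 2 * 128 ^ 2 * D ^ 2)
    (hb : 1024 * D + 1 ≤ b)
    (h1 : (p : ℝ) ^ (m + 3) ≤ √(n : ℝ) ^ (m + 1)) (h2 : (p : ℝ) ≤ √(n : ℝ))
    (h3 : (p : ℝ) ^ 2 * (C₁ * Real.log n) ≤ n) (h4 : C₁ * Real.log n ≤ √(n : ℝ))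
    (E : Finset (ZMod p → ℕ))
    (hE : ∀ ν ∈ E, ∑ j, ν j = n ∧ ν ≠ (fun j => if j = 0 then n else 0) ∧
      b * Real.log n / n < ∑ j : ZMod p, ((ν j : ℝ) / n - 1 / p) ^ 2) :
    ∑ ν ∈ E, ldTerm (m + 3) n p ν ≤
      (1 + 4 * KK (m + 3) ^ 2 * (∑' M : ℕ, (M : ℝ) ^ (m + 1) * (1 / 2 : ℝ) ^ M)) * (p : ℝ) ^ 2 /
        (n : ℝ) ^ (m + 1) := by
  classical
  have hp1 : 1 ≤ p := (Fact.out : p.Prime).one_lt.le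
  have hp1' : (1 : ℝ) ≤ p := by exact_mod_cast hp1
  have hp0 : (0 : ℝ) < p := by linarith
  have hn' : (m : ℝ) + 6 ≤ n := by exact_mod_cast hn
  have hm0 : (0 : ℝ) ≤ m := Nat.cast_nonneg m
  have hn0 : (0 : ℝ) < n := by linarith
  have hK1 := one_le_KK (m + 3)
  set K := KK (m + 3) with hKdef
  set l := Real.log n with hl
  have hl0 : 0 < l := Real.log_pos (by linarith)
  set s := √(n : ℝ) with hs
  have hs0 : 0 < s := Real.sqrt_pos.2 hn0
  have hs2 : s * s = n := Real.mul_self_sqrt hn0.le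
  have hD0 : 0 < D := by rw [hD]; positivity
  have hq1 : 0 ≤ 64 * K ^ 2 * D * l := by positivity
  have hq2 : 0 ≤ 1280 * D * l := by positivity
  have hq3 : 0 ≤ 32 * (m + 3) * D * l := by positivity
  have hq4 : 0 ≤ 2 * 128 ^ 2 * D ^ 2 * l := by positivity
  have hCl : C₁ * l = 64 * K ^ 2 * D * l + 1280 * D * l + 32 * (m + 3) * D * l +
      2 * 128 ^ 2 * D ^ 2 * l := by rw [hC]; ring
  set η : ℝ := D * p * l / n with hη
  have hη0 : 0 < η := by positivity
  have hηs : η ≤ D * l / s := by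
    rw [hη, div_le_div_iff₀ hn0 hs0, ← hs2]
    have : D * l * s * p ≤ D * l * s * s := by gcongr
    nlinarith
  have hη1 : η ≤ 1 / 1280 := by
    refine hηs.trans ?_
    rw [div_le_div_iff₀ hs0 (by norm_num)]; linarith
  have hη2 : (m + 3 : ℝ) * (16 * η) ≤ 1 / 2 := by
    have h5 : (m + 3 : ℝ) * (D * l / s) ≤ 1 / 32 := by
      rw [← mul_div_assoc, div_le_div_iff₀ hs0 (by norm_num)]; linarith
    have h6 : (m + 3 : ℝ) * η ≤ (m + 3 : ℝ) * (D * l / s) := by gcongr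
    linarith
  have hfar : 2 * (128 * η) ^ 2 + 8 * (128 * η) / p ≤ b * l / n := by
    have e1 : 8 * (128 * η) / p = 1024 * D * l / n := by rw [hη]; field_simp; ring
    have e2 : 2 * (128 * η) ^ 2 ≤ l / n := by
      have e3 : 2 * (128 * η) ^ 2 = ((p : ℝ) ^ 2 * (2 * 128 ^ 2 * D ^ 2 * l)) * l / n / n := by
        rw [hη]; field_simp
      rw [e3, div_le_div_iff_of_pos_right hn0, div_le_iff₀ hn0, mul_comm l]
      refine mul_le_mul_of_nonneg_right (le_trans ?_ h3) hl0.le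
      exact mul_le_mul_of_nonneg_left (by linarith) (by positivity)
    rw [e1]
    calc _ ≤ l / n + 1024 * D * l / n := by linarith
      _ = (1024 * D + 1) * l / n := by ring
      _ ≤ _ := by gcongr
  have hgrow : ∀ M : ℕ, (M : ℝ) / n ≤ 16 * η → K * p * √((M : ℝ) / n) ^ (m + 1) ≤ 1 / 2 := by
    intro M hM
    refine (pow_le_pow_iff_left₀ (by positivity) (by norm_num) two_ne_zero).1 ?_
    have hr : (K * p * √((M : ℝ) / n) ^ (m + 1)) ^ 2 = K ^ 2 * p ^ 2 * ((M : ℝ) / n) ^ (m + 1) := by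
      have : √((M : ℝ) / n) ^ 2 = (M : ℝ) / n := Real.sq_sqrt (by positivity)
      nth_rewrite 2 [← this]; ring
    rw [hr]
    have hKK : 64 * K ^ 2 * D * l ≤ s := by linarith
    have h8 : 16 * D * l / s ≤ 1 / (4 * K ^ 2) := by
      rw [div_le_div_iff₀ hs0 (by positivity)]; linarith
    have h9 : 1 / (4 * K ^ 2) ≤ 1 := by
      rw [div_le_one (by positivity)]; nlinarith
    calc K ^ 2 * p ^ 2 * ((M : ℝ) / n) ^ (m + 1) ≤ K ^ 2 * p ^ 2 * (16 * η) ^ (m + 1) := by gcongr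
      _ = K ^ 2 * (p ^ (m + 3)) * (16 * D * l / n) ^ (m + 1) := by
          have : 16 * η = p * (16 * D * l / n) := by rw [hη]; ring
          rw [this, mul_pow]; ring
      _ ≤ K ^ 2 * (s ^ (m + 1)) * (16 * D * l / n) ^ (m + 1) := by gcongr
      _ = K ^ 2 * (16 * D * l / s) ^ (m + 1) := by
          rw [mul_assoc, ← mul_pow, ← hs2]; congr 2; field_simp
      _ ≤ K ^ 2 * (1 / (4 * K ^ 2)) ^ (m + 1) := by gcongr
      _ ≤ K ^ 2 * (1 / (4 * K ^ 2)) ^ 1 := by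
          refine mul_le_mul_of_nonneg_left ?_ (by positivity)
          exact pow_le_pow_of_le_one (by positivity) h9 (by omega)
      _ = (1 / 2) ^ 2 := by field_simp; norm_num
  have hM : ∀ ν ∈ E, ((∑ j ∈ univ.erase 0, ν j : ℕ) : ℝ) / n = 1 - (ν 0 : ℝ) / n := by
    intro ν hν
    have h5 := Finset.add_sum_erase univ ν (mem_univ 0)
    rw [(hE ν hν).1] at h5
    have h6 : (ν 0 : ℝ) + ((∑ j ∈ univ.erase 0, ν j : ℕ) : ℝ) = n := by exact_mod_cast h5
    rw [eq_sub_iff_add_eq, ← add_div, add_comm, h6, div_self hn0.ne']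
  rw [← Finset.sum_filter_add_sum_filter_not E (fun ν => 1 - (ν 0 : ℝ) / n ≤ 16 * η)]
  have hA : ∑ ν ∈ E.filter (fun ν => 1 - (ν 0 : ℝ) / n ≤ 16 * η), ldTerm (m + 3) n p ν ≤
      4 * K ^ 2 * (∑' M : ℕ, (M : ℝ) ^ (m + 1) * (1 / 2 : ℝ) ^ M) * (p : ℝ) ^ 2 /
        (n : ℝ) ^ (m + 1) := by
    refine ld_small_sum (d := m + 3) (by omega) hpd (by omega) _ fun ν hν => ?_
    obtain ⟨hνE, hν2⟩ := Finset.mem_filter.1 hν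
    have hMν := hM ν hνE
    refine ⟨(hE ν hνE).1, (hE ν hνE).2.1, ?_, ?_⟩
    · have h5 : ((∑ j ∈ univ.erase 0, ν j : ℕ) : ℝ) / n ≤ 1 / 2 := by
        rw [hMν]; nlinarith
      rw [div_le_div_iff₀ hn0 (by norm_num)] at h5
      have : ((∑ j ∈ univ.erase 0, ν j : ℕ) : ℝ) * ((2 : ℕ) : ℝ) ≤ ((1 * n : ℕ) : ℝ) := by
        push_cast at h5 ⊢; linarith
      have := Nat.cast_le.1 ((Nat.cast_mul (α := ℝ) _ _).trans_le this)
      omega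
    · exact hgrow _ (by rw [hMν]; exact hν2)
  have hB : ∑ ν ∈ E.filter (fun ν => ¬ (1 - (ν 0 : ℝ) / n ≤ 16 * η)), ldTerm (m + 3) n p ν ≤
      1 / (n : ℝ) ^ (m + 1) := by
    refine le_trans ?_ (ld_rest_num hn hp1)
    set X := (Real.exp 1 * (n * (m + 3) + 1)) ^ p *
      Real.exp (-(((m + 9 : ℝ)) * p * Real.log n)) with hX
    have hX0 : 0 ≤ X := by positivity
    have hle := Finset.sum_le_card_nsmul
      (E.filter (fun ν => ¬ (1 - (ν 0 : ℝ) / n ≤ 16 * η))) (fun ν => ldTerm (m + 3) n p ν) X ?_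
    · refine hle.trans ?_
      rw [nsmul_eq_mul]
      refine mul_le_mul_of_nonneg_right ?_ hX0
      have hsub : E.filter (fun ν => ¬ (1 - (ν 0 : ℝ) / n ≤ 16 * η)) ⊆
          Fintype.piFinset (fun _ : ZMod p => range (n + 1)) := by
        intro ν hν
        rw [Fintype.mem_piFinset]
        intro j
        rw [Finset.mem_range]
        have h5 := (hE ν (Finset.mem_filter.1 hν).1).1
        have := Finset.single_le_sum (f := ν) (fun _ _ => Nat.zero_le _) (mem_univ j)
        omega
      have hcard := Finset.card_le_card hsub
      rw [Fintype.card_piFinset] at hcard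
      simp only [Finset.card_range, Finset.prod_const, Finset.card_univ, ZMod.card] at hcard
      exact_mod_cast hcard
    · intro ν hν
      obtain ⟨hνE, hν2⟩ := Finset.mem_filter.1 hν
      obtain ⟨e1, -, e3⟩ := hE ν hνE
      rcases trichotomy hpd (by omega) ν e1 η hη0 hη1 (by linarith) (hfar.trans_lt e3) with h | h
      · refine h.trans (le_of_eq ?_)
        rw [hX]
        congr 2
        rw [hη, hD, ← hl]
        field_simp
      · exact absurd h hν2
  have hB' : 1 / (n : ℝ) ^ (m + 1) ≤ (p : ℝ) ^ 2 / (n : ℝ) ^ (m + 1) := by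
    gcongr
    exact one_le_pow₀ hp1'
  calc _ ≤ 4 * K ^ 2 * (∑' M : ℕ, (M : ℝ) ^ (m + 1) * (1 / 2 : ℝ) ^ M) * (p : ℝ) ^ 2 /
        (n : ℝ) ^ (m + 1) + (p : ℝ) ^ 2 / (n : ℝ) ^ (m + 1) := add_le_add hA (hB.trans hB')
    _ = _ := by ring

lemma ld_eventually (C₁ : ℝ) (hC : 0 < C₁) (r : ℝ) (hr : 0 < r) :
    ∀ᶠ n : ℕ in Filter.atTop, C₁ * Real.log n ≤ (n : ℝ) ^ r := by
  have h := (isLittleO_log_rpow_atTop hr).bound (c := 1 / C₁) (by positivity)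
  have h2 := tendsto_natCast_atTop_atTop (R := ℝ) |>.eventually h
  filter_upwards [h2, Filter.eventually_ge_atTop 1] with n hn hn1
  have hn1' : (1 : ℝ) ≤ n := by exact_mod_cast hn1
  rw [Real.norm_of_nonneg (Real.log_nonneg hn1'), Real.norm_of_nonneg (by positivity)] at hn
  calc C₁ * Real.log n ≤ C₁ * (1 / C₁ * (n : ℝ) ^ r) := by gcongr
    _ = _ := by field_simp

/-- Large deviation estimate (directed case): for `d ≥ 3` there is `𝔟₀ > 0` so that for
every `𝔟 ≥ 𝔟₀` there are `C, c, N > 0` such that for all `n ≥ N` and primes `p` with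
`gcd(p,d) = 1` and `p ≤ c n^{(d-2)/(2d)}`, the sum over non-equidistributed `p`-tuples
`(n_0,…,n_{p-1})` (summing to `n`, not equal to `(n,0,…,0)` and with
`Σ_j (n_j/n - 1/p)² > 𝔟 ln n / n`) of
`(n! ∏_j (d n_j)!)/((∏_j n_j!)(nd)!)` times the walk count is at most `C p²/n^{d-2}`. -/
theorem directed_ldp_estimate (d : ℕ) (hd : 3 ≤ d) :
    ∃ b₀ : ℝ, 0 < b₀ ∧ ∀ b : ℝ, b₀ ≤ b →
      ∃ C c : ℝ, ∃ N : ℕ, 0 < C ∧ 0 < c ∧ 0 < N ∧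
        ∀ n : ℕ, N ≤ n → ∀ (p : ℕ) [Fact p.Prime], Nat.gcd p d = 1 →
          (p : ℝ) ≤ c * (n : ℝ) ^ (((d : ℝ) - 2) / (2 * (d : ℝ))) →
          (∑ᶠ ν ∈ {ν : ZMod p → ℕ | (∑ j, ν j) = n ∧
                ν ≠ (fun j => if j = 0 then n else 0) ∧
                ¬ ((∑ j : ZMod p, ((ν j : ℝ) / n - 1 / p) ^ 2) ≤ b * Real.log n / n)},
              ((n.factorial : ℝ) * ∏ j : ZMod p, ((d * ν j).factorial : ℝ)) /
                  ((∏ j : ZMod p, ((ν j).factorial : ℝ)) * ((n * d).factorial : ℝ)) *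
                ((Finset.univ.filter (fun a : Fin n → Fin d → ZMod p =>
                  (∀ k, ∑ i, a k i = 0) ∧
                  (∀ j : ZMod p, (∑ k, Phi (a k) j) = d * ν j))).card : ℝ))
            ≤ C * (p : ℝ) ^ 2 / (n : ℝ) ^ (d - 2) := by
  obtain ⟨m, rfl⟩ : ∃ m, d = m + 3 := ⟨d - 3, by omega⟩
  obtain ⟨D, hD⟩ : ∃ D : ℝ, D = (m + 3) * (m + 9) := ⟨_, rfl⟩
  have hD0 : 0 < D := by rw [hD]; positivity
  have hK := KK_pos (m + 3)
  obtain ⟨C₁, hC₁⟩ : ∃ C₁ : ℝ, C₁ = 64 * KK (m + 3) ^ 2 * D + 1280 * D + 32 * (m + 3) * D +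
    2 * 128 ^ 2 * D ^ 2 := ⟨_, rfl⟩
  have hC0 : 0 < C₁ := by rw [hC₁]; positivity
  refine ⟨1024 * D + 1, by positivity, fun b hb => ?_⟩
  obtain ⟨N₁, hN₁⟩ := Filter.eventually_atTop.1 (ld_eventually C₁ hC0 (1 / 2) (by norm_num))
  obtain ⟨N₂, hN₂⟩ := Filter.eventually_atTop.1
    (ld_eventually C₁ hC0 ((2 : ℝ) / ((m + 3 : ℕ) : ℝ)) (by positivity))
  have htsum : 0 ≤ ∑' M : ℕ, (M : ℝ) ^ (m + 1) * (1 / 2 : ℝ) ^ M :=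
    tsum_nonneg fun M => by positivity
  refine ⟨1 + 4 * KK (m + 3) ^ 2 * (∑' M : ℕ, (M : ℝ) ^ (m + 1) * (1 / 2 : ℝ) ^ M), 1,
    max (max N₁ N₂) (m + 6), by positivity, one_pos, by positivity, ?_⟩
  intro n hn p _ hpd hp
  have hnN₁ : N₁ ≤ n := le_trans (le_trans (le_max_left _ _) (le_max_left _ _)) hn
  have hnN₂ : N₂ ≤ n := le_trans (le_trans (le_max_right _ _) (le_max_left _ _)) hn
  have hnm : m + 6 ≤ n := le_trans (le_max_right _ _) hn
  rw [one_mul] at hp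
  obtain ⟨h1, h2, h3⟩ := ld_pbounds (by omega) hp
  have h4 := hN₁ n hnN₁
  rw [← Real.sqrt_eq_rpow] at h4
  have h5 := hN₂ n hnN₂
  have h6 : (p : ℝ) ^ 2 * (C₁ * Real.log n) ≤ n := le_trans (by gcongr) h3
  classical
  set E : Finset (ZMod p → ℕ) := (Fintype.piFinset (fun _ : ZMod p => range (n + 1))).filter
    (fun ν => (∑ j, ν j) = n ∧ ν ≠ (fun j => if j = 0 then n else 0) ∧
      ¬ ((∑ j : ZMod p, ((ν j : ℝ) / n - 1 / p) ^ 2) ≤ b * Real.log n / n)) with hE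
  have hset : {ν : ZMod p → ℕ | (∑ j, ν j) = n ∧ ν ≠ (fun j => if j = 0 then n else 0) ∧
      ¬ ((∑ j : ZMod p, ((ν j : ℝ) / n - 1 / p) ^ 2) ≤ b * Real.log n / n)} = (E : Set _) := by
    ext ν
    rw [hE, Finset.coe_filter, Set.mem_ofPred_eq, Set.mem_ofPred_eq]
    refine ⟨fun h => ⟨?_, h⟩, fun h => h.2⟩
    rw [Fintype.mem_piFinset]
    intro j
    rw [Finset.mem_range]
    have h7 := h.1
    have := Finset.single_le_sum (f := ν) (fun _ _ => Nat.zero_le _) (mem_univ j)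
    omega
  rw [hset, finsum_mem_coe_finset]
  refine le_trans (le_of_eq ?_) (ld_core hpd hnm D C₁ b hD hC₁ hb h1 h2 h6 h4 E ?_)
  · refine Finset.sum_congr rfl fun ν _ => ?_
    rfl
  · intro ν hν
    obtain ⟨-, e1, e2, e3⟩ := Finset.mem_filter.1 hν
    exact ⟨e1, e2, not_le.1 e3⟩
end
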